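/- arXiv:1711.10808 — 2 statements merged into one kernel-verified Lean document; each statement's English description precedes it below -/
import Mathlib

section
/- For every ε > 0 there is a constant C(ε) such that for all real N₁, N₂, N₃, N₄ ≥ 2, all Δ > 0, and each choice of sign ±, the number 𝒜_±(N₁,N₂,N₃,N₄;Δ) of quadruples (n₁,n₂,n₃,n₄) of positive integers with N_j < n_j ≤ 2N_j (j = 1,2,3,4) and 0 < |√n₁ + √n₂ ± √n₃ − √n₄| < Δ satisfies 𝒜_±(N₁,N₂,N₃,N₄;Δ) ≤ C(ε) · Π_{j=1}^4 (Δ^{1/4} N_j^{7/8} + N_j^{1/2}) N_j^{ε}. -/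
open Real MeasureTheory Finset
open scoped Classical

noncomputable section

/-- The set of quadruples counted by `𝒜_±(N₁,N₂,N₃,N₄;Δ)`, the sign `±` being `e`. -/
def Apm (e N₁ N₂ N₃ N₄ Δ : ℝ) : Set (ℕ × ℕ × ℕ × ℕ) :=
  {q | N₁ < (q.1 : ℝ) ∧ (q.1 : ℝ) ≤ 2 * N₁ ∧ N₂ < (q.2.1 : ℝ) ∧ (q.2.1 : ℝ) ≤ 2 * N₂ ∧
       N₃ < (q.2.2.1 : ℝ) ∧ (q.2.2.1 : ℝ) ≤ 2 * N₃ ∧ N₄ < (q.2.2.2 : ℝ) ∧ (q.2.2.2 : ℝ) ≤ 2 * N₄ ∧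
       0 < |Real.sqrt q.1 + Real.sqrt q.2.1 + e * Real.sqrt q.2.2.1 - Real.sqrt q.2.2.2| ∧
       |Real.sqrt q.1 + Real.sqrt q.2.1 + e * Real.sqrt q.2.2.1 - Real.sqrt q.2.2.2| < Δ}

/-!
The Fejér kernel has nonnegative Fourier transform, so the count is at most `Δ` times the integral
over `|t| ≤ 1 / Δ` of a product of four exponential sums `∑ e^{it√n}`, up to a constant; Hölder's
inequality separates the four blocks and leaves fourth moments of `F(w) = ∑ e^{iw√(8πn)}` on
horizontal lines of the upper half plane.

These moments come from a duality. Let `B(ζ) = ∑ n^{-3/2} e^{iζ/n}`. Poisson summation for the Lévy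
density `x^{-3/2} e^{-c²/x}` gives `w B(w²) = √π e^{iπ/4} (1 + F(w) + F(iw))`, in which `F(iw)` is
small when `Re w` is at least `Im w`. Fourth moments pass between a horizontal line and its image or
inverse image under `w ↦ w²` by the mean value property of holomorphic functions, and from short
intervals to long ones because a series with nonnegative coefficients is largest, in fourth mean,
around the origin. If the moment bound for `F` exceeds the expected one by a factor `(Im w)^{-2κ}`,
it yields a bound for `B` with the excess factor `(Im ζ)^{κ'}`, where `κ' = κ / (1 + κ)`; the
passage from `B` back to `F` again replaces the exponent in this way. Iterating from the trivial
bound `κ = 2` makes the loss arbitrarily small.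
-/

section FejerMean

variable {E : Type*} [NormedAddCommGroup E] [NormedSpace ℝ E]

/-- The mean of `g` on `[-T, T]` against the Fejér (triangle) weight `1 - |t| / T`, not normalised.
Its usefulness is that the means of characters are nonnegative. -/
def fejerMean (T : ℝ) (g : ℝ → E) : E := ∫ t in (-T)..T, (1 - |t| / T) • g t

lemma fejerWeight_nonneg {T t : ℝ} (hT : 0 < T) (ht : t ∈ Set.Icc (-T) T) : 0 ≤ 1 - |t| / T :=
  sub_nonneg.2 <| (div_le_one hT).2 <| abs_le.2 ht

lemma fejerMean_mono {T : ℝ} (hT : 0 < T) {g h : ℝ → ℝ} (hg : Continuous g) (hh : Continuous h)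
    (hgh : ∀ t, g t ≤ h t) : fejerMean T g ≤ fejerMean T h := by
  refine intervalIntegral.integral_mono_on (by linarith)
    (Continuous.intervalIntegrable (by fun_prop) _ _)
    (Continuous.intervalIntegrable (by fun_prop) _ _) fun t ht => ?_
  exact smul_le_smul_of_nonneg_left (hgh t) (fejerWeight_nonneg hT ht)

lemma fejerMean_le_integral {T : ℝ} (hT : 0 < T) {g : ℝ → ℝ} (hg : Continuous g)
    (hg0 : ∀ t, 0 ≤ g t) : fejerMean T g ≤ ∫ t in (-T)..T, g t := by
  refine intervalIntegral.integral_mono_on (by linarith)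
    (Continuous.intervalIntegrable (by fun_prop) _ _) (hg.intervalIntegrable _ _) fun t _ => ?_
  exact mul_le_of_le_one_left (hg0 t) (sub_le_self _ (by positivity))

lemma integral_le_two_mul_fejerMean {T : ℝ} (hT : 0 < T) {g : ℝ → ℝ} (hg : Continuous g)
    (hg0 : ∀ t, 0 ≤ g t) : ∫ t in (-T)..T, g t ≤ 2 * fejerMean (2 * T) g := by
  have hweight : Continuous fun t => (1 - |t| / (2 * T)) • g t := by fun_prop
  calc ∫ t in (-T)..T, g t ≤ ∫ t in (-T)..T, 2 * ((1 - |t| / (2 * T)) • g t) := by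
        refine intervalIntegral.integral_mono_on (by linarith) (hg.intervalIntegrable _ _)
          (Continuous.intervalIntegrable (by fun_prop) _ _) fun t ht => ?_
        have : |t| / (2 * T) ≤ 1 / 2 := by
          rw [div_le_div_iff₀ (by positivity) two_pos]
          linarith [abs_le.2 ht]
        rw [smul_eq_mul, ← mul_assoc]
        exact le_mul_of_one_le_left (hg0 t) (by linarith)
    _ = 2 * ∫ t in (-T)..T, (1 - |t| / (2 * T)) • g t := intervalIntegral.integral_const_mul _ _
    _ ≤ 2 * fejerMean (2 * T) g := by
        refine mul_le_mul_of_nonneg_left ?_ two_pos.le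
        refine intervalIntegral.integral_mono_interval (by linarith) (by linarith) (by linarith)
          (ae_restrict_of_forall_mem measurableSet_Ioc fun t ht => ?_)
          (hweight.intervalIntegrable _ _)
        exact smul_nonneg (fejerWeight_nonneg (by positivity) ⟨ht.1.le, ht.2⟩) (hg0 t)

lemma fejerMean_eq_of_even {T : ℝ} (hT : 0 < T) {g : ℝ → ℝ} (hg : Continuous g)
    (heven : ∀ t, g (-t) = g t) : fejerMean T g = 2 * ∫ t in (0 : ℝ)..T, (1 - t / T) * g t := by
  have hweight : Continuous fun t => (1 - |t| / T) • g t := by fun_prop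
  have hneg : ∫ t in (-T)..0, (1 - |t| / T) • g t = ∫ t in (0 : ℝ)..T, (1 - |t| / T) • g t := by
    have := intervalIntegral.integral_comp_neg (a := (0 : ℝ)) (b := T)
      fun t => (1 - |t| / T) • g t
    simpa only [abs_neg, heven, neg_zero] using this.symm
  rw [fejerMean, ← intervalIntegral.integral_add_adjacent_intervals
    (hweight.intervalIntegrable _ 0) (hweight.intervalIntegrable 0 _), hneg, ← two_mul]
  congr 1
  refine intervalIntegral.integral_congr fun t ht => ?_
  rw [Set.uIcc_of_le hT.le] at ht
  simp only [abs_of_nonneg ht.1, smul_eq_mul]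

lemma integral_one_sub_div_mul_cos {T x : ℝ} (hT : 0 < T) (hx : x ≠ 0) :
    ∫ t in (0 : ℝ)..T, (1 - t / T) * cos (t * x) = (1 - cos (T * x)) / (T * x ^ 2) := by
  have hderiv (t : ℝ) : HasDerivAt
      (fun t => (1 - t / T) * (sin (t * x) / x) - cos (t * x) / (T * x ^ 2))
      ((1 - t / T) * cos (t * x)) t := by
    have hlin : HasDerivAt (fun t : ℝ => 1 - t / T) (-(1 / T)) t := by
      simpa using ((hasDerivAt_id t).div_const T).const_sub 1
    refine ((hlin.mul ((hasDerivAt_mul_const (x := t) x).sin.div_const x)).sub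
      ((hasDerivAt_mul_const (x := t) x).cos.div_const (T * x ^ 2))).congr_deriv ?_
    field_simp
    ring
  rw [intervalIntegral.integral_eq_sub_of_hasDerivAt (fun t _ => hderiv t)
    (Continuous.intervalIntegrable (by fun_prop) _ _), div_self hT.ne']
  simp only [sub_self, zero_mul, sin_zero, cos_zero, zero_div, mul_zero]
  ring

lemma fejerMean_cos_nonneg {T : ℝ} (hT : 0 < T) (x : ℝ) :
    0 ≤ fejerMean T fun t => cos (t * x) := by
  rw [fejerMean_eq_of_even hT (by fun_prop) (by simp)]
  refine mul_nonneg two_pos.le ?_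
  rcases eq_or_ne x 0 with rfl | hx
  · refine intervalIntegral.integral_nonneg hT.le fun t ht => ?_
    simpa using (div_le_one hT).2 ht.2
  · rw [integral_one_sub_div_mul_cos hT hx]
    exact div_nonneg (sub_nonneg.2 (cos_le_one _)) (by positivity)

lemma half_le_fejerMean_cos {T x : ℝ} (hT : 0 < T) (hx : |x| * T ≤ 1) :
    T / 2 ≤ fejerMean T fun t => cos (t * x) := by
  have hcos {t : ℝ} (ht : t ∈ Set.Icc 0 T) : 1 / 2 ≤ cos (t * x) := by
    have : |t * x| ≤ 1 := by
      rw [abs_mul, abs_of_nonneg ht.1, mul_comm]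
      exact (mul_le_mul_of_nonneg_left ht.2 (abs_nonneg x)).trans hx
    nlinarith [one_sub_sq_div_two_le_cos (x := t * x), (sq_le_one_iff_abs_le_one _).2 this]
  rw [fejerMean_eq_of_even hT (by fun_prop) (by simp)]
  calc T / 2 = 2 * ∫ t in (0 : ℝ)..T, (1 - t / T) * (1 / 2) := by
        rw [intervalIntegral.integral_mul_const, intervalIntegral.integral_sub (by simp)
          (Continuous.intervalIntegrable (by fun_prop) _ _), intervalIntegral.integral_div]
        simp only [integral_id, intervalIntegral.integral_const, smul_eq_mul]
        field_simp
        ring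
    _ ≤ _ := by
        refine mul_le_mul_of_nonneg_left ?_ two_pos.le
        refine intervalIntegral.integral_mono_on hT.le
          (Continuous.intervalIntegrable (by fun_prop) _ _)
          (Continuous.intervalIntegrable (by fun_prop) _ _) fun t ht => ?_
        exact mul_le_mul_of_nonneg_left (hcos ht) (sub_nonneg.2 ((div_le_one hT).2 ht.2))

lemma fejerMean_cexp (T x : ℝ) :
    fejerMean T (fun t => Complex.exp ((t * x : ℝ) * Complex.I))
      = (fejerMean T fun t => cos (t * x) : ℝ) := by
  have hodd : ∫ t in (-T)..T, (1 - |t| / T) * sin (t * x) = 0 := by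
    have := intervalIntegral.integral_comp_neg (a := -T) (b := T)
      fun t => (1 - |t| / T) * sin (t * x)
    simp only [abs_neg, neg_mul, sin_neg, neg_neg, mul_neg, intervalIntegral.integral_neg] at this
    linarith
  have hsplit (t : ℝ) : (1 - |t| / T) • Complex.exp ((t * x : ℝ) * Complex.I)
      = (((1 - |t| / T) * cos (t * x) : ℝ) : ℂ)
        + (((1 - |t| / T) * sin (t * x) : ℝ) : ℂ) * Complex.I := by
    rw [Complex.exp_mul_I, Complex.real_smul]
    push_cast
    ring
  simp only [fejerMean, hsplit]
  rw [intervalIntegral.integral_add (Continuous.intervalIntegrable (by fun_prop) _ _)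
    (Continuous.intervalIntegrable (by fun_prop) _ _), intervalIntegral.integral_mul_const,
    intervalIntegral.integral_ofReal, intervalIntegral.integral_ofReal, hodd]
  simp

end FejerMean

section ExpSeries

variable {ι κ : Type*} {a : ι → ℂ} {b : κ → ℂ} {l : ι → ℝ} {m : κ → ℝ} {t : ℝ}

/-- The generalised trigonometric series `∑ aᵢ e^{i t lᵢ}` with coefficients `a` and real
frequencies `l`, over an arbitrary index type; it is used for absolutely summable `a`. -/
def expSeries (a : ι → ℂ) (l : ι → ℝ) (t : ℝ) : ℂ :=
  ∑' i, a i * Complex.exp ((t * l i : ℝ) * Complex.I)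

lemma norm_expSeries_term (a : ι → ℂ) (l : ι → ℝ) (t : ℝ) (i : ι) :
    ‖a i * Complex.exp ((t * l i : ℝ) * Complex.I)‖ = ‖a i‖ := by
  rw [norm_mul, Complex.norm_exp_ofReal_mul_I, mul_one]

lemma summable_norm_expSeries_term (ha : Summable fun i => ‖a i‖) (l : ι → ℝ) (t : ℝ) :
    Summable fun i => ‖a i * Complex.exp ((t * l i : ℝ) * Complex.I)‖ := by
  simpa only [norm_expSeries_term] using ha

lemma continuous_expSeries (ha : Summable fun i => ‖a i‖) (l : ι → ℝ) :
    Continuous (expSeries a l) :=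
  continuous_tsum (fun i => by fun_prop) ha fun i t => (norm_expSeries_term a l t i).le

lemma expSeries_mul_expSeries (ha : Summable fun i => ‖a i‖) (hb : Summable fun j => ‖b j‖) :
    expSeries a l t * expSeries b m t
      = expSeries (fun p : ι × κ => a p.1 * b p.2) (fun p => l p.1 + m p.2) t := by
  rw [expSeries, expSeries, tsum_mul_tsum_of_summable_norm (summable_norm_expSeries_term ha l t)
    (summable_norm_expSeries_term hb m t)]
  refine tsum_congr fun p => ?_
  rw [mul_mul_mul_comm, ← Complex.exp_add]
  congr 2
  push_cast
  ring

lemma conj_expSeries (a : ι → ℂ) (l : ι → ℝ) (t : ℝ) :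
    (starRingEnd ℂ) (expSeries a l t)
      = expSeries (fun i => (starRingEnd ℂ) (a i)) (fun i => -l i) t := by
  rw [expSeries, expSeries, Complex.conj_tsum]
  refine tsum_congr fun i => ?_
  rw [map_mul, ← Complex.exp_conj]
  simp

lemma expSeries_add_left (a : ι → ℂ) (l : ι → ℝ) (s t : ℝ) :
    expSeries a l (s + t)
      = expSeries (fun i => a i * Complex.exp ((s * l i : ℝ) * Complex.I)) l t := by
  refine tsum_congr fun i => ?_
  rw [mul_assoc, ← Complex.exp_add]
  congr 2
  push_cast
  ring

lemma fejerMean_expSeries [Countable ι] (ha : Summable fun i => ‖a i‖) (l : ι → ℝ) (T : ℝ) :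
    fejerMean T (expSeries a l) = ∑' i, a i * (fejerMean T fun t => cos (t * l i) : ℝ) := by
  have hweight : Continuous fun t : ℝ => 1 - |t| / T := by fun_prop
  have hterm (i : ι) : a i * (fejerMean T fun t => cos (t * l i) : ℝ)
      = ∫ t in (-T)..T, (1 - |t| / T) • (a i * Complex.exp ((t * l i : ℝ) * Complex.I)) := by
    rw [← fejerMean_cexp, fejerMean, ← intervalIntegral.integral_const_mul]
    simp only [mul_smul_comm]
  rw [tsum_congr hterm]
  refine (intervalIntegral.hasSum_integral_of_dominated_convergence
    (F := fun i t => (1 - |t| / T) • (a i * Complex.exp ((t * l i : ℝ) * Complex.I)))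
    (fun i t => |1 - |t| / T| * ‖a i‖)
    (fun i => (Continuous.smul hweight (by fun_prop)).aestronglyMeasurable)
    (fun i => ae_of_all _ fun t _ => ?_) (ae_of_all _ fun t _ => ha.mul_left _) ?_
    (ae_of_all _ fun t _ => ?_)).tsum_eq.symm
  · rw [norm_smul, norm_expSeries_term, Real.norm_eq_abs]
  · simp only [tsum_mul_left]
    exact Continuous.intervalIntegrable (by fun_prop) _ _
  · exact (summable_norm_expSeries_term ha l t).of_norm.hasSum.const_smul _

lemma norm_fejerMean_expSeries_le [Countable ι] {b : ι → ℝ} {T : ℝ} (hT : 0 < T)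
    (hb : Summable b) (hab : ∀ i, ‖a i‖ ≤ b i) (l : ι → ℝ) :
    ‖fejerMean T (expSeries a l)‖ ≤ ‖fejerMean T (expSeries (fun i => (b i : ℂ)) l)‖ := by
  have hb0 (i : ι) : 0 ≤ b i := (norm_nonneg _).trans (hab i)
  have hbn : Summable fun i => ‖(b i : ℂ)‖ := by simpa [abs_of_nonneg, hb0] using hb
  have ha : Summable fun i => ‖a i‖ := hb.of_nonneg_of_le (fun i => norm_nonneg _) hab
  have hcos (i : ι) : ‖((fejerMean T fun t => cos (t * l i) : ℝ) : ℂ)‖ = fejerMean T fun t =>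
      cos (t * l i) := by
    rw [Complex.norm_real, Real.norm_of_nonneg (fejerMean_cos_nonneg hT _)]
  have hcos_le (i : ι) : (fejerMean T fun t => cos (t * l i)) ≤ fejerMean T fun _ => 1 :=
    fejerMean_mono hT (by fun_prop) (by fun_prop) fun t => cos_le_one _
  have hsum : Summable fun i => b i * fejerMean T fun t => cos (t * l i) :=
    (hb.mul_right _).of_nonneg_of_le (fun i => mul_nonneg (hb0 i) (fejerMean_cos_nonneg hT _))
      fun i => mul_le_mul_of_nonneg_left (hcos_le i) (hb0 i)
  have hle (i : ι) : ‖a i * (fejerMean T fun t => cos (t * l i) : ℝ)‖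
      ≤ b i * fejerMean T fun t => cos (t * l i) := by
    rw [norm_mul, hcos]
    exact mul_le_mul_of_nonneg_right (hab i) (fejerMean_cos_nonneg hT _)
  rw [fejerMean_expSeries ha, fejerMean_expSeries hbn]
  refine (tsum_of_norm_bounded hsum.hasSum hle).trans ((le_abs_self _).trans_eq ?_)
  rw [← Real.norm_eq_abs, ← Complex.norm_real]
  congr 1
  push_cast
  rfl

lemma norm_sq_expSeries (ha : Summable fun i => ‖a i‖) :
    (‖expSeries a l t‖ ^ 2 : ℂ) = expSeries (fun p : ι × ι => a p.1 * (starRingEnd ℂ) (a p.2))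
      (fun p => l p.1 + -l p.2) t := by
  rw [← Complex.mul_conj', conj_expSeries, expSeries_mul_expSeries ha (by simpa using ha)]

/-- The coefficients of `‖∑ aᵢ e^{i t lᵢ}‖⁴`, expanded as a trigonometric series. -/
def fourthPowerCoeff (a : ι → ℂ) (q : (ι × ι) × (ι × ι)) : ℂ :=
  a q.1.1 * (starRingEnd ℂ) (a q.1.2) * (a q.2.1 * (starRingEnd ℂ) (a q.2.2))

lemma summable_norm_fourthPowerCoeff (ha : Summable fun i => ‖a i‖) :
    Summable fun q => ‖fourthPowerCoeff a q‖ := by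
  have hsq : Summable fun p : ι × ι => ‖a p.1 * (starRingEnd ℂ) (a p.2)‖ :=
    ha.mul_norm (g := fun i => (starRingEnd ℂ) (a i)) (by simpa using ha)
  exact (hsq.mul_norm hsq :)

lemma norm_pow_four_expSeries (ha : Summable fun i => ‖a i‖) :
    ((‖expSeries a l t‖ ^ 4 : ℝ) : ℂ) = expSeries (fourthPowerCoeff a)
      (fun q => l q.1.1 + -l q.1.2 + (l q.2.1 + -l q.2.2)) t := by
  have hsq : Summable fun p : ι × ι => ‖a p.1 * (starRingEnd ℂ) (a p.2)‖ :=
    ha.mul_norm (g := fun i => (starRingEnd ℂ) (a i)) (by simpa using ha)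
  calc ((‖expSeries a l t‖ ^ 4 : ℝ) : ℂ)
      = (‖expSeries a l t‖ ^ 2 : ℂ) * (‖expSeries a l t‖ ^ 2 : ℂ) := by push_cast; ring
    _ = _ := by rw [norm_sq_expSeries ha, expSeries_mul_expSeries hsq hsq]; rfl

lemma fejerMean_norm_pow_four_le [Countable ι] {b : ι → ℝ} {T : ℝ} (hT : 0 < T)
    (hb : Summable b) (hab : ∀ i, ‖a i‖ ≤ b i) (l : ι → ℝ) :
    fejerMean T (fun t => ‖expSeries a l t‖ ^ 4)
      ≤ fejerMean T fun t => ‖expSeries (fun i => (b i : ℂ)) l t‖ ^ 4 := by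
  have hb0 (i : ι) : 0 ≤ b i := (norm_nonneg _).trans (hab i)
  have hbn : Summable fun i => ‖(b i : ℂ)‖ := by simpa [abs_of_nonneg, hb0] using hb
  have ha : Summable fun i => ‖a i‖ := hb.of_nonneg_of_le (fun i => norm_nonneg _) hab
  have hnorm (c : ι → ℂ) (hc : Summable fun i => ‖c i‖) :
      fejerMean T (fun t => ‖expSeries c l t‖ ^ 4) = ‖fejerMean T (expSeries (fourthPowerCoeff c)
        fun q => l q.1.1 + -l q.1.2 + (l q.2.1 + -l q.2.2))‖ := by
    have hnonneg : 0 ≤ fejerMean T fun t => ‖expSeries c l t‖ ^ 4 :=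
      intervalIntegral.integral_nonneg (by linarith) fun t ht =>
        smul_nonneg (fejerWeight_nonneg hT ht) (by positivity)
    rw [← Real.norm_of_nonneg hnonneg, ← Complex.norm_real]
    congr 1
    simp only [fejerMean, ← norm_pow_four_expSeries hc]
    rw [← intervalIntegral.integral_ofReal]
    simp only [smul_eq_mul, Complex.ofReal_mul, Complex.real_smul]
  rw [hnorm a ha, hnorm _ hbn]
  have hcoeff (q : (ι × ι) × (ι × ι)) : fourthPowerCoeff (fun i => (b i : ℂ)) q
      = ((b q.1.1 * b q.1.2 * (b q.2.1 * b q.2.2) : ℝ) : ℂ) := by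
    simp [fourthPowerCoeff]
  have hsum := (summable_norm_fourthPowerCoeff hbn)
  simp only [funext hcoeff] at hsum ⊢
  refine norm_fejerMean_expSeries_le hT (by exact_mod_cast hsum.of_norm) (fun q => ?_) _
  simp only [fourthPowerCoeff, norm_mul, RCLike.norm_conj]
  gcongr <;> first | exact hab _ | exact hb0 _ | exact mul_nonneg (hb0 _) (hb0 _)

/-- The majorant principle: `‖expSeries a l t‖ ^ 4` is itself a trigonometric series, and the Fejér
means of characters are nonnegative. -/
lemma integral_norm_pow_four_expSeries_le [Countable ι] {b : ι → ℝ} {T : ℝ} (hT : 0 < T)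
    (hb : Summable b) (hab : ∀ i, ‖a i‖ ≤ b i) (l : ι → ℝ) (c : ℝ) :
    ∫ t in (c - T)..(c + T), ‖expSeries a l t‖ ^ 4
      ≤ 2 * ∫ t in (-(2 * T))..(2 * T), ‖expSeries (fun i => (b i : ℂ)) l t‖ ^ 4 := by
  have hb0 (i : ι) : 0 ≤ b i := (norm_nonneg _).trans (hab i)
  have hbn : Summable fun i => ‖(b i : ℂ)‖ := by simpa [abs_of_nonneg, hb0] using hb
  set a' : ι → ℂ := fun i => a i * Complex.exp ((c * l i : ℝ) * Complex.I)
  have hab' (i : ι) : ‖a' i‖ ≤ b i := (norm_expSeries_term a l c i).trans_le (hab i)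
  have ha' : Summable fun i => ‖a' i‖ := hb.of_nonneg_of_le (fun i => norm_nonneg _) hab'
  have hcont := continuous_expSeries ha' l
  have hcontb := continuous_expSeries hbn l
  calc ∫ t in (c - T)..(c + T), ‖expSeries a l t‖ ^ 4
      = ∫ t in (-T)..T, ‖expSeries a' l t‖ ^ 4 := by
        simp only [a', ← expSeries_add_left]
        rw [intervalIntegral.integral_comp_add_left fun t => ‖expSeries a l t‖ ^ 4,
          ← sub_eq_add_neg]
    _ ≤ 2 * fejerMean (2 * T) fun t => ‖expSeries a' l t‖ ^ 4 :=
        integral_le_two_mul_fejerMean hT (by fun_prop) fun t => by positivity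
    _ ≤ 2 * fejerMean (2 * T) fun t => ‖expSeries (fun i => (b i : ℂ)) l t‖ ^ 4 := by
        gcongr
        exact fejerMean_norm_pow_four_le (by positivity) hb hab' l
    _ ≤ _ := by
        gcongr
        exact fejerMean_le_integral (by positivity) (by fun_prop) fun t => by positivity

end ExpSeries

section MeanValue

open scoped ENNReal
open Metric

variable {E : Type*} [NormedAddCommGroup E] [NormedSpace ℂ E] [CompleteSpace E]

lemma enorm_le_lintegral_circleMap {f : ℂ → E} {c : ℂ} {ρ : ℝ} (hρ : 0 < ρ)
    (hf : DiffContOnCl ℂ f (ball c ρ)) :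
    ENNReal.ofReal (2 * π) * ‖f c‖ₑ ≤ ∫⁻ θ in Set.Ioo (-π) π, ‖f (circleMap c ρ θ)‖ₑ := by
  have hmean : (2 * π) • f c = ∫ θ in Set.Ioo (-π) π, f (circleMap c ρ θ) := by
    have h := DiffContOnCl.circleAverage (R := ρ) (by rwa [abs_of_pos hρ])
    rw [circleAverage_eq_integral_add (-π), intervalIntegral.integral_comp_add_right
      fun θ => f (circleMap c ρ θ)] at h
    rw [← h, smul_inv_smul₀ two_pi_pos.ne', intervalIntegral.integral_of_le (by linarith [pi_pos]),
      integral_Ioc_eq_integral_Ioo]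
    ring_nf
  calc ENNReal.ofReal (2 * π) * ‖f c‖ₑ = ‖(2 * π) • f c‖ₑ := by
        rw [enorm_smul, Real.enorm_of_nonneg two_pi_pos.le]
    _ ≤ _ := hmean ▸ enorm_integral_le_lintegral_enorm _

lemma lintegral_eq_lintegral_circleMap {g : ℂ → ℝ≥0∞} (hg : Measurable g) :
    ∫⁻ z, g z = ∫⁻ ρ in Set.Ioi 0, ENNReal.ofReal ρ *
      ∫⁻ θ in Set.Ioo (-π) π, g (circleMap 0 ρ θ) := by
  have hpolar (p : ℝ × ℝ) : Complex.polarCoord.symm p = circleMap 0 p.1 p.2 := by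
    rw [Complex.polarCoord_symm_apply, circleMap, Complex.exp_mul_I, zero_add]
    push_cast
    rfl
  rw [← Complex.lintegral_comp_polarCoord_symm, polarCoord_target, Measure.volume_eq_prod,
    ← Measure.prod_restrict, lintegral_prod]
  · simp only [hpolar, smul_eq_mul]
    exact lintegral_congr fun ρ => lintegral_const_mul _ (by fun_prop)
  · simp only [hpolar]
    unfold circleMap
    fun_prop

lemma enorm_le_lintegral_ball {f : ℂ → E} {c : ℂ} {r : ℝ} (hr : 0 < r)
    (hf : DifferentiableOn ℂ f (ball c r)) :
    ENNReal.ofReal (π * r ^ 2) * ‖f c‖ₑ ≤ ∫⁻ z in ball c r, ‖f z‖ₑ := by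
  have hmeas : Measurable fun z => (ball 0 r).piecewise (fun z => ‖f (c + z)‖ₑ) 0 z := by
    refine ContinuousOn.measurable_piecewise ?_ continuousOn_const measurableSet_ball
    refine (hf.continuousOn.comp (by fun_prop) fun z hz => ?_).enorm
    simpa using hz
  have hcircle {ρ : ℝ} (hρ : ρ ∈ Set.Ioo 0 r) : ENNReal.ofReal (2 * π) * ‖f c‖ₑ
      ≤ ∫⁻ θ in Set.Ioo (-π) π, (ball 0 r).piecewise (fun z => ‖f (c + z)‖ₑ) 0
        (circleMap 0 ρ θ) := by
    refine (enorm_le_lintegral_circleMap hρ.1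
      (hf.diffContOnCl_ball (closedBall_subset_ball hρ.2))).trans_eq (lintegral_congr fun θ => ?_)
    rw [Set.piecewise_eq_of_mem _ _ _ (by simpa [abs_of_pos hρ.1] using hρ.2)]
    simp [circleMap]
  have hradius : ∫⁻ ρ in Set.Ioo 0 r, ENNReal.ofReal ρ = ENNReal.ofReal (r ^ 2 / 2) := by
    have hint : IntegrableOn (fun ρ : ℝ => ρ) (Set.Ioc 0 r) := continuous_id'.integrableOn_Ioc
    rw [restrict_Ioo_eq_restrict_Ioc, ← ofReal_integral_eq_lintegral_ofReal hint
      (ae_restrict_of_forall_mem measurableSet_Ioc fun ρ hρ => hρ.1.le),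
      ← intervalIntegral.integral_of_le hr.le]
    simp
  calc ENNReal.ofReal (π * r ^ 2) * ‖f c‖ₑ
      = ∫⁻ ρ in Set.Ioo 0 r, ENNReal.ofReal ρ * (ENNReal.ofReal (2 * π) * ‖f c‖ₑ) := by
        rw [lintegral_mul_const _ (by fun_prop), hradius, ← mul_assoc,
          ← ENNReal.ofReal_mul (by positivity)]
        ring_nf
    _ ≤ ∫⁻ ρ in Set.Ioo 0 r, ENNReal.ofReal ρ * ∫⁻ θ in Set.Ioo (-π) π,
          (ball 0 r).piecewise (fun z => ‖f (c + z)‖ₑ) 0 (circleMap 0 ρ θ) :=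
        setLIntegral_mono' measurableSet_Ioo fun ρ hρ => mul_le_mul_right (hcircle hρ) _
    _ ≤ ∫⁻ z, (ball 0 r).piecewise (fun z => ‖f (c + z)‖ₑ) 0 z := by
        rw [lintegral_eq_lintegral_circleMap hmeas]
        exact lintegral_mono_set Set.Ioo_subset_Ioi_self
    _ = ∫⁻ z, (ball c r).indicator (fun z => ‖f z‖ₑ) (c + z) := by
        refine lintegral_congr fun z => ?_
        simp [Set.piecewise, Set.indicator]
    _ = ∫⁻ z in ball c r, ‖f z‖ₑ := by
        rw [lintegral_add_left_eq_self, lintegral_indicator measurableSet_ball]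

/-- The fourth moment of `f` over the segment `[-T + iy, T + iy]`. -/
def lineMoment (f : ℂ → ℂ) (y T : ℝ) : ℝ := ∫ x in (-T)..T, ‖f (x + y * Complex.I)‖ ^ 4

lemma lintegral_enorm_pow_four {g : ℝ → ℂ} {a b : ℝ} (hab : a ≤ b)
    (hg : ContinuousOn g (Set.Icc a b)) :
    ∫⁻ t in Set.Icc a b, ‖g t‖ₑ ^ 4 = ENNReal.ofReal (∫ t in a..b, ‖g t‖ ^ 4) := by
  have hint : IntegrableOn (fun t => ‖g t‖ ^ 4) (Set.Icc a b) := (hg.norm.pow 4).integrableOn_Icc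
  rw [intervalIntegral.integral_of_le hab, ← integral_Icc_eq_integral_Ioc,
    ofReal_integral_eq_lintegral_ofReal hint (ae_of_all _ fun t => by positivity)]
  refine lintegral_congr fun t => ?_
  rw [ENNReal.ofReal_pow (norm_nonneg _), ofReal_norm]

lemma volume_setOf_abs_sub_lt_le {φ : ℝ → ℝ} {S : Set ℝ} {β : ℝ} (hβ : 0 < β)
    (hφ : ∀ s ∈ S, ∀ t ∈ S, β * |s - t| ≤ |φ s - φ t|) (u r : ℝ) :
    volume {t ∈ S | |u - φ t| < r} ≤ ENNReal.ofReal (2 * r / β) := by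
  refine (Real.volume_le_diam _).trans (ediam_le fun s hs t ht => ?_)
  rw [edist_dist, Real.dist_eq]
  refine ENNReal.ofReal_le_ofReal ((le_div_iff₀' hβ).2 ((hφ s hs.1 t ht.1).trans ?_))
  linarith [abs_sub_le (φ s) u (φ t), hs.2, ht.2, abs_sub_comm (φ s) u]

lemma setLIntegral_reProdIm {g : ℂ → ℝ≥0∞} (hg : Measurable g) (s t : Set ℝ) :
    ∫⁻ z in s ×ℂ t, g z = ∫⁻ y in t, ∫⁻ x in s, g (x + y * Complex.I) := by
  have hsymm := Complex.volume_preserving_equiv_real_prod.symm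
  have hpre : Complex.measurableEquivRealProd.symm ⁻¹' (s ×ℂ t) = s ×ˢ t := by
    ext p
    simp [Complex.measurableEquivRealProd, Complex.mem_reProdIm]
  rw [← hsymm.setLIntegral_comp_preimage_emb
      Complex.measurableEquivRealProd.symm.measurableEmbedding, hpre,
    Measure.volume_eq_prod, ← Measure.prod_restrict, lintegral_prod_symm' _ (by fun_prop)]
  simp only [Complex.measurableEquivRealProd_symm_apply, Complex.mk_eq_add_mul_I]

lemma lintegral_lintegral_ball {g : ℂ → ℝ≥0∞} (hg : Measurable g) {φ : ℝ → ℂ}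
    (hφ : Continuous φ) (S : Set ℝ) (r : ℝ) :
    ∫⁻ t in S, ∫⁻ z in ball (φ t) r, g z = ∫⁻ z, g z * volume {t ∈ S | dist z (φ t) < r} := by
  have hopen : MeasurableSet {p : ℝ × ℂ | dist p.2 (φ p.1) < r} :=
    (isOpen_lt (by fun_prop) continuous_const).measurableSet
  have hball (t : ℝ) : ∫⁻ z in ball (φ t) r, g z
      = ∫⁻ z, {p : ℝ × ℂ | dist p.2 (φ p.1) < r}.indicator (fun p => g p.2) (t, z) := by
    rw [← lintegral_indicator measurableSet_ball]
    rfl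
  have hslice (z : ℂ) : ∫⁻ t in S, {p : ℝ × ℂ | dist p.2 (φ p.1) < r}.indicator
      (fun p => g p.2) (t, z) = g z * volume {t ∈ S | dist z (φ t) < r} := by
    have hmeas : MeasurableSet {t | dist z (φ t) < r} :=
      (isOpen_lt (by fun_prop) continuous_const).measurableSet
    change ∫⁻ t in S, {t | dist z (φ t) < r}.indicator (fun _ => g z) t = _
    rw [lintegral_indicator_const hmeas, Measure.restrict_apply hmeas, Set.inter_comm]
    rfl
  simp only [hball]
  rw [lintegral_lintegral_swap, lintegral_congr hslice]
  exact ((hg.comp measurable_snd).indicator hopen).aemeasurable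

lemma lintegral_lintegral_ball_le {g : ℂ → ℝ≥0∞} (hg : Measurable g) {φ : ℝ → ℂ}
    (hφ : Continuous φ) {S : Set ℝ} {R : Set ℂ} (hR : MeasurableSet R)
    {r β : ℝ} (hβ : 0 < β) (hSR : ∀ t ∈ S, ball (φ t) r ⊆ R)
    (hexp : ∀ s ∈ S, ∀ t ∈ S, β * |s - t| ≤ |(φ s).re - (φ t).re|) :
    ∫⁻ t in S, ∫⁻ z in ball (φ t) r, g z ≤ ENNReal.ofReal (2 * r / β) * ∫⁻ z in R, g z := by
  rw [lintegral_lintegral_ball hg hφ S, ← lintegral_indicator hR,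
    ← lintegral_const_mul' _ _ ENNReal.ofReal_ne_top]
  refine lintegral_mono fun z => ?_
  by_cases hz : z ∈ R
  · rw [Set.indicator_of_mem hz, mul_comm]
    gcongr
    have hre (t : ℝ) : |z.re - (φ t).re| ≤ dist z (φ t) :=
      (Complex.abs_re_le_norm (z - φ t)).trans_eq (Complex.dist_eq _ _).symm
    have hsub : {t ∈ S | dist z (φ t) < r} ⊆ {t ∈ S | |z.re - (φ t).re| < r} :=
      fun t ht => ⟨ht.1, (hre t).trans_lt ht.2⟩
    exact (measure_mono hsub).trans (volume_setOf_abs_sub_lt_le hβ hexp z.re r)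
  · have hempty : {t ∈ S | dist z (φ t) < r} = ∅ :=
      Set.eq_empty_of_forall_notMem fun t ht => hz (hSR t ht.1 ht.2)
    rw [hempty, measure_empty, mul_zero]
    exact zero_le

lemma ball_subset_reProdIm {c : ℂ} {r X : ℝ} (hre : |c.re| + r ≤ X) :
    ball c r ⊆ Set.Icc (-X) X ×ℂ Set.Icc (c.im - r) (c.im + r) := by
  intro z hz
  rw [mem_ball, Complex.dist_eq] at hz
  have hzre := abs_lt.1 ((Complex.abs_re_le_norm _).trans_lt hz)
  have hzim := abs_lt.1 ((Complex.abs_im_le_norm _).trans_lt hz)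
  have := abs_le.1 (le_sub_iff_add_le.2 hre)
  simp only [Complex.sub_re, Complex.sub_im] at hzre hzim
  exact Complex.mem_reProdIm.2
    ⟨Set.mem_Icc.2 ⟨by linarith, by linarith⟩, Set.mem_Icc.2 ⟨by linarith, by linarith⟩⟩

lemma exists_measurable_eq_enorm_pow_four {f : ℂ → ℂ} {H : Set ℂ} (hf : ContinuousOn f H)
    (hH : MeasurableSet H) : ∃ g : ℂ → ℝ≥0∞, Measurable g ∧ ∀ z ∈ H, g z = ‖f z‖ₑ ^ 4 := by
  refine ⟨H.piecewise (fun z => ‖f z ^ 4‖ₑ) 0, ?_, fun z hz => ?_⟩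
  · exact (hf.pow 4).enorm.measurable_piecewise continuousOn_const hH
  · rw [Set.piecewise_eq_of_mem _ _ _ hz, enorm_pow]

lemma setLIntegral_reProdIm_le_of_lineMoment_le {f : ℂ → ℂ} {X K c d : ℝ}
    (hf : ContinuousOn f (Set.univ ×ℂ Set.Icc c d)) (hX : 0 ≤ X) (hK : 0 ≤ K)
    (hfK : ∀ y ∈ Set.Icc c d, lineMoment f y X ≤ K) :
    ∫⁻ z in Set.Icc (-X) X ×ℂ Set.Icc c d, ‖f z‖ₑ ^ 4 ≤ ENNReal.ofReal (K * (d - c)) := by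
  obtain ⟨g, hg, hgf⟩ := exists_measurable_eq_enorm_pow_four hf
    (isClosed_univ.reProdIm isClosed_Icc).measurableSet
  have hline {y : ℝ} (hy : y ∈ Set.Icc c d) (x : ℝ) :
      x + y * Complex.I ∈ Set.univ ×ℂ Set.Icc c d := by
    simpa [Complex.mem_reProdIm] using hy
  rw [← setLIntegral_congr_fun (isClosed_Icc.reProdIm isClosed_Icc).measurableSet
      fun z hz => hgf z ⟨Set.mem_univ _, hz.2⟩, setLIntegral_reProdIm hg,
    ENNReal.ofReal_mul hK, ← Real.volume_Icc, ← setLIntegral_const]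
  refine setLIntegral_mono' measurableSet_Icc fun y hy => ?_
  simp only [hgf _ (hline hy _)]
  rw [lintegral_enorm_pow_four (g := fun x => f (x + y * Complex.I)) (by linarith)
    (hf.comp_continuous (by fun_prop) (hline hy)).continuousOn]
  exact ENNReal.ofReal_le_ofReal (hfK y hy)

lemma lintegral_curve_le {f : ℂ → ℂ} {R : Set ℂ} (hf : DifferentiableOn ℂ f R)
    (hR : MeasurableSet R) {φ : ℝ → ℂ} (hφ : Continuous φ) {S : Set ℝ} (hS : MeasurableSet S)
    {r β : ℝ} (hr : 0 < r) (hβ : 0 < β) (hSR : ∀ t ∈ S, ball (φ t) r ⊆ R)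
    (hexp : ∀ s ∈ S, ∀ t ∈ S, β * |s - t| ≤ |(φ s).re - (φ t).re|) :
    ENNReal.ofReal (π * r ^ 2) * ∫⁻ t in S, ‖f (φ t)‖ₑ ^ 4
      ≤ ENNReal.ofReal (2 * r / β) * ∫⁻ z in R, ‖f z‖ₑ ^ 4 := by
  obtain ⟨g, hg, hgf⟩ := exists_measurable_eq_enorm_pow_four hf.continuousOn hR
  have hmean (t : ℝ) (ht : t ∈ S) :
      ENNReal.ofReal (π * r ^ 2) * ‖f (φ t)‖ₑ ^ 4 ≤ ∫⁻ z in ball (φ t) r, g z := by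
    rw [setLIntegral_congr_fun measurableSet_ball fun z hz =>
      (hgf z (hSR t ht hz)).trans (enorm_pow _ _).symm, ← enorm_pow]
    exact enorm_le_lintegral_ball hr ((hf.pow 4).mono (hSR t ht))
  rw [← lintegral_const_mul' _ _ ENNReal.ofReal_ne_top, ← setLIntegral_congr_fun hR hgf]
  exact (setLIntegral_mono' hS hmean).trans (lintegral_lintegral_ball_le hg hφ hR hβ hSR hexp)

/-- The values of a holomorphic function on a curve are controlled by its values on horizontal
lines: average `‖f‖⁴` over the discs of radius `r` centred on the curve. -/
lemma integral_curve_le {f : ℂ → ℂ} (hf : DifferentiableOn ℂ f {z | 0 < z.im}) {φ : ℝ → ℂ}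
    (hφ : Continuous φ) {a b r β X K : ℝ} (hab : a ≤ b) (hr : 0 < r) (hβ : 0 < β)
    (him : ∀ t ∈ Set.Icc a b, 2 * r ≤ (φ t).im ∧ (φ t).im ≤ 4 * r)
    (hre : ∀ t ∈ Set.Icc a b, |(φ t).re| + r ≤ X)
    (hexp : ∀ s ∈ Set.Icc a b, ∀ t ∈ Set.Icc a b, β * |s - t| ≤ |(φ s).re - (φ t).re|)
    (hK : ∀ y, r ≤ y → y ≤ 5 * r → lineMoment f y X ≤ K) :
    ∫ t in a..b, ‖f (φ t)‖ ^ 4 ≤ 3 * K / β := by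
  have hX : 0 ≤ X := by linarith [abs_nonneg (φ a).re, hre a ⟨le_rfl, hab⟩]
  have hK0 : 0 ≤ K := (intervalIntegral.integral_nonneg (by linarith)
    fun t _ => by positivity).trans (hK r le_rfl (by linarith))
  have hstrip (s : Set ℝ) : s ×ℂ Set.Icc r (5 * r) ⊆ {z | 0 < z.im} :=
    fun z hz => hr.trans_le hz.2.1
  have hball (t : ℝ) (ht : t ∈ Set.Icc a b) :
      ball (φ t) r ⊆ Set.Icc (-X) X ×ℂ Set.Icc r (5 * r) :=
    (ball_subset_reProdIm (hre t ht)).trans <| Complex.reProdIm_subset_iff'.2 <| Or.inl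
      ⟨subset_rfl, Set.Icc_subset_Icc (by linarith [him t ht]) (by linarith [him t ht])⟩
  have hkey : π * r ^ 2 * (∫ t in a..b, ‖f (φ t)‖ ^ 4) ≤ 2 * r / β * (K * (5 * r - r)) := by
    rw [← ENNReal.ofReal_le_ofReal_iff (mul_nonneg (by positivity)
        (mul_nonneg hK0 (by linarith))),
      ENNReal.ofReal_mul (p := π * r ^ 2) (by positivity),
      ENNReal.ofReal_mul (p := 2 * r / β) (by positivity),
      ← lintegral_enorm_pow_four (g := fun t => f (φ t)) hab
        (hf.continuousOn.comp hφ.continuousOn fun t ht => by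
          simpa using (by positivity : 0 < 2 * r).trans_le (him t ht).1)]
    refine (lintegral_curve_le (hf.mono (hstrip _))
      (isClosed_Icc.reProdIm isClosed_Icc).measurableSet hφ measurableSet_Icc hr hβ hball
      hexp).trans (mul_le_mul_right ?_ _)
    exact setLIntegral_reProdIm_le_of_lineMoment_le (hf.continuousOn.mono (hstrip _)) hX hK0
      fun y hy => hK y hy.1 hy.2
  have hmoment : 0 ≤ ∫ t in a..b, ‖f (φ t)‖ ^ 4 :=
    intervalIntegral.integral_nonneg hab fun t _ => by positivity
  rw [le_div_iff₀ hβ]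
  rw [div_mul_eq_mul_div, le_div_iff₀ hβ] at hkey
  refine le_of_mul_le_mul_left ?_ (by positivity : 0 < r ^ 2)
  nlinarith [pi_gt_three, mul_nonneg (mul_nonneg hmoment hβ.le) (sq_nonneg r)]

end MeanValue

lemma integral_le_of_dyadic {g : ℝ → ℝ} (hg : Continuous g) (hg0 : ∀ t, 0 ≤ g t)
    {Z K₁ K₂ : ℝ} (hZ : 0 < Z) (hK₁ : 0 ≤ K₁) (hK₂ : 0 ≤ K₂) {X : ℝ} (hZX : Z ≤ X)
    (h : ∀ Y, Z ≤ Y → Y ≤ X → ∫ t in Y..2 * Y, g t ≤ K₁ * Y + K₂ / Y) :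
    ∫ t in Z..X, g t ≤ 2 * K₁ * X + 3 * K₂ / Z := by
  have hmono (a b : ℝ) (hab : a ≤ b) {c : ℝ} (hbc : b ≤ c) :
      ∫ t in a..b, g t ≤ ∫ t in a..c, g t :=
    intervalIntegral.integral_mono_interval le_rfl hab hbc (ae_of_all _ hg0)
      (hg.intervalIntegrable _ _)
  -- The term `-2 * K₂ / X` makes the bound reproduce itself when `X` is halved.
  suffices hind : ∀ n : ℕ, ∀ X, Z ≤ X → X ≤ 2 ^ n * Z →
      (∀ Y, Z ≤ Y → Y ≤ X → ∫ t in Y..2 * Y, g t ≤ K₁ * Y + K₂ / Y) →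
      ∫ t in Z..X, g t ≤ 2 * K₁ * X + 3 * K₂ / Z - 2 * K₂ / X by
    obtain ⟨n, hn⟩ := pow_unbounded_of_one_lt (X / Z) one_lt_two
    have : 0 ≤ 2 * K₂ / X := div_nonneg (by positivity) (hZ.le.trans hZX)
    linarith [hind n X hZX ((div_le_iff₀ hZ).1 hn.le) h]
  have hbase (X : ℝ) (hZX : Z ≤ X) (hX : X ≤ 2 * Z)
      (h : ∀ Y, Z ≤ Y → Y ≤ X → ∫ t in Y..2 * Y, g t ≤ K₁ * Y + K₂ / Y) :
      ∫ t in Z..X, g t ≤ 2 * K₁ * X + 3 * K₂ / Z - 2 * K₂ / X := by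
    have hdiv : 2 * K₂ / X ≤ 2 * K₂ / Z := by gcongr
    have hsplit : 3 * K₂ / Z = K₂ / Z + 2 * K₂ / Z := by ring
    have hlin := mul_le_mul_of_nonneg_left hZX hK₁
    linarith [hmono Z X hZX hX, h Z le_rfl hZX, mul_nonneg hK₁ hZ.le]
  intro n
  induction n with
  | zero => exact fun X hZX hX h => hbase X hZX (by linarith) h
  | succ n ih =>
    intro X hZX hX h
    rcases le_total X (2 * Z) with hX2 | hX2
    · exact hbase X hZX hX2 h
    have hhalf := ih (X / 2) (by linarith) (by rw [pow_succ] at hX; linarith)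
      fun Y hZY hY => h Y hZY (by linarith)
    have hlast := h (X / 2) (by linarith) (by linarith)
    rw [mul_div_cancel₀ X two_ne_zero] at hlast
    rw [← intervalIntegral.integral_add_adjacent_intervals (b := X / 2)
      (hg.intervalIntegrable _ _) (hg.intervalIntegrable _ _)]
    have hinv : K₂ / (X / 2) = 2 * K₂ / X := by field_simp
    have hinv' : 2 * K₂ / (X / 2) = 2 * K₂ / X + 2 * K₂ / X := by field_simp; ring
    linarith [mul_nonneg hK₁ (hZ.le.trans hZX)]

section HalfPlaneSeries

/-- The Dirichlet-type series `∑ bₙ e^{i w lₙ}`, holomorphic in the upper half plane under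
`HalfPlaneSummable`. -/
def halfPlaneSeries (b l : ℕ → ℝ) (w : ℂ) : ℂ := ∑' n, b n * Complex.exp (Complex.I * w * l n)

/-- Coefficients and frequencies are nonnegative, and `halfPlaneSeries b l` converges absolutely
in the open upper half plane. -/
structure HalfPlaneSummable (b l : ℕ → ℝ) : Prop where
  coeff_nonneg : ∀ n, 0 ≤ b n
  freq_nonneg : ∀ n, 0 ≤ l n
  summable : ∀ y > 0, Summable fun n => b n * exp (-(y * l n))

variable {b l : ℕ → ℝ}

lemma HalfPlaneSummable.term_nonneg (h : HalfPlaneSummable b l) (y : ℝ) (n : ℕ) :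
    0 ≤ b n * exp (-(y * l n)) :=
  mul_nonneg (h.coeff_nonneg n) (exp_nonneg _)

lemma HalfPlaneSummable.summable_norm (h : HalfPlaneSummable b l) {y : ℝ} (hy : 0 < y) :
    Summable fun n => ‖((b n * exp (-(y * l n)) : ℝ) : ℂ)‖ := by
  simpa only [Complex.norm_real, Real.norm_of_nonneg (h.term_nonneg y _)] using h.summable y hy

lemma HalfPlaneSummable.norm_term (h : HalfPlaneSummable b l) (w : ℂ) (n : ℕ) :
    ‖b n * Complex.exp (Complex.I * w * l n)‖ = b n * exp (-(w.im * l n)) := by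
  rw [norm_mul, Complex.norm_real, Real.norm_of_nonneg (h.coeff_nonneg n), Complex.norm_exp]
  simp

lemma HalfPlaneSummable.norm_le (h : HalfPlaneSummable b l) {w : ℂ} (hw : 0 < w.im) :
    ‖halfPlaneSeries b l w‖ ≤ ∑' n, b n * exp (-(w.im * l n)) :=
  tsum_of_norm_bounded (h.summable _ hw).hasSum fun n => (h.norm_term w n).le

lemma halfPlaneSeries_add_mul_I (b l : ℕ → ℝ) (x y : ℝ) :
    halfPlaneSeries b l (x + y * Complex.I)
      = expSeries (fun n => ((b n * exp (-(y * l n)) : ℝ) : ℂ)) l x := by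
  refine tsum_congr fun n => ?_
  push_cast
  rw [mul_assoc (b n : ℂ), ← Complex.exp_add]
  congr 2
  linear_combination (y * l n : ℂ) * Complex.I_sq

lemma HalfPlaneSummable.differentiableOn (h : HalfPlaneSummable b l) :
    DifferentiableOn ℂ (halfPlaneSeries b l) {w | 0 < w.im} := by
  intro w hw
  obtain ⟨y, hy, hyw⟩ := exists_between (show 0 < w.im from hw)
  have hopen : IsOpen {z : ℂ | y < z.im} := isOpen_lt continuous_const Complex.continuous_im
  have hdiff : DifferentiableOn ℂ (halfPlaneSeries b l) {z | y < z.im} := by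
    refine Complex.differentiableOn_tsum_of_summable_norm (h.summable y hy)
      (fun n => DifferentiableOn.const_mul (by fun_prop) _) hopen fun n z hz => ?_
    rw [h.norm_term]
    have := h.coeff_nonneg n
    have := h.freq_nonneg n
    have : y < z.im := hz
    gcongr
  exact (hdiff.differentiableAt (hopen.mem_nhds hyw)).differentiableWithinAt

lemma halfPlaneSeries_neg_conj (b l : ℕ → ℝ) (w : ℂ) :
    halfPlaneSeries b l (-(starRingEnd ℂ) w) = (starRingEnd ℂ) (halfPlaneSeries b l w) := by
  rw [halfPlaneSeries, halfPlaneSeries, Complex.conj_tsum]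
  refine tsum_congr fun n => ?_
  rw [map_mul, ← Complex.exp_conj]
  simp

lemma HalfPlaneSummable.continuous_line (h : HalfPlaneSummable b l) {y : ℝ} (hy : 0 < y) :
    Continuous fun x : ℝ => halfPlaneSeries b l (x + y * Complex.I) := by
  simpa only [halfPlaneSeries_add_mul_I] using continuous_expSeries (h.summable_norm hy) l

lemma HalfPlaneSummable.lineMoment_eq (h : HalfPlaneSummable b l) {y : ℝ} (hy : 0 < y) (T : ℝ) :
    lineMoment (halfPlaneSeries b l) y T
      = 2 * ∫ x in (0 : ℝ)..T, ‖halfPlaneSeries b l (x + y * Complex.I)‖ ^ 4 := by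
  have hcont : Continuous fun x : ℝ => ‖halfPlaneSeries b l (x + y * Complex.I)‖ ^ 4 :=
    (h.continuous_line hy).norm.pow 4
  have heven (x : ℝ) : ‖halfPlaneSeries b l ((-x : ℝ) + y * Complex.I)‖
      = ‖halfPlaneSeries b l (x + y * Complex.I)‖ := by
    rw [← RCLike.norm_conj (halfPlaneSeries b l (x + y * Complex.I)), ← halfPlaneSeries_neg_conj]
    simp [add_comm]
  have hneg := intervalIntegral.integral_comp_neg (a := 0) (b := T)
    fun x : ℝ => ‖halfPlaneSeries b l (x + y * Complex.I)‖ ^ 4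
  simp only [heven, neg_zero] at hneg
  rw [lineMoment, ← intervalIntegral.integral_add_adjacent_intervals
    (hcont.intervalIntegrable _ 0) (hcont.intervalIntegrable 0 _), ← hneg, two_mul]

lemma lineMoment_nonneg (f : ℂ → ℂ) (y : ℝ) {T : ℝ} (hT : 0 ≤ T) : 0 ≤ lineMoment f y T :=
  intervalIntegral.integral_nonneg (by linarith) fun _ _ => by positivity

lemma HalfPlaneSummable.integral_norm_pow_four_le (h : HalfPlaneSummable b l) {y : ℝ} (hy : 0 < y)
    {T : ℝ} (hT : 0 < T) (a : ℝ) :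
    ∫ x in a..a + T, ‖halfPlaneSeries b l (x + y * Complex.I)‖ ^ 4
      ≤ 2 * lineMoment (halfPlaneSeries b l) y T := by
  have := integral_norm_pow_four_expSeries_le (half_pos hT) (h.summable y hy)
    (a := fun n => ((b n * exp (-(y * l n)) : ℝ) : ℂ)) (fun n => by
      rw [Complex.norm_real, Real.norm_of_nonneg (h.term_nonneg y n)]) l (a + T / 2)
  simp only [← halfPlaneSeries_add_mul_I, mul_div_cancel₀ T two_ne_zero] at this
  rw [lineMoment]
  convert this using 2 <;> ring

lemma HalfPlaneSummable.lineMoment_le_mul_lineMoment (h : HalfPlaneSummable b l) {y : ℝ}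
    (hy : 0 < y) {T T₀ : ℝ} (hT : 0 ≤ T) (hT₀ : 0 < T₀) :
    lineMoment (halfPlaneSeries b l) y T
      ≤ 4 * (1 + T / T₀) * lineMoment (halfPlaneSeries b l) y T₀ := by
  set g : ℝ → ℝ := fun x => ‖halfPlaneSeries b l (x + y * Complex.I)‖ ^ 4
  have hg : Continuous g := (h.continuous_line hy).norm.pow 4
  have hblocks (n : ℕ) : ∫ x in (0 : ℝ)..n * T₀, g x
      ≤ n * (2 * lineMoment (halfPlaneSeries b l) y T₀) := by
    induction n with
    | zero => simp
    | succ n ih =>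
      rw [← intervalIntegral.integral_add_adjacent_intervals (b := n * T₀)
        (hg.intervalIntegrable _ _) (hg.intervalIntegrable _ _)]
      push_cast
      rw [add_one_mul, add_one_mul]
      exact add_le_add ih (h.integral_norm_pow_four_le hy hT₀ _)
  have hceil : T ≤ ⌈T / T₀⌉₊ * T₀ := (div_le_iff₀ hT₀).1 (Nat.le_ceil _)
  have hM := lineMoment_nonneg (halfPlaneSeries b l) y hT₀.le
  calc lineMoment (halfPlaneSeries b l) y T = 2 * ∫ x in (0 : ℝ)..T, g x := h.lineMoment_eq hy T
    _ ≤ 2 * (∫ x in (0 : ℝ)..⌈T / T₀⌉₊ * T₀, g x) := by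
        gcongr
        exact intervalIntegral.integral_mono_interval le_rfl hT hceil
          (ae_of_all _ fun x => by positivity) (hg.intervalIntegrable _ _)
    _ ≤ 2 * (⌈T / T₀⌉₊ * (2 * lineMoment (halfPlaneSeries b l) y T₀)) := by
        gcongr
        exact hblocks _
    _ ≤ 2 * ((T / T₀ + 1) * (2 * lineMoment (halfPlaneSeries b l) y T₀)) := by
        gcongr
        exact (Nat.ceil_lt_add_one (by positivity)).le
    _ = _ := by ring

end HalfPlaneSeries

section Levy

open scoped FourierTransform
open Filter Topology

lemma fourier_cexp_neg_mul_abs {q : ℂ} (hq : 0 < q.re) (k : ℝ) :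
    𝓕 (fun u : ℝ => Complex.exp (-(q * |u|))) k = 2 * q / (q ^ 2 + (2 * π * k) ^ 2) := by
  have hpos : Set.EqOn (fun u : ℝ => Complex.exp ((-2 * π * u * k : ℝ) * Complex.I) •
      Complex.exp (-(q * |u|))) (fun u : ℝ => Complex.exp (-(q + 2 * π * k * Complex.I) * u))
      (Set.Ioi 0) := fun u hu => by
    simp only [abs_of_pos hu.out, smul_eq_mul, ← Complex.exp_add]
    congr 1
    push_cast
    ring
  have hneg : Set.EqOn (fun u : ℝ => Complex.exp ((-2 * π * u * k : ℝ) * Complex.I) •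
      Complex.exp (-(q * |u|))) (fun u : ℝ => Complex.exp ((q - 2 * π * k * Complex.I) * u))
      (Set.Iic 0) := fun u hu => by
    simp only [abs_of_nonpos hu.out, smul_eq_mul, ← Complex.exp_add]
    congr 1
    push_cast
    ring
  have hre₁ : (-(q + 2 * π * k * Complex.I)).re < 0 := by simpa
  have hre₂ : 0 < (q - 2 * π * k * Complex.I).re := by simpa
  have hne₁ : q + 2 * π * k * Complex.I ≠ 0 := fun h => by simp [h] at hre₁
  have hne₂ : q - 2 * π * k * Complex.I ≠ 0 := fun h => by simp [h] at hre₂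
  have hfactor : q ^ 2 + (2 * π * k) ^ 2
      = (q - 2 * π * k * Complex.I) * (q + 2 * π * k * Complex.I) := by
    linear_combination (4 * π ^ 2 * k ^ 2 : ℂ) * Complex.I_sq
  rw [fourier_real_eq_integral_exp_smul, ← intervalIntegral.integral_Iic_add_Ioi (b := 0)
    ((integrableOn_exp_mul_complex_Iic hre₂ 0).congr_fun hneg.symm measurableSet_Iic)
    ((integrableOn_exp_mul_complex_Ioi hre₁ 0).congr_fun hpos.symm measurableSet_Ioi),
    setIntegral_congr_fun measurableSet_Iic hneg, setIntegral_congr_fun measurableSet_Ioi hpos,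
    integral_exp_mul_complex_Iic hre₂, integral_exp_mul_complex_Ioi hre₁, hfactor]
  simp only [Complex.ofReal_zero, mul_zero, Complex.exp_zero]
  field_simp
  ring

lemma integrable_inv_add_sq {σ : ℝ} (hσ : 0 < σ) :
    Integrable fun k : ℝ => (σ + (2 * π * k) ^ 2)⁻¹ := by
  have hscale : 2 * π / √σ ≠ 0 := by positivity
  refine ((integrable_inv_one_add_sq.comp_mul_left' hscale).const_mul σ⁻¹).congr
    (ae_of_all _ fun k => ?_)
  simp only [← mul_inv]
  congr 1
  field_simp
  rw [sq_sqrt hσ.le]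

lemma cexp_neg_mul_abs_eq_integral {q : ℂ} (hq : 0 < q.re) (hq2 : 0 < (q ^ 2).re) (u : ℝ) :
    Complex.exp (-(q * |u|)) = ∫ k : ℝ, Complex.exp ((2 * π * k * u : ℝ) * Complex.I) *
      (2 * q / (q ^ 2 + (2 * π * k) ^ 2)) := by
  set f : ℝ → ℂ := fun u => Complex.exp (-(q * |u|))
  have hf : Integrable f := by
    rw [← integrableOn_univ, ← Set.Iic_union_Ioi (a := (0 : ℝ)), integrableOn_union]
    constructor
    · refine (integrableOn_exp_mul_complex_Iic hq 0).congr_fun (fun u hu => ?_) measurableSet_Iic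
      simp only [f, abs_of_nonpos hu.out, Complex.ofReal_neg, mul_neg, neg_neg]
    · refine (integrableOn_exp_mul_complex_Ioi (a := -q) (by simpa) 0).congr_fun (fun u hu => ?_)
        measurableSet_Ioi
      simp only [f, abs_of_pos hu.out, neg_mul]
  have hfourier : 𝓕 f = fun k : ℝ => 2 * q / (q ^ 2 + (2 * π * k) ^ 2) :=
    funext (fourier_cexp_neg_mul_abs hq)
  have hint : Integrable (𝓕 f) := by
    rw [hfourier]
    refine ((integrable_inv_add_sq hq2).const_mul (2 * ‖q‖)).mono'
      (Measurable.aestronglyMeasurable (by fun_prop))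
      (ae_of_all _ fun k => ?_)
    have hre : (q ^ 2).re + (2 * π * k) ^ 2 ≤ ‖q ^ 2 + (2 * π * k) ^ 2‖ := by
      convert Complex.re_le_norm (q ^ 2 + (2 * π * k) ^ 2) using 1
      norm_cast
    rw [norm_div, norm_mul, Complex.norm_ofNat, div_eq_mul_inv]
    gcongr
  have := congr_fun (Continuous.fourierInv_fourier_eq (by fun_prop) hf hint) u
  rw [fourierInv_eq', hfourier] at this
  simpa only [smul_eq_mul, RCLike.inner_apply, conj_trivial, mul_comm u, ← mul_assoc]
    using this.symm

lemma integral_Ioi_cexp_neg_mul {a : ℂ} (ha : 0 < a.re) :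
    ∫ x : ℝ in Set.Ioi 0, Complex.exp (-(a * x)) = a⁻¹ := by
  have := integral_exp_mul_complex_Ioi (a := -a) (by simpa) 0
  simpa [neg_div_neg_eq] using this

lemma integrable_cexp_mul_cexp_neg {Q : ℂ} (hQ : 0 < Q.re) (u : ℝ) :
    Integrable (Function.uncurry fun k x : ℝ => Complex.exp ((2 * π * k * u : ℝ) * Complex.I) *
      Complex.exp (-((Q + (2 * π * k) ^ 2) * x))) (volume.prod (volume.restrict (Set.Ioi 0))) := by
  have hnorm : ∀ k x : ℝ, ‖Complex.exp ((2 * π * k * u : ℝ) * Complex.I) *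
      Complex.exp (-((Q + (2 * π * k) ^ 2) * x))‖ = exp (-(Q.re + (2 * π * k) ^ 2) * x) := by
    intro k x
    rw [norm_mul, Complex.norm_exp_ofReal_mul_I, one_mul, Complex.norm_exp]
    congr 1
    rw [show (2 * π * k : ℂ) ^ 2 = ((2 * π * k) ^ 2 : ℝ) by push_cast; rfl]
    simp only [Complex.neg_re, Complex.re_mul_ofReal, Complex.add_re, Complex.ofReal_re, neg_mul]
  have hneg : ∀ k : ℝ, -(Q.re + (2 * π * k) ^ 2) < 0 := fun k => by
    linarith [sq_nonneg (2 * π * k)]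
  refine (integrable_prod_iff (Continuous.aestronglyMeasurable (by fun_prop))).2
    ⟨ae_of_all _ fun k => ?_, ?_⟩
  · refine (integrableOn_exp_mul_Ioi (hneg k) 0).mono'
      (Continuous.aestronglyMeasurable (by fun_prop)) (ae_of_all _ fun x => (hnorm k x).le)
  · simp only [Function.uncurry_apply_pair, hnorm, integral_exp_mul_Ioi (hneg _), mul_zero,
      exp_zero, neg_div_neg_eq, one_div]
    exact integrable_inv_add_sq hQ

lemma integral_cexp_mul_cexp_neg_sq (Q : ℂ) (c : ℝ) {x : ℝ} (hx : 0 < x) :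
    ∫ k : ℝ, Complex.exp ((2 * π * k * (2 * c) : ℝ) * Complex.I) *
      Complex.exp (-((Q + (2 * π * k) ^ 2) * x)) =
      (2 * √π : ℂ)⁻¹ * ((x ^ (-1 / 2 : ℝ) : ℝ) * Complex.exp (-(c ^ 2 / x) - Q * x)) := by
  have hre : 0 < ((4 * π ^ 2 * x : ℝ) : ℂ).re := by
    rw [Complex.ofReal_re]
    positivity
  have hconst : ((π / (4 * π ^ 2 * x : ℝ) : ℂ)) ^ (1 / 2 : ℂ)
      = ((2 * √π)⁻¹ * x ^ (-1 / 2 : ℝ) : ℝ) := by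
    have : π / (4 * π ^ 2 * x) = ((2 * √π)⁻¹ * x ^ (-1 / 2 : ℝ)) ^ 2 := by
      rw [mul_pow, ← rpow_natCast (x ^ _), ← rpow_mul hx.le, inv_pow, mul_pow, sq_sqrt pi_pos.le]
      norm_num [rpow_neg_one]
      field_simp
    rw [← Complex.ofReal_div, this, show (1 / 2 : ℂ) = ((1 / 2 : ℝ) : ℂ) by norm_num,
      ← Complex.ofReal_cpow (by positivity), ← sqrt_eq_rpow, sqrt_sq (by positivity)]
  have hgauss := fourierIntegral_gaussian hre (4 * π * c)
  calc _ = ∫ k : ℝ, Complex.exp (-(Q * x)) * (Complex.exp (Complex.I * (4 * π * c) * k) *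
        Complex.exp (-(4 * π ^ 2 * x : ℝ) * k ^ 2)) := integral_congr_ae (ae_of_all _ fun k => by
          simp only [← Complex.exp_add]
          push_cast
          ring_nf)
    _ = _ := by
      rw [integral_const_mul, hgauss, hconst]
      push_cast
      rw [mul_left_comm, mul_assoc, mul_assoc, ← Complex.exp_add]
      congr 4
      have : (x : ℂ) ≠ 0 := mod_cast hx.ne'
      field_simp
      ring

lemma integral_rpow_neg_half_mul_cexp {q : ℂ} (hq : 0 < q.re) (hq2 : 0 < (q ^ 2).re) {c : ℝ}
    (hc : 0 ≤ c) :
    ∫ x : ℝ in Set.Ioi 0, (x ^ (-1 / 2 : ℝ) : ℝ) * Complex.exp (-(c ^ 2 / x) - q ^ 2 * x) =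
      √π / q * Complex.exp (-(2 * c * q)) := by
  have hq0 : q ≠ 0 := fun h => by simp [h] at hq
  have hπ : (√π : ℂ) ≠ 0 := mod_cast (sqrt_pos.2 pi_pos).ne'
  have hre : ∀ k : ℝ, 0 < (q ^ 2 + (2 * π * k) ^ 2).re := fun k => by
    norm_cast
    simp only [Complex.add_re, Complex.ofReal_re]
    positivity
  have h2c : |2 * c| = 2 * c := abs_of_nonneg (by positivity)
  have key : Complex.exp (-(2 * c * q)) = 2 * q * ((2 * √π : ℂ)⁻¹ * ∫ x : ℝ in Set.Ioi 0,
      (x ^ (-1 / 2 : ℝ) : ℝ) * Complex.exp (-(c ^ 2 / x) - q ^ 2 * x)) := by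
    calc _ = Complex.exp (-(q * |2 * c|)) := by
          rw [h2c]
          push_cast
          ring_nf
      _ = 2 * q * ∫ k : ℝ, ∫ x : ℝ in Set.Ioi 0, Complex.exp ((2 * π * k * (2 * c) : ℝ) * Complex.I)
          * Complex.exp (-((q ^ 2 + (2 * π * k) ^ 2) * x)) := by
        rw [cexp_neg_mul_abs_eq_integral hq hq2, ← integral_const_mul]
        refine integral_congr_ae (ae_of_all _ fun k => ?_)
        simp only [integral_const_mul, integral_Ioi_cexp_neg_mul (hre k)]
        ring
      _ = _ := by
        rw [integral_integral_swap (integrable_cexp_mul_cexp_neg hq2 _), ← integral_const_mul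
          (2 * √π : ℂ)⁻¹]
        congr 1
        exact setIntegral_congr_fun measurableSet_Ioi fun x hx =>
          integral_cexp_mul_cexp_neg_sq _ c hx
  rw [key, ← mul_assoc, ← mul_assoc, show √π / q * (2 * q) * (2 * √π : ℂ)⁻¹ = 1 by field_simp,
    one_mul]

lemma integrableOn_rpow_mul_exp_neg_div {α : ℝ} (hα : 0 < α) :
    IntegrableOn (fun x : ℝ => x ^ (-3 / 2 : ℝ) * exp (-(α / x))) (Set.Ioi 0) := by
  refine ((integrableOn_Ioi_comp_rpow_iff' (fun y : ℝ => exp (-α * y ^ 2))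
    (p := -1 / 2) (by norm_num)).2 (integrable_exp_neg_mul_sq hα).integrableOn).congr_fun
    (fun x hx => ?_) measurableSet_Ioi
  have hsq : (x ^ (-1 / 2 : ℝ)) ^ 2 = x⁻¹ := by
    rw [← rpow_natCast, ← rpow_mul hx.out.le, ← rpow_neg_one]
    norm_num
  beta_reduce
  rw [smul_eq_mul, hsq, neg_mul, ← div_eq_mul_inv]
  norm_num

lemma norm_cexp_neg_sq_div_sub (c : ℝ) (Q : ℂ) (x : ℝ) :
    ‖Complex.exp (-(c ^ 2 / x) - Q * x)‖ = exp (-(c ^ 2 / x)) * exp (-(Q.re * x)) := by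
  rw [Complex.norm_exp, ← exp_add]
  congr 1
  rw [← Complex.ofReal_pow, ← Complex.ofReal_div, Complex.sub_re, Complex.neg_re,
    Complex.ofReal_re, Complex.re_mul_ofReal, sub_eq_add_neg]

lemma norm_cexp_neg_sq_div_sub_le {Q : ℂ} (hQ : 0 ≤ Q.re) (c : ℝ) {x : ℝ} (hx : 0 ≤ x) :
    ‖Complex.exp (-(c ^ 2 / x) - Q * x)‖ ≤ exp (-(c ^ 2 / x)) := by
  rw [norm_cexp_neg_sq_div_sub]
  exact mul_le_of_le_one_right (exp_nonneg _) (exp_le_one_iff.2 (by nlinarith))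

lemma integrableOn_rpow_neg_half_mul_cexp {Q : ℂ} (hQ : 0 < Q.re) (c : ℝ) :
    IntegrableOn (fun x : ℝ => (x ^ (-1 / 2 : ℝ) : ℝ) * Complex.exp (-(c ^ 2 / x) - Q * x))
      (Set.Ioi 0) := by
  have hdom := integrableOn_rpow_mul_exp_neg_mul_rpow (s := -1 / 2) (p := 1) (by norm_num)
    one_pos hQ
  refine hdom.mono' (Measurable.aestronglyMeasurable (by fun_prop))
    ((ae_restrict_iff' measurableSet_Ioi).2 (ae_of_all _ fun x hx => ?_))
  have hx' : 0 < x := hx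
  rw [norm_mul, Complex.norm_of_nonneg (by positivity), norm_cexp_neg_sq_div_sub, rpow_one,
    neg_mul]
  gcongr
  exact mul_le_of_le_one_left (exp_nonneg _) (exp_le_one_iff.2 (neg_nonpos.2 (by positivity)))

lemma norm_rpow_mul_cexp_mul_le {Q : ℂ} (hQ : 0 ≤ Q.re) (p : ℝ) {c c' x : ℝ} (hc : 0 < c)
    (hc' : c' ∈ Set.Ioo (c / 2) (2 * c)) (hx : 0 < x) :
    ‖((x ^ p : ℝ) : ℂ) * Complex.exp (-(c' ^ 2 / x) - Q * x) * (-2 * c')‖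
      ≤ x ^ p * exp (-((c / 2) ^ 2 / x)) * (2 * (2 * c)) := by
  have hc₀ : 0 < c' := (half_pos hc).trans hc'.1
  have hnorm : ‖(-2 * c' : ℂ)‖ = 2 * c' := by
    rw [norm_mul, norm_neg, Complex.norm_ofNat, Complex.norm_of_nonneg hc₀.le]
  rw [norm_mul, norm_mul, hnorm, Complex.norm_of_nonneg (by positivity)]
  have hexp : exp (-(c' ^ 2 / x)) ≤ exp (-((c / 2) ^ 2 / x)) := by
    gcongr
    exact hc'.1.le
  gcongr
  · exact (norm_cexp_neg_sq_div_sub_le hQ c' hx.le).trans hexp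
  · exact hc'.2.le

lemma hasDerivAt_integral_rpow_neg_half_mul_cexp {Q : ℂ} (hQ : 0 < Q.re) {c : ℝ} (hc : 0 < c) :
    HasDerivAt (fun c : ℝ => ∫ x : ℝ in Set.Ioi 0,
        (x ^ (-1 / 2 : ℝ) : ℝ) * Complex.exp (-(c ^ 2 / x) - Q * x))
      (∫ x : ℝ in Set.Ioi 0, (x ^ (-3 / 2 : ℝ) : ℝ) * Complex.exp (-(c ^ 2 / x) - Q * x) *
        (-2 * c)) c := by
  have hrpow : ∀ x : ℝ, 0 < x → x ^ (-3 / 2 : ℝ) = x ^ (-1 / 2 : ℝ) / x := fun x hx => by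
    rw [← rpow_sub_one hx.ne']
    norm_num
  refine (hasDerivAt_integral_of_dominated_loc_of_deriv_le
    (μ := volume.restrict (Set.Ioi 0))
    (F := fun c x : ℝ => (x ^ (-1 / 2 : ℝ) : ℝ) * Complex.exp (-(c ^ 2 / x) - Q * x))
    (F' := fun c x : ℝ => (x ^ (-3 / 2 : ℝ) : ℝ) * Complex.exp (-(c ^ 2 / x) - Q * x) * (-2 * c))
    (bound := fun x => x ^ (-3 / 2 : ℝ) * exp (-((c / 2) ^ 2 / x)) * (2 * (2 * c)))
    (Ioo_mem_nhds (half_lt_self hc) (by linarith : c < 2 * c))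
    (.of_forall fun c => Measurable.aestronglyMeasurable (by fun_prop))
    (integrableOn_rpow_neg_half_mul_cexp hQ c)
    (Measurable.aestronglyMeasurable (by fun_prop))
    ((ae_restrict_iff' measurableSet_Ioi).2 (ae_of_all _ fun x hx c' hc' =>
      norm_rpow_mul_cexp_mul_le hQ.le _ hc hc' hx))
    ((integrableOn_rpow_mul_exp_neg_div (by positivity)).mul_const _) ?_).2
  refine (ae_restrict_iff' measurableSet_Ioi).2 (ae_of_all _ fun x hx c' _ => ?_)
  have hinner : HasDerivAt (fun c : ℝ => (-(c ^ 2 / x) - Q * x : ℂ)) (-(2 * c' / x)) c' := by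
    simpa using ((((hasDerivAt_id c').ofReal_comp.pow 2).div_const (x : ℂ)).neg.sub_const (Q * x))
  convert! hinner.cexp.const_mul ((x ^ (-1 / 2 : ℝ) : ℝ) : ℂ) using 1
  rw [hrpow x hx]
  push_cast
  ring

lemma integral_rpow_mul_cexp_of_pos {q : ℂ} (hq : 0 < q.re) (hq2 : 0 < (q ^ 2).re) {c : ℝ}
    (hc : 0 < c) :
    ∫ x : ℝ in Set.Ioi 0, (x ^ (-3 / 2 : ℝ) : ℝ) * Complex.exp (-(c ^ 2 / x) - q ^ 2 * x) =
      √π / c * Complex.exp (-(2 * c * q)) := by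
  have hq0 : q ≠ 0 := fun h => by simp [h] at hq
  have hc0 : (c : ℂ) ≠ 0 := mod_cast hc.ne'
  have hleft := hasDerivAt_integral_rpow_neg_half_mul_cexp hq2 hc
  have hright : HasDerivAt (fun c : ℝ => √π / q * Complex.exp (-(2 * c * q)))
      (√π / q * (Complex.exp (-(2 * c * q)) * -(2 * q))) c := by
    have := (((hasDerivAt_id c).ofReal_comp.const_mul (2 : ℂ)).mul_const q).neg
    simpa using this.cexp.const_mul (√π / q)
  have heq := hleft.unique (hright.congr_of_eventuallyEq ((lt_mem_nhds hc).mono fun c hc =>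
    integral_rpow_neg_half_mul_cexp hq hq2 hc.le))
  rw [integral_mul_const] at heq
  rw [← mul_right_inj' (mul_ne_zero (neg_ne_zero.2 two_ne_zero) hc0), mul_comm, heq]
  field_simp

theorem integral_rpow_mul_cexp {q : ℂ} (hq : 0 ≤ q.re) (hq2 : 0 ≤ (q ^ 2).re) {c : ℝ}
    (hc : 0 < c) :
    ∫ x : ℝ in Set.Ioi 0, (x ^ (-3 / 2 : ℝ) : ℝ) * Complex.exp (-(c ^ 2 / x) - q ^ 2 * x) =
      √π / c * Complex.exp (-(2 * c * q)) := by
  have hsq : ∀ η : ℝ, 0 < η → 0 < ((q + η) ^ 2).re := fun η hη => by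
    simp only [pow_two, Complex.mul_re, Complex.add_re, Complex.add_im, Complex.ofReal_re,
      Complex.ofReal_im, add_zero] at hq2 ⊢
    nlinarith [mul_nonneg hη.le hq]
  have hev : ∀ᶠ η : ℝ in 𝓝[>] 0, ∫ x : ℝ in Set.Ioi 0, (x ^ (-3 / 2 : ℝ) : ℝ) *
      Complex.exp (-(c ^ 2 / x) - (q + η) ^ 2 * x) = √π / c * Complex.exp (-(2 * c * (q + η))) :=
    eventually_mem_nhdsWithin.mono fun η hη =>
      integral_rpow_mul_cexp_of_pos (by simpa using add_pos_of_nonneg_of_pos hq hη.out)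
        (hsq η hη) hc
  have hcont : ∀ g : ℝ → ℂ, Continuous g → Tendsto g (𝓝[>] 0) (𝓝 (g 0)) := fun g hg =>
    (hg.tendsto 0).mono_left nhdsWithin_le_nhds
  have hright : Tendsto (fun η : ℝ => √π / c * Complex.exp (-(2 * c * (q + η)))) (𝓝[>] 0)
      (𝓝 (√π / c * Complex.exp (-(2 * c * q)))) := by
    simpa using hcont (fun η : ℝ => √π / c * Complex.exp (-(2 * c * (q + η)))) (by fun_prop)
  refine tendsto_nhds_unique (tendsto_integral_filter_of_dominated_convergence _
    (.of_forall fun η => Measurable.aestronglyMeasurable (by fun_prop))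
    (eventually_mem_nhdsWithin.mono fun η hη => (ae_restrict_iff' measurableSet_Ioi).2
      (ae_of_all _ fun x hx => ?_))
    (integrableOn_rpow_mul_exp_neg_div (pow_pos hc 2)) (ae_of_all _ fun x => ?_))
    (hright.congr' (hev.mono fun η h => h.symm))
  · rw [norm_mul, Complex.norm_of_nonneg (rpow_nonneg hx.out.le _)]
    gcongr
    · exact rpow_nonneg hx.out.le _
    · exact norm_cexp_neg_sq_div_sub_le (hsq η hη).le c hx.out.le
  · simpa using hcont (fun η : ℝ => (x ^ (-3 / 2 : ℝ) : ℝ) *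
      Complex.exp (-(c ^ 2 / x) - (q + η) ^ 2 * x)) (by fun_prop)

end Levy

section Transformation

open scoped FourierTransform
open Filter Topology

/-- The density `x ^ (-3/2) * exp (-c² / x)` on `x > 0` of the Lévy distribution with scale
parameter `2 * c²`, up to normalization. Its sum over the integers is evaluated by Poisson
summation. -/
def levyDensity (c : ℝ) : ℝ → ℝ :=
  Set.indicator (Set.Ioi 0) fun x => x ^ (-3 / 2 : ℝ) * exp (-(c ^ 2 / x))

lemma levyDensity_of_pos (c : ℝ) {x : ℝ} (hx : 0 < x) :
    levyDensity c x = x ^ (-3 / 2 : ℝ) * exp (-(c ^ 2 / x)) :=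
  Set.indicator_of_mem (Set.mem_Ioi.2 hx) _

lemma levyDensity_of_nonpos (c : ℝ) {x : ℝ} (hx : x ≤ 0) : levyDensity c x = 0 :=
  Set.indicator_of_notMem (by simpa using hx) _

lemma norm_levyDensity_le (c x : ℝ) : ‖levyDensity c x‖ ≤ |x| ^ (-(3 / 2) : ℝ) := by
  rcases le_or_gt x 0 with hx | hx
  · rw [levyDensity_of_nonpos c hx, norm_zero]
    positivity
  · rw [levyDensity_of_pos c hx, norm_of_nonneg (by positivity), abs_of_pos hx, neg_div]
    exact mul_le_of_le_one_right (by positivity)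
      (exp_le_one_iff.2 (neg_nonpos.2 (by positivity)))

lemma continuous_levyDensity {c : ℝ} (hc : 0 < c) : Continuous (levyDensity c) := by
  rw [continuous_iff_continuousAt]
  intro x
  rcases lt_trichotomy x 0 with hx | rfl | hx
  · exact continuousAt_const.congr ((gt_mem_nhds hx).mono fun y hy =>
      (levyDensity_of_nonpos c hy.le).symm)
  · rw [continuousAt_iff_continuous_left'_right']
    simp only [ContinuousWithinAt, levyDensity_of_nonpos c le_rfl]
    refine ⟨tendsto_const_nhds.congr' (eventually_mem_nhdsWithin.mono fun y hy =>
      (levyDensity_of_nonpos c hy.out.le).symm), ?_⟩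
    refine ((tendsto_rpow_mul_exp_neg_mul_atTop_nhds_zero (3 / 2) (c ^ 2) (by positivity)).comp
      tendsto_inv_nhdsGT_zero).congr' (eventually_mem_nhdsWithin.mono fun y hy => ?_)
    rw [levyDensity_of_pos c hy, Function.comp_apply, inv_rpow hy.out.le, ← rpow_neg hy.out.le,
      neg_mul, ← div_eq_mul_inv, neg_div]
  · refine ContinuousAt.congr (f := fun x => x ^ (-3 / 2 : ℝ) * exp (-(c ^ 2 / x))) ?_
      ((lt_mem_nhds hx).mono fun y hy => (levyDensity_of_pos c hy).symm)
    have := hx.ne'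
    fun_prop (disch := simp [*])

lemma fourier_levyDensity {c : ℝ} (hc : 0 < c) {q : ℂ} (hq : 0 ≤ q.re) {ξ : ℝ}
    (hξ : q ^ 2 = 2 * π * ξ * Complex.I) :
    𝓕 (fun x => (levyDensity c x : ℂ)) ξ = √π / c * Complex.exp (-(2 * c * q)) := by
  have hre : 0 ≤ (q ^ 2).re := by simp [hξ]
  rw [← integral_rpow_mul_cexp hq hre hc, fourier_real_eq_integral_exp_smul,
    ← integral_indicator measurableSet_Ioi]
  congr 1 with x
  rcases le_or_gt x 0 with hx | hx
  · rw [levyDensity_of_nonpos c hx, Set.indicator_of_notMem (by simpa using hx)]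
    simp
  · rw [levyDensity_of_pos c hx, Set.indicator_of_mem (Set.mem_Ioi.2 hx), hξ, sub_eq_add_neg,
      Complex.exp_add]
    push_cast
    rw [smul_eq_mul]
    ring_nf

/-- The exponential sum `F(w) = ∑ₙ e^{i w √(8πn)}` over `n ≥ 1`, indexed by `n - 1`. Its frequencies
are proportional to the square roots of the positive integers. -/
def sqrtSeries : ℂ → ℂ := halfPlaneSeries (fun _ => 1) fun n => √(8 * π * (n + 1))

/-- The dual exponential sum `B(ζ) = ∑ₙ n^{-3/2} e^{i ζ / n}` over `n ≥ 1`, indexed by `n - 1`. -/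
def recipSeries : ℂ → ℂ :=
  halfPlaneSeries (fun n => ((n : ℝ) + 1) ^ (-3 / 2 : ℝ)) fun n => 1 / ((n : ℝ) + 1)

lemma exp_neg_mul_sqrt_le {y : ℝ} (hy : 0 < y) {ν : ℝ} (hν : 0 < ν) :
    exp (-(y * √ν)) ≤ 24 / y ^ 4 * (1 / ν ^ 2) := by
  have hpow : (y * √ν) ^ 4 = y ^ 4 * ν ^ 2 := by
    rw [mul_pow, show (√ν) ^ 4 = ((√ν) ^ 2) ^ 2 by ring, sq_sqrt hν.le]
  have hexp := pow_div_factorial_le_exp (y * √ν) (by positivity) 4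
  rw [hpow] at hexp
  rw [exp_neg, inv_le_comm₀ (exp_pos _) (by positivity)]
  refine le_trans (le_of_eq ?_) hexp
  norm_num [Nat.factorial]
  field_simp

lemma halfPlaneSummable_sqrtSeries :
    HalfPlaneSummable (fun _ => 1) fun n => √(8 * π * (n + 1)) where
  coeff_nonneg _ := zero_le_one
  freq_nonneg _ := sqrt_nonneg _
  summable y hy := by
    have hsum : Summable fun n : ℕ => 1 / ((n + 1 : ℕ) : ℝ) ^ 2 :=
      (summable_nat_add_iff 1).2 (Real.summable_one_div_nat_pow.2 one_lt_two)
    refine .of_nonneg_of_le (fun n => by positivity) (fun n => ?_)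
      (hsum.mul_left (24 / y ^ 4 / (8 * π) ^ 2))
    convert! exp_neg_mul_sqrt_le hy (by positivity : 0 < 8 * π * ((n : ℝ) + 1)) using 1
    · rw [one_mul]
    · push_cast
      field_simp

lemma summable_succ_rpow_neg : Summable fun n : ℕ => ((n : ℝ) + 1) ^ (-3 / 2 : ℝ) := by
  have := (summable_nat_add_iff 1).2 (Real.summable_nat_rpow (p := -3 / 2) |>.2 (by norm_num))
  simpa only [Nat.cast_add_one] using this

lemma halfPlaneSummable_recipSeries :
    HalfPlaneSummable (fun n => ((n : ℝ) + 1) ^ (-3 / 2 : ℝ)) fun n => 1 / ((n : ℝ) + 1) where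
  coeff_nonneg _ := by positivity
  freq_nonneg _ := by positivity
  summable y hy := by
    refine .of_nonneg_of_le (fun n => by positivity) (fun n => ?_) summable_succ_rpow_neg
    exact mul_le_of_le_one_right (by positivity) (exp_le_one_iff.2 (neg_nonpos.2 (by positivity)))

lemma differentiableOn_sqrtSeries : DifferentiableOn ℂ sqrtSeries {w | 0 < w.im} :=
  halfPlaneSummable_sqrtSeries.differentiableOn

lemma differentiableOn_recipSeries : DifferentiableOn ℂ recipSeries {w | 0 < w.im} :=
  halfPlaneSummable_recipSeries.differentiableOn

/-- The primitive eighth root of unity `e^{iπ/4}`. -/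
def zetaEight : ℂ := (1 + Complex.I) / √2

lemma zetaEight_eq : zetaEight = ((√2)⁻¹ : ℝ) * (1 + Complex.I) := by
  rw [zetaEight, div_eq_inv_mul, Complex.ofReal_inv]

lemma zetaEight_re : zetaEight.re = (√2)⁻¹ := by
  rw [zetaEight_eq, Complex.re_ofReal_mul]
  simp

lemma zetaEight_im : zetaEight.im = (√2)⁻¹ := by
  rw [zetaEight_eq, Complex.im_ofReal_mul]
  simp

lemma zetaEight_sq : zetaEight ^ 2 = Complex.I := by
  have h2 : (√2 : ℂ) ^ 2 = 2 := mod_cast sq_sqrt zero_le_two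
  rw [zetaEight, div_pow, h2]
  linear_combination Complex.I_sq / 2

lemma norm_zetaEight : ‖zetaEight‖ = 1 := by
  have h : ‖zetaEight‖ ^ 2 = 1 := by rw [← norm_pow, zetaEight_sq, Complex.norm_I]
  exact (pow_eq_one_iff_of_nonneg (norm_nonneg _) two_ne_zero).1 h

lemma fourier_levyDensity_pos {c : ℝ} (hc : 0 < c) {ν : ℝ} (hν : 0 ≤ ν) :
    𝓕 (fun x => (levyDensity c x : ℂ)) ν =
      √π / c * Complex.exp (Complex.I * (Complex.I * (zetaEight * c)) * √(8 * π * ν)) := by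
  have hsq : (√(8 * π * ν) : ℂ) ^ 2 = 8 * π * ν := mod_cast sq_sqrt (by positivity)
  rw [fourier_levyDensity hc (q := (√(8 * π * ν) / 2 : ℝ) * zetaEight)]
  · congr 2
    push_cast
    linear_combination -(zetaEight * c * √(8 * π * ν)) * Complex.I_sq
  · rw [Complex.re_ofReal_mul, zetaEight_re]
    positivity
  · push_cast
    linear_combination (√(8 * π * ν) / 2 : ℂ) ^ 2 * zetaEight_sq + Complex.I / 4 * hsq

lemma fourier_levyDensity_neg {c : ℝ} (hc : 0 < c) {ν : ℝ} (hν : 0 ≤ ν) :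
    𝓕 (fun x => (levyDensity c x : ℂ)) (-ν) =
      √π / c * Complex.exp (Complex.I * (zetaEight * c) * √(8 * π * ν)) := by
  have hsq : (√(8 * π * ν) : ℂ) ^ 2 = 8 * π * ν := mod_cast sq_sqrt (by positivity)
  rw [fourier_levyDensity hc (q := (√(8 * π * ν) / 2 : ℝ) * (-Complex.I * zetaEight))]
  · congr 2
    push_cast
    ring
  · rw [Complex.re_ofReal_mul, neg_mul, Complex.neg_re, Complex.I_mul_re, zetaEight_im]
    simp only [neg_neg]
    positivity
  · push_cast
    linear_combination (√(8 * π * ν) / 2 : ℂ) ^ 2 * (zetaEight ^ 2 * Complex.I_sq - zetaEight_sq)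
      - Complex.I / 4 * hsq

lemma tsum_levyDensity (c : ℝ) :
    ∑' n : ℤ, (levyDensity c n : ℂ) = recipSeries (Complex.I * c ^ 2) := by
  have hinj : Function.Injective fun n : ℕ => (n : ℤ) + 1 := fun m n h => by simpa using h
  rw [← hinj.tsum_eq (f := fun n : ℤ => (levyDensity c n : ℂ)) fun n hn => ?_]
  · refine tsum_congr fun n => ?_
    push_cast
    rw [levyDensity_of_pos c (by positivity)]
    push_cast
    congr 2
    linear_combination (-(c : ℂ) ^ 2 / (n + 1)) * Complex.I_sq
  · have hpos : 0 < n := by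
      by_contra! h
      exact hn (by simp [levyDensity_of_nonpos c (Int.cast_nonpos.2 h)])
    exact ⟨(n - 1).toNat, by simp; omega⟩

lemma hasSum_sqrtSeries {w : ℂ} (hw : 0 < w.im) :
    HasSum (fun n : ℕ => Complex.exp (Complex.I * w * √(8 * π * (n + 1)))) (sqrtSeries w) := by
  have hsum : Summable fun n : ℕ =>
      ((1 : ℝ) : ℂ) * Complex.exp (Complex.I * w * √(8 * π * (n + 1))) :=
    .of_norm ((halfPlaneSummable_sqrtSeries.summable _ hw).congr fun n =>
      (halfPlaneSummable_sqrtSeries.norm_term w n).symm)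
  exact (show HasSum _ (sqrtSeries w) from hsum.hasSum).congr_fun fun n => by
    rw [Complex.ofReal_one, one_mul]

lemma hasSum_fourier_levyDensity {c : ℝ} (hc : 0 < c) :
    HasSum (fun n : ℤ => 𝓕 (fun x => (levyDensity c x : ℂ)) n)
      (√π / c * (1 + sqrtSeries (zetaEight * c) + sqrtSeries (Complex.I * (zetaEight * c)))) := by
  have him : 0 < (zetaEight * c).im := by
    rw [Complex.im_mul_ofReal, zetaEight_im]
    positivity
  have him' : 0 < (Complex.I * (zetaEight * c)).im := by
    rw [Complex.I_mul_im, Complex.re_mul_ofReal, zetaEight_re]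
    positivity
  have hpos : HasSum (fun n : ℕ => 𝓕 (fun x => (levyDensity c x : ℂ)) ((n : ℤ) : ℝ))
      (√π / c * 1 + √π / c * sqrtSeries (Complex.I * (zetaEight * c))) := by
    have hzero : 𝓕 (fun x => (levyDensity c x : ℂ)) ((0 : ℤ) : ℝ) = √π / c * 1 := by
      simpa using fourier_levyDensity_pos hc le_rfl
    rw [← hzero]
    refine HasSum.zero_add (((hasSum_sqrtSeries him').mul_left (√π / c : ℂ)).congr_fun fun n => ?_)
    simpa using fourier_levyDensity_pos hc (by positivity : (0 : ℝ) ≤ n + 1)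
  have hneg : HasSum (fun n : ℕ => 𝓕 (fun x => (levyDensity c x : ℂ)) ((-(n + 1) : ℤ) : ℝ))
      (√π / c * sqrtSeries (zetaEight * c)) := by
    refine ((hasSum_sqrtSeries him).mul_left (√π / c : ℂ)).congr_fun fun n => ?_
    have := fourier_levyDensity_neg hc (by positivity : (0 : ℝ) ≤ n + 1)
    push_cast at this ⊢
    exact this
  rw [add_right_comm, mul_add, mul_add (√π / c : ℂ) 1]
  exact hpos.of_nat_of_neg_add_one hneg

lemma mul_recipSeries_zetaEight_mul {c : ℝ} (hc : 0 < c) :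
    c * recipSeries ((zetaEight * c) ^ 2) =
      √π * (1 + sqrtSeries (zetaEight * c) + sqrtSeries (Complex.I * (zetaEight * c))) := by
  have hsum := hasSum_fourier_levyDensity hc
  have hpoisson := Real.tsum_eq_tsum_fourier_of_rpow_decay_of_summable
    (f := fun x => (levyDensity c x : ℂ))
    (Complex.continuous_ofReal.comp (continuous_levyDensity hc)) (b := 3 / 2) (by norm_num)
    (.of_norm_le fun x => by simpa using norm_levyDensity_le c x) hsum.summable 0
  simp only [zero_add, QuotientAddGroup.mk_zero, fourier_eval_zero, mul_one, hsum.tsum_eq,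
    tsum_levyDensity] at hpoisson
  have hc' : (c : ℂ) ≠ 0 := mod_cast hc.ne'
  rw [mul_pow, zetaEight_sq, hpoisson]
  field_simp

theorem mul_recipSeries_sq {w : ℂ} (hre : 0 < w.re) (him : 0 < w.im) :
    w * recipSeries (w ^ 2) =
      √π * zetaEight * (1 + sqrtSeries w + sqrtSeries (Complex.I * w)) := by
  set U : Set ℂ := {w | 0 < w.re} ∩ {w | 0 < w.im}
  have hopen : IsOpen U :=
    (isOpen_lt continuous_const Complex.continuous_re).inter
      (isOpen_lt continuous_const Complex.continuous_im)
  have hconvex : Convex ℝ U := (convex_halfSpace_re_gt 0).inter (convex_halfSpace_im_gt 0)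
  have hleft : DifferentiableOn ℂ (fun w => w * recipSeries (w ^ 2)) U :=
    differentiableOn_id.mul (differentiableOn_recipSeries.comp (by fun_prop) fun w hw => by
      have : (w ^ 2).im = 2 * w.re * w.im := by rw [pow_two, Complex.mul_im]; ring
      rw [Set.mem_ofPred_eq, this]
      exact mul_pos (mul_pos two_pos hw.1.out) hw.2.out)
  have hright : DifferentiableOn ℂ
      (fun w => √π * zetaEight * (1 + sqrtSeries w + sqrtSeries (Complex.I * w))) U :=
    (((differentiableOn_sqrtSeries.mono fun w hw => hw.2).const_add 1).add
      (differentiableOn_sqrtSeries.comp (by fun_prop) fun w hw => by simpa using hw.1)).const_mul _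
  have hmem : zetaEight ∈ U := by
    constructor
    · simp [zetaEight_re]
    · simp [zetaEight_im]
  have htendsto : Tendsto (fun c : ℝ => zetaEight * c) (𝓝[>] 1) (𝓝[≠] zetaEight) := by
    refine tendsto_nhdsWithin_iff.2 ⟨?_, eventually_mem_nhdsWithin.mono fun c hc h => ?_⟩
    · have : Continuous fun c : ℝ => zetaEight * c := by fun_prop
      simpa using (this.tendsto 1).mono_left nhdsWithin_le_nhds
    · have := congrArg Complex.re h
      rw [Complex.re_mul_ofReal, mul_eq_left₀ (by simp [zetaEight_re])] at this
      exact hc.out.ne' this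
  have hray : ∃ᶠ z in 𝓝[≠] zetaEight, z * recipSeries (z ^ 2) =
      √π * zetaEight * (1 + sqrtSeries z + sqrtSeries (Complex.I * z)) := by
    refine htendsto.frequently (Eventually.frequently ?_)
    filter_upwards [eventually_mem_nhdsWithin] with c hc
    rw [mul_assoc, mul_recipSeries_zetaEight_mul (one_pos.trans hc.out)]
    ring
  exact (hleft.analyticOnNhd hopen).eqOn_of_preconnected_of_frequently_eq
    (hright.analyticOnNhd hopen) hconvex.isPreconnected hmem hray ⟨hre, him⟩

end Transformation

section MomentBounds

lemma tsum_exp_neg_mul_sqrt_succ_le {b : ℝ} (hb : 0 < b) :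
    ∑' n : ℕ, exp (-(b * √(n + 1))) ≤ 2 / b ^ 2 := by
  have hanti : AntitoneOn (fun x : ℝ => exp (-b * x ^ (1 / 2 : ℝ))) (Set.Ici 0) := by
    intro x hx z _ hxz
    have := rpow_le_rpow hx.out hxz (by norm_num : (0 : ℝ) ≤ 1 / 2)
    exact exp_le_exp.2 (by nlinarith)
  have hint : IntegrableOn (fun x : ℝ => exp (-b * x ^ (1 / 2 : ℝ))) (Set.Ioi 0) := by
    simpa using integrableOn_rpow_mul_exp_neg_mul_rpow (s := 0) (p := 1 / 2) (by norm_num)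
      (by norm_num) hb
  have hle := hanti.tsum_add_one_le_integral hint fun _ _ => (exp_pos _).le
  rw [integral_exp_neg_mul_rpow (by norm_num) hb] at hle
  convert hle using 1
  · simp [sqrt_eq_rpow]
  · rw [show (1 : ℝ) / (1 / 2) + 1 = (2 : ℕ) + 1 by norm_num, Gamma_nat_eq_factorial,
      show (-1 : ℝ) / (1 / 2) = -(2 : ℕ) by norm_num, rpow_neg hb.le, rpow_natCast]
    norm_num [div_eq_inv_mul]

lemma norm_sqrtSeries_le {w : ℂ} (hw : 0 < w.im) : ‖sqrtSeries w‖ ≤ 1 / w.im ^ 2 := by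
  have hterm (n : ℕ) : 1 * exp (-(w.im * √(8 * π * (n + 1))))
      = exp (-(w.im * √(8 * π) * √(n + 1))) := by
    rw [sqrt_mul (by positivity), one_mul, mul_assoc]
  have hle := halfPlaneSummable_sqrtSeries.norm_le hw
  rw [tsum_congr hterm] at hle
  refine hle.trans ((tsum_exp_neg_mul_sqrt_succ_le (by positivity)).trans ?_)
  rw [mul_pow, sq_sqrt (by positivity), div_le_div_iff₀ (by positivity) (by positivity)]
  nlinarith [pi_gt_three, sq_nonneg w.im]

lemma norm_recipSeries_mul_I_le_of_one_le {η : ℝ} (hη : 1 ≤ η) :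
    ‖recipSeries (Complex.I * η)‖ ≤ 10 / √η := by
  have hc : 0 < √η := by positivity
  have hF {w : ℂ} (hw : w.im = (√2)⁻¹ * √η) : ‖sqrtSeries w‖ ≤ 2 := by
    have him : w.im ^ 2 = η / 2 := by
      rw [hw, mul_pow, inv_pow, sq_sqrt zero_le_two, sq_sqrt (by positivity)]
      ring
    refine (norm_sqrtSeries_le (by rw [hw]; positivity)).trans ?_
    rw [him, div_le_iff₀ (by positivity)]
    linarith
  have hid := mul_recipSeries_zetaEight_mul hc
  have hsq : (√η : ℂ) ^ 2 = η := mod_cast sq_sqrt (by positivity)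
  rw [mul_pow, zetaEight_sq, hsq] at hid
  have hpi : √π ≤ 2 := sqrt_le_iff.2 ⟨zero_le_two, by linarith [pi_le_four]⟩
  have hnorm : √η * ‖recipSeries (Complex.I * η)‖ ≤ √π * (1 + 2 + 2) := by
    rw [← norm_of_nonneg hc.le, ← Complex.norm_real, ← norm_mul, hid, norm_mul, Complex.norm_real,
      norm_of_nonneg (sqrt_nonneg _)]
    gcongr
    refine (norm_add₃_le).trans ?_
    rw [norm_one]
    gcongr
    · exact hF (by rw [Complex.im_mul_ofReal, zetaEight_im])
    · exact hF (by rw [Complex.I_mul_im, Complex.re_mul_ofReal, zetaEight_re])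
  rw [le_div_iff₀ hc]
  linarith

lemma norm_recipSeries_le : ∃ C > 0, ∀ ζ : ℂ, 0 < ζ.im → ‖recipSeries ζ‖ ≤ C / √ζ.im := by
  set S := ∑' n : ℕ, ((n : ℝ) + 1) ^ (-3 / 2 : ℝ)
  have hS : 0 ≤ S := tsum_nonneg fun n => by positivity
  refine ⟨S + 10, by positivity, fun ζ hζ => ?_⟩
  have hle := halfPlaneSummable_recipSeries.norm_le hζ
  rcases le_total ζ.im 1 with h1 | h1
  · have hsum : ‖recipSeries ζ‖ ≤ S := hle.trans
      ((halfPlaneSummable_recipSeries.summable _ hζ).tsum_le_tsum (fun n =>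
        mul_le_of_le_one_right (by positivity) (exp_le_one_iff.2 (neg_nonpos.2 (by positivity))))
        summable_succ_rpow_neg)
    rw [le_div_iff₀ (by positivity)]
    nlinarith [sqrt_le_one.2 h1, sqrt_nonneg ζ.im, norm_nonneg (recipSeries ζ)]
  · have hI : recipSeries (Complex.I * ζ.im) = (∑' n : ℕ,
        ((n : ℝ) + 1) ^ (-3 / 2 : ℝ) * exp (-(ζ.im * (1 / ((n : ℝ) + 1)))) : ℝ) := by
      rw [Complex.ofReal_tsum]
      refine tsum_congr fun n => ?_
      push_cast
      congr 2
      linear_combination (ζ.im * (1 / ((n : ℂ) + 1))) * Complex.I_sq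
    calc ‖recipSeries ζ‖ ≤ ‖recipSeries (Complex.I * ζ.im)‖ := by
          rw [hI, Complex.norm_real]
          exact hle.trans (le_norm_self _)
      _ ≤ 10 / √ζ.im := norm_recipSeries_mul_I_le_of_one_le h1
      _ ≤ (S + 10) / √ζ.im := by gcongr; linarith

/-- A fourth-moment estimate `∫_{-T}^T |f(x + iy)|⁴ dx ≪ y^{-r} + T y^{-p}`, uniform in `y` and `T`.
The first term is the contribution of short intervals, the second the mean value over long ones. -/
def HasMomentBound (f : ℂ → ℂ) (r p : ℝ) : Prop :=
  ∃ C > 0, ∀ y > 0, ∀ T > 0, lineMoment f y T ≤ C * (y ^ (-r) + T * y ^ (-p))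

lemma lineMoment_le_of_norm_le {f : ℂ → ℂ} {y T A : ℝ} (hT : 0 < T)
    (hf : ∀ x : ℝ, ‖f (x + y * Complex.I)‖ ≤ A) : lineMoment f y T ≤ 2 * T * A ^ 4 := by
  have hle := intervalIntegral.norm_integral_le_of_norm_le_const (a := -T) (b := T)
    (f := fun x : ℝ => ‖f (x + y * Complex.I)‖ ^ 4) (C := A ^ 4) fun x _ => by
      rw [norm_of_nonneg (by positivity)]
      gcongr
      exact hf x
  rw [sub_neg_eq_add, abs_of_pos (by positivity)] at hle
  exact (le_norm_self _).trans (hle.trans_eq (by ring))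

lemma HasMomentBound.of_norm_le {f : ℂ → ℂ} {C p : ℝ} (hC : 0 < C)
    (hf : ∀ w : ℂ, 0 < w.im → ‖f w‖ ≤ C * w.im ^ (-p)) (r : ℝ) : HasMomentBound f r (4 * p) := by
  refine ⟨2 * C ^ 4, by positivity, fun y hy T hT => ?_⟩
  have hle := lineMoment_le_of_norm_le (A := C * y ^ (-p)) hT fun x => by
    simpa using hf (x + y * Complex.I) (by simpa using hy)
  have hpow : (y ^ (-p)) ^ 4 = y ^ (-(4 * p)) := by
    rw [← rpow_mul_natCast hy.le]
    ring_nf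
  rw [mul_pow, hpow] at hle
  have : 0 < y ^ (-r) := by positivity
  nlinarith [show 0 < C ^ 4 by positivity]

lemma HalfPlaneSummable.hasMomentBound {b l : ℕ → ℝ} (h : HalfPlaneSummable b l) {r p C : ℝ}
    (hC : 0 < C)
    (hle : ∀ y > 0, lineMoment (halfPlaneSeries b l) y (y ^ (p - r)) ≤ C * y ^ (-r)) :
    HasMomentBound (halfPlaneSeries b l) r p := by
  refine ⟨4 * C, by positivity, fun y hy T hT => ?_⟩
  calc lineMoment (halfPlaneSeries b l) y T
      ≤ 4 * (1 + T / y ^ (p - r)) * lineMoment (halfPlaneSeries b l) y (y ^ (p - r)) :=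
        h.lineMoment_le_mul_lineMoment hy hT.le (by positivity)
    _ ≤ 4 * (1 + T / y ^ (p - r)) * (C * y ^ (-r)) := by gcongr; exact hle y hy
    _ = 4 * C * (y ^ (-r) + T * y ^ (-p)) := by
        rw [show -p = -r - (p - r) by ring, rpow_sub hy (-r)]
        ring

lemma hasMomentBound_sqrtSeries_eight (r : ℝ) : HasMomentBound sqrtSeries r 8 := by
  convert HasMomentBound.of_norm_le one_pos (p := 2) (fun w hw => ?_) r using 1
  · norm_num
  · simpa [rpow_neg hw.le] using norm_sqrtSeries_le hw

end MomentBounds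

section Iteration

lemma HasMomentBound.exists_integral_curve_le {f : ℂ → ℂ}
    (hf : DifferentiableOn ℂ f {z | 0 < z.im}) {r p : ℝ} (hr : 0 ≤ r) (hp : 0 ≤ p)
    (h : HasMomentBound f r p) :
    ∃ C > 0, ∀ (φ : ℝ → ℂ) (a b ρ β X : ℝ), Continuous φ → a ≤ b → 0 < ρ → 0 < β → 0 < X →
      (∀ t ∈ Set.Icc a b, 2 * ρ ≤ (φ t).im ∧ (φ t).im ≤ 4 * ρ) →
      (∀ t ∈ Set.Icc a b, |(φ t).re| + ρ ≤ X) →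
      (∀ s ∈ Set.Icc a b, ∀ t ∈ Set.Icc a b, β * |s - t| ≤ |(φ s).re - (φ t).re|) →
      ∫ t in a..b, ‖f (φ t)‖ ^ 4 ≤ C * (ρ ^ (-r) + X * ρ ^ (-p)) / β := by
  obtain ⟨C, hC, hle⟩ := h
  refine ⟨3 * C, by positivity, fun φ a b ρ β X hφ hab hρ hβ hX him hre hexp => ?_⟩
  have hlines (y : ℝ) (hy : ρ ≤ y) (_ : y ≤ 5 * ρ) :
      lineMoment f y X ≤ C * (ρ ^ (-r) + X * ρ ^ (-p)) := by
    refine (hle y (hρ.trans_le hy) X hX).trans ?_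
    gcongr C * (?_ + X * ?_)
    · exact rpow_le_rpow_of_nonpos hρ hy (neg_nonpos.2 hr)
    · exact rpow_le_rpow_of_nonpos hρ hy (neg_nonpos.2 hp)
  exact (integral_curve_le hf hφ hab hρ hβ him hre hexp hlines).trans_eq (by ring)

lemma HalfPlaneSummable.lineMoment_le_of_dyadic {b l : ℕ → ℝ} (h : HalfPlaneSummable b l)
    {y X A K₁ K₂ : ℝ} (hy : 0 < y) (hyX : y ≤ X) (hK₁ : 0 ≤ K₁) (hK₂ : 0 ≤ K₂)
    (hA : ∀ x : ℝ, ‖halfPlaneSeries b l (x + y * Complex.I)‖ ≤ A)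
    (hle : ∀ Y, y ≤ Y → Y ≤ X →
      ∫ x in Y..2 * Y, ‖halfPlaneSeries b l (x + y * Complex.I)‖ ^ 4 ≤ K₁ * Y + K₂ / Y) :
    lineMoment (halfPlaneSeries b l) y X ≤ 2 * (y * A ^ 4 + (2 * K₁ * X + 3 * K₂ / y)) := by
  have hcont : Continuous fun x : ℝ => ‖halfPlaneSeries b l (x + y * Complex.I)‖ ^ 4 :=
    (h.continuous_line hy).norm.pow 4
  have hlow := lineMoment_le_of_norm_le hy hA
  have hhigh := integral_le_of_dyadic hcont (fun _ => by positivity) hy hK₁ hK₂ hyX hle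
  rw [h.lineMoment_eq hy] at hlow ⊢
  rw [← intervalIntegral.integral_add_adjacent_intervals (hcont.intervalIntegrable 0 y)
    (hcont.intervalIntegrable y X)]
  linarith

lemma norm_sqrtSeries_le_norm_mul_recipSeries {w : ℂ} (hre : 0 < w.re) (him : 0 < w.im) :
    ‖sqrtSeries w‖ ≤ 1 + 1 / w.re ^ 2 + ‖w‖ * ‖recipSeries (w ^ 2)‖ := by
  have hrot : ‖sqrtSeries (Complex.I * w)‖ ≤ 1 / w.re ^ 2 := by
    simpa using norm_sqrtSeries_le (w := Complex.I * w) (by simpa using hre)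
  have hpi : 1 ≤ √π := one_le_sqrt.2 (by linarith [pi_gt_three])
  have hid := congrArg norm (mul_recipSeries_sq hre him)
  rw [norm_mul, norm_mul, norm_mul, Complex.norm_real, norm_of_nonneg (sqrt_nonneg π),
    norm_zetaEight, mul_one] at hid
  calc ‖sqrtSeries w‖
      = ‖(1 + sqrtSeries w + sqrtSeries (Complex.I * w)) - (1 + sqrtSeries (Complex.I * w))‖ := by
        ring_nf
    _ ≤ ‖1 + sqrtSeries w + sqrtSeries (Complex.I * w)‖ + ‖1 + sqrtSeries (Complex.I * w)‖ :=
        norm_sub_le _ _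
    _ ≤ √π * ‖1 + sqrtSeries w + sqrtSeries (Complex.I * w)‖ + (1 + 1 / w.re ^ 2) := by
        gcongr
        · exact le_mul_of_one_le_left (norm_nonneg _) hpi
        · exact (norm_add_le _ _).trans (by rw [norm_one]; gcongr)
    _ = _ := by rw [← hid]; ring

lemma norm_sqrtSeries_pow_four_le {σ Y t : ℝ} (hσ : 0 < σ) (hσY : σ ≤ Y) (hYt : Y ≤ t)
    (ht : t ≤ 2 * Y) :
    ‖sqrtSeries (t + σ * Complex.I)‖ ^ 4
      ≤ 64 * (1 + 1 / Y ^ 8) + 648 * Y ^ 4 * ‖recipSeries ((t + σ * Complex.I) ^ 2)‖ ^ 4 := by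
  have hY0 : 0 < Y := hσ.trans_le hσY
  have ht0 : 0 < t := hY0.trans_le hYt
  have hnorm : ‖(t + σ * Complex.I : ℂ)‖ ≤ 3 * Y := by
    refine (norm_add_le _ _).trans ?_
    simp only [norm_mul, Complex.norm_real, Complex.norm_I, norm_of_nonneg ht0.le,
      norm_of_nonneg hσ.le]
    linarith
  have hle : ‖sqrtSeries (t + σ * Complex.I)‖
      ≤ (1 + 1 / Y ^ 2) + 3 * Y * ‖recipSeries ((t + σ * Complex.I) ^ 2)‖ := by
    refine (norm_sqrtSeries_le_norm_mul_recipSeries (by simpa using ht0)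
      (by simpa using hσ)).trans ?_
    gcongr
    simpa using hYt
  have h₁ := add_pow_le (show (0 : ℝ) ≤ 1 + 1 / Y ^ 2 by positivity)
    (show 0 ≤ 3 * Y * ‖recipSeries ((t + σ * Complex.I) ^ 2)‖ by positivity) 4
  have h₂ := add_pow_le zero_le_one (show (0 : ℝ) ≤ 1 / Y ^ 2 by positivity) 4
  calc _ ≤ _ := pow_le_pow_left₀ (norm_nonneg _) hle 4
    _ ≤ 8 * (8 * (1 + 1 / Y ^ 8)
        + 81 * Y ^ 4 * ‖recipSeries ((t + σ * Complex.I) ^ 2)‖ ^ 4) := by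
      norm_num [mul_pow, ← pow_mul] at h₁ h₂ ⊢
      linarith
    _ = _ := by ring

lemma integral_norm_sqrtSeries_pow_four_le {σ Y : ℝ} (hσ : 0 < σ) (hY : σ ≤ Y) :
    ∫ t in Y..2 * Y, ‖sqrtSeries (t + σ * Complex.I)‖ ^ 4
      ≤ 64 * Y + 64 / Y ^ 7
        + 648 * Y ^ 4 * ∫ t in Y..2 * Y, ‖recipSeries ((t + σ * Complex.I) ^ 2)‖ ^ 4 := by
  have hY0 : 0 < Y := hσ.trans_le hY
  have hF : Continuous fun t : ℝ => ‖sqrtSeries (t + σ * Complex.I)‖ ^ 4 :=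
    (halfPlaneSummable_sqrtSeries.continuous_line hσ).norm.pow 4
  have hB : IntervalIntegrable
      (fun t : ℝ => 648 * Y ^ 4 * ‖recipSeries ((t + σ * Complex.I) ^ 2)‖ ^ 4)
      volume Y (2 * Y) := by
    refine (continuousOn_const.mul ((differentiableOn_recipSeries.continuousOn.comp
      (by fun_prop) fun t ht => ?_).norm.pow 4)).intervalIntegrable
    rw [Set.uIcc_of_le (by linarith)] at ht
    have : 0 < t := hY0.trans_le ht.1
    have him : ((t + σ * Complex.I) ^ 2 : ℂ).im = 2 * (t * σ) := by
      simp [sq]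
      ring
    rw [Set.mem_ofPred_eq, him]
    positivity
  have hmono := intervalIntegral.integral_mono_on (by linarith) (hF.intervalIntegrable _ _)
    ((intervalIntegrable_const (c := 64 * (1 + 1 / Y ^ 8))).add hB)
    fun t ht => norm_sqrtSeries_pow_four_le hσ hY ht.1 ht.2
  rw [intervalIntegral.integral_add intervalIntegrable_const hB, intervalIntegral.integral_const,
    intervalIntegral.integral_const_mul, smul_eq_mul] at hmono
  refine hmono.trans_eq (congrArg (· + _) ?_)
  field_simp
  ring

lemma HasMomentBound.exists_integral_sqrtSeries_le {κ : ℝ} (hκ : κ ≤ 4)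
    (h : HasMomentBound recipSeries 1 (4 - κ)) :
    ∃ C > 0, ∀ σ Y : ℝ, 0 < σ → σ ≤ Y →
      ∫ t in Y..2 * Y, ‖sqrtSeries (t + σ * Complex.I)‖ ^ 4
        ≤ 64 * Y + 64 / Y ^ 7 + C * (Y ^ 2 / σ + Y ^ (1 + κ) * σ ^ (κ - 4)) := by
  obtain ⟨C, hC, hcurve⟩ :=
    h.exists_integral_curve_le differentiableOn_recipSeries zero_le_one (by linarith)
  refine ⟨1620 * C, by positivity, fun σ Y hσ hY => ?_⟩
  have hY0 : 0 < Y := hσ.trans_le hY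
  have hre (t : ℝ) : ((t + σ * Complex.I) ^ 2 : ℂ).re = t ^ 2 - σ ^ 2 := by
    simp [sq]
  have him (t : ℝ) : ((t + σ * Complex.I) ^ 2 : ℂ).im = 2 * (t * σ) := by
    simp [sq]
    ring
  have hB := hcurve (fun t => (t + σ * Complex.I) ^ 2) Y (2 * Y) (Y * σ) (2 * Y) (5 * Y ^ 2)
    (by fun_prop) (by linarith) (by positivity) (by positivity) (by positivity)
    (fun t ht => by
      rw [him]
      exact ⟨by nlinarith [ht.1], by nlinarith [ht.2]⟩)
    (fun t ht => by
      rw [hre, abs_of_nonneg (by nlinarith [ht.1])]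
      nlinarith [ht.1, ht.2])
    (fun s hs t ht => by
      rw [hre, hre, show s ^ 2 - σ ^ 2 - (t ^ 2 - σ ^ 2) = (s + t) * (s - t) by ring, abs_mul]
      gcongr
      exact (by linarith [hs.1, ht.1] : 2 * Y ≤ s + t).trans (le_abs_self _))
  have hpow : (Y * σ) ^ (-(4 - κ)) = Y ^ (1 + κ) * σ ^ (κ - 4) / Y ^ 5 := by
    rw [mul_rpow hY0.le hσ.le, ← rpow_natCast, neg_sub,
      show κ - 4 = 1 + κ - (5 : ℕ) by norm_num; ring, rpow_sub hY0]
    ring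
  refine (integral_norm_sqrtSeries_pow_four_le hσ hY).trans (add_le_add_right ?_ _)
  calc _ ≤ 648 * Y ^ 4
        * (C * ((Y * σ) ^ (-1 : ℝ) + 5 * Y ^ 2 * (Y * σ) ^ (-(4 - κ))) / (2 * Y)) := by gcongr
    _ = 324 * C * (Y ^ 2 / σ) + 1620 * C * (Y ^ (1 + κ) * σ ^ (κ - 4)) := by
        rw [hpow, rpow_neg_one]
        field_simp
        ring
    _ ≤ _ := by
        have : 0 ≤ C * (Y ^ 2 / σ) := by positivity
        linarith

lemma norm_sqrtSeries_add_mul_I_le {σ : ℝ} (hσ : 0 < σ) (x : ℝ) :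
    ‖sqrtSeries (x + σ * Complex.I)‖ ≤ 1 / σ ^ 2 := by
  simpa using norm_sqrtSeries_le (w := x + σ * Complex.I) (by simpa using hσ)

lemma lineMoment_sqrtSeries_le {κ X C σ : ℝ} (hκ : 0 ≤ κ) (hC : 0 ≤ C) (hσ : 0 < σ)
    (hσX : σ ≤ X)
    (h : ∀ Y, σ ≤ Y → ∫ t in Y..2 * Y, ‖sqrtSeries (t + σ * Complex.I)‖ ^ 4
      ≤ 64 * Y + 64 / Y ^ 7 + C * (Y ^ 2 / σ + Y ^ (1 + κ) * σ ^ (κ - 4))) :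
    lineMoment sqrtSeries σ X ≤ 256 * X + (386 + 4 * C) *
      (1 / σ ^ 7 + X ^ 2 / σ + X ^ (1 + κ) * σ ^ (κ - 4)) := by
  have hX : 0 < X := hσ.trans_le hσX
  have hdyadic (Y : ℝ) (hY : σ ≤ Y) (hYX : Y ≤ X) :
      ∫ t in Y..2 * Y, ‖sqrtSeries (t + σ * Complex.I)‖ ^ 4
        ≤ (64 + C * (X / σ + X ^ κ * σ ^ (κ - 4))) * Y + 64 / σ ^ 6 / Y := by
    have hY0 : 0 < Y := hσ.trans_le hY
    calc _ ≤ _ := h Y hY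
      _ = (64 + C * (Y / σ + Y ^ κ * σ ^ (κ - 4))) * Y + 64 / Y ^ 6 / Y := by
        rw [rpow_add hY0, rpow_one]
        field_simp
        ring
      _ ≤ _ := by gcongr
  have hle := halfPlaneSummable_sqrtSeries.lineMoment_le_of_dyadic hσ hσX
    (A := 1 / σ ^ 2) (by positivity) (by positivity) (norm_sqrtSeries_add_mul_I_le hσ) hdyadic
  refine hle.trans ?_
  have hP : 0 ≤ X ^ 2 / σ + X ^ (1 + κ) * σ ^ (κ - 4) := by positivity
  have hQ : 0 ≤ C * (1 / σ ^ 7) := by positivity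
  calc _ = 256 * X + 386 * (1 / σ ^ 7)
        + 4 * C * (X ^ 2 / σ + X ^ (1 + κ) * σ ^ (κ - 4)) := by
        rw [rpow_add hX, rpow_one]
        field_simp
        ring
    _ ≤ _ := by linarith

lemma lineMoment_sqrtSeries_le_of_one_le {κ' σ : ℝ} (hσ : 1 ≤ σ) (hκ' : κ' ≤ 1) :
    lineMoment sqrtSeries σ (σ ^ (2 * κ' - 3)) ≤ 2 * σ ^ (-7 : ℝ) := by
  have hσ0 : 0 < σ := one_pos.trans_le hσ
  refine (lineMoment_le_of_norm_le (by positivity) (norm_sqrtSeries_add_mul_I_le hσ0)).trans ?_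
  rw [mul_assoc, one_div, ← inv_pow, ← pow_mul, ← rpow_natCast, inv_rpow hσ0.le, ← rpow_neg hσ0.le,
    ← rpow_add hσ0]
  gcongr
  push_cast
  linarith

/-- The choice `T = σ^{2κ' - 3}`, with `κ' = κ / (1 + κ)`, balances the three terms. -/
theorem HasMomentBound.sqrtSeries_of_recipSeries {κ : ℝ} (hκ : 0 ≤ κ) (hκ4 : κ ≤ 4)
    (h : HasMomentBound recipSeries 1 (4 - κ)) :
    HasMomentBound sqrtSeries 7 (4 + 2 * (κ / (1 + κ))) := by
  obtain ⟨C, hC, hle⟩ := h.exists_integral_sqrtSeries_le hκ4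
  obtain ⟨κ', hκ', hκ'0, hκ'1⟩ : ∃ κ', κ' * (1 + κ) = κ ∧ 0 ≤ κ' ∧ κ' ≤ 1 :=
    ⟨κ / (1 + κ), div_mul_cancel₀ _ (by positivity), by positivity,
      div_le_one_of_le₀ (by linarith) (by positivity)⟩
  rw [← eq_div_of_mul_eq (by positivity) hκ']
  refine halfPlaneSummable_sqrtSeries.hasMomentBound
    (C := 256 + (386 + 4 * C) * 3) (by positivity) fun σ hσ => ?_
  change lineMoment sqrtSeries σ _ ≤ _
  rw [show 4 + 2 * κ' - 7 = 2 * κ' - 3 by ring]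
  rcases le_total 1 σ with h1 | h1
  · refine (lineMoment_sqrtSeries_le_of_one_le h1 hκ'1).trans ?_
    gcongr
    linarith
  set X := σ ^ (2 * κ' - 3)
  have hanti {a b : ℝ} (hab : b ≤ a) : σ ^ a ≤ σ ^ b := rpow_le_rpow_of_exponent_ge hσ h1 hab
  have hX₁ : X ≤ σ ^ (-7 : ℝ) := hanti (by linarith)
  have hX₂ : X ^ 2 / σ ≤ σ ^ (-7 : ℝ) := by
    rw [← rpow_natCast, ← rpow_mul hσ.le, ← rpow_sub_one hσ.ne']
    exact hanti (by push_cast; linarith)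
  have hX₃ : X ^ (1 + κ) * σ ^ (κ - 4) = σ ^ (-7 : ℝ) := by
    rw [← rpow_mul hσ.le, ← rpow_add hσ]
    congr 1
    linear_combination 2 * hκ'
  have hσX : σ ≤ X := (rpow_one σ).symm.trans_le (hanti (by linarith))
  have hinv : 1 / σ ^ 7 = σ ^ (-7 : ℝ) := by
    rw [rpow_neg hσ.le, one_div, ← rpow_natCast]
    norm_num
  have hmain := lineMoment_sqrtSeries_le hκ hC.le hσ hσX fun Y hY => hle σ Y hσ hY
  rw [hX₃, hinv] at hmain
  calc _ ≤ _ := hmain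
    _ ≤ 256 * σ ^ (-7 : ℝ) + (386 + 4 * C) * (σ ^ (-7 : ℝ) + σ ^ (-7 : ℝ) + σ ^ (-7 : ℝ)) := by
      gcongr
    _ = _ := by ring

lemma norm_mul_recipSeries_sq_le {w : ℂ} (hre : 0 < w.re) (him : 0 < w.im) :
    ‖w‖ * ‖recipSeries (w ^ 2)‖ ≤ 2 * (1 + 1 / w.re ^ 2 + ‖sqrtSeries w‖) := by
  have hrot : ‖sqrtSeries (Complex.I * w)‖ ≤ 1 / w.re ^ 2 := by
    simpa using norm_sqrtSeries_le (w := Complex.I * w) (by simpa using hre)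
  have hpi : √π ≤ 2 := sqrt_le_iff.2 ⟨zero_le_two, by linarith [pi_le_four]⟩
  rw [← norm_mul, mul_recipSeries_sq hre him, norm_mul, norm_mul, Complex.norm_real,
    norm_of_nonneg (sqrt_nonneg π), norm_zetaEight, mul_one]
  gcongr
  refine norm_add₃_le.trans ?_
  rw [norm_one]
  linarith

/-- The inverse image of the horizontal line at height `M` under `w ↦ w²`, in the first quadrant,
parametrized by the real part of `w²`. -/
def sqrtCurve (M s : ℝ) : ℂ := (s + M * Complex.I) ^ (2⁻¹ : ℂ)

lemma sqrtCurve_sq (M s : ℝ) : sqrtCurve M s ^ 2 = s + M * Complex.I :=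
  Complex.cpow_ofNat_inv_pow _ 2

lemma continuous_sqrtCurve {M : ℝ} (hM : M ≠ 0) : Continuous (sqrtCurve M) :=
  Continuous.cpow (by fun_prop) continuous_const fun s =>
    Complex.mem_slitPlane_iff.2 (Or.inr (by simpa using hM))

lemma sqrtCurve_re_sq_sub_im_sq (M s : ℝ) :
    (sqrtCurve M s).re ^ 2 - (sqrtCurve M s).im ^ 2 = s := by
  simpa [sq] using congrArg Complex.re (sqrtCurve_sq M s)

lemma two_mul_sqrtCurve_re_mul_im (M s : ℝ) :
    2 * ((sqrtCurve M s).re * (sqrtCurve M s).im) = M := by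
  have := congrArg Complex.im (sqrtCurve_sq M s)
  rw [sq, Complex.mul_im] at this
  simp only [Complex.add_im, Complex.ofReal_im, Complex.mul_I_im, Complex.ofReal_re] at this
  linarith

lemma sqrtCurve_re_nonneg (M s : ℝ) : 0 ≤ (sqrtCurve M s).re := by
  rw [sqrtCurve, Complex.cpow_inv_two_re]
  positivity

section sqrtCurve

variable {M Y s : ℝ} (hM : 0 < M)
include hM

lemma sqrtCurve_re_pos : 0 < (sqrtCurve M s).re :=
  (sqrtCurve_re_nonneg M s).lt_of_ne' fun h => hM.ne' <| by
    simpa [h, eq_comm] using two_mul_sqrtCurve_re_mul_im M s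

lemma sqrtCurve_im_eq : (sqrtCurve M s).im = M / (2 * (sqrtCurve M s).re) := by
  have := sqrtCurve_re_pos hM (s := s)
  rw [eq_div_iff (by positivity)]
  linarith [two_mul_sqrtCurve_re_mul_im M s]

lemma sqrtCurve_im_pos : 0 < (sqrtCurve M s).im := by
  have := sqrtCurve_re_pos hM (s := s)
  rw [sqrtCurve_im_eq hM]
  positivity

variable (hMY : M ≤ Y) (hYs : Y ≤ s)
include hMY hYs

omit hM hMY in
lemma sqrt_le_sqrtCurve_re : √Y ≤ (sqrtCurve M s).re := by
  refine sqrt_le_iff.2 ⟨sqrtCurve_re_nonneg M s, ?_⟩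
  linarith [sqrtCurve_re_sq_sub_im_sq M s, sq_nonneg (sqrtCurve M s).im]

lemma sqrtCurve_im_le : (sqrtCurve M s).im ≤ M / (2 * √Y) := by
  have hY : 0 < Y := hM.trans_le hMY
  rw [sqrtCurve_im_eq hM]
  gcongr
  exact sqrt_le_sqrtCurve_re hYs

lemma sqrtCurve_im_le_sqrt_div_two : (sqrtCurve M s).im ≤ √Y / 2 := by
  have hY : 0 < Y := hM.trans_le hMY
  refine (sqrtCurve_im_le hM hMY hYs).trans ?_
  rw [div_le_div_iff₀ (by positivity) two_pos]
  nlinarith [mul_self_sqrt hY.le]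

lemma sqrtCurve_re_le (hs : s ≤ 2 * Y) : (sqrtCurve M s).re ≤ 3 / 2 * √Y := by
  have hY : 0 < Y := hM.trans_le hMY
  have him := pow_le_pow_left₀ (sqrtCurve_im_pos hM).le (sqrtCurve_im_le_sqrt_div_two hM hMY hYs) 2
  refine le_of_sq_le_sq ?_ (by positivity)
  rw [mul_pow, sq_sqrt hY.le]
  rw [div_pow, sq_sqrt hY.le] at him
  linarith [sqrtCurve_re_sq_sub_im_sq M s]

lemma le_sqrtCurve_im (hs : s ≤ 2 * Y) : M / (4 * √Y) ≤ (sqrtCurve M s).im := by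
  rw [sqrtCurve_im_eq hM]
  have := sqrtCurve_re_pos hM (s := s)
  refine div_le_div_of_nonneg_left hM.le (by positivity) ?_
  linarith [sqrtCurve_re_le hM hMY hYs hs, sqrt_nonneg Y]

lemma abs_sqrtCurve_im_sub_le {t : ℝ} (hYt : Y ≤ t) :
    |(sqrtCurve M s).im - (sqrtCurve M t).im| ≤ |(sqrtCurve M s).re - (sqrtCurve M t).re| := by
  have hY : 0 < Y := hM.trans_le hMY
  have hs0 := sqrtCurve_re_pos hM (s := s)
  have ht0 := sqrtCurve_re_pos hM (s := t)
  have hprod : M ≤ 2 * (sqrtCurve M s).re * (sqrtCurve M t).re := by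
    nlinarith [mul_self_sqrt hY.le, mul_le_mul (sqrt_le_sqrtCurve_re hYs (M := M))
      (sqrt_le_sqrtCurve_re hYt (M := M)) (sqrt_nonneg Y) hs0.le]
  have heq : (sqrtCurve M s).im - (sqrtCurve M t).im = M / (2 * (sqrtCurve M s).re *
      (sqrtCurve M t).re) * ((sqrtCurve M t).re - (sqrtCurve M s).re) := by
    rw [sqrtCurve_im_eq hM, sqrtCurve_im_eq hM]
    field_simp
  rw [heq, abs_mul, abs_of_pos (by positivity), abs_sub_comm]
  exact mul_le_of_le_one_left (abs_nonneg _) (div_le_one_of_le₀ hprod (by positivity))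

lemma abs_sub_le_mul_abs_sqrtCurve_re_sub {t : ℝ} (hYt : Y ≤ t) (hs : s ≤ 2 * Y) (ht : t ≤ 2 * Y) :
    |s - t| ≤ 4 * √Y * |(sqrtCurve M s).re - (sqrtCurve M t).re| := by
  have hsum : (sqrtCurve M s).re + (sqrtCurve M t).re + ((sqrtCurve M s).im + (sqrtCurve M t).im)
      ≤ 4 * √Y := by
    linarith [sqrtCurve_re_le hM hMY hYs hs, sqrtCurve_re_le hM hMY hYt ht,
      sqrtCurve_im_le_sqrt_div_two hM hMY hYs, sqrtCurve_im_le_sqrt_div_two hM hMY hYt]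
  have hs0 := sqrtCurve_im_pos hM (s := s)
  have ht0 := sqrtCurve_im_pos hM (s := t)
  calc |s - t|
      = |((sqrtCurve M s).re + (sqrtCurve M t).re) * ((sqrtCurve M s).re - (sqrtCurve M t).re)
          - ((sqrtCurve M s).im + (sqrtCurve M t).im)
            * ((sqrtCurve M s).im - (sqrtCurve M t).im)| := by
        congr 1
        linear_combination sqrtCurve_re_sq_sub_im_sq M t - sqrtCurve_re_sq_sub_im_sq M s
    _ ≤ ((sqrtCurve M s).re + (sqrtCurve M t).re) * |(sqrtCurve M s).re - (sqrtCurve M t).re|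
          + ((sqrtCurve M s).im + (sqrtCurve M t).im)
            * |(sqrtCurve M s).re - (sqrtCurve M t).re| := by
        refine (abs_sub _ _).trans ?_
        rw [abs_mul, abs_mul, abs_of_nonneg
          (add_nonneg (sqrtCurve_re_nonneg M s) (sqrtCurve_re_nonneg M t)),
          abs_of_pos (add_pos hs0 ht0)]
        exact add_le_add_right (mul_le_mul_of_nonneg_left
          (abs_sqrtCurve_im_sub_le hM hMY hYs hYt) (add_pos hs0 ht0).le) _
    _ ≤ _ := by
        rw [← add_mul]
        gcongr

end sqrtCurve

lemma norm_recipSeries_pow_four_le {M Y t : ℝ} (hM : 1 ≤ M) (hMY : M ≤ Y) (hYt : Y ≤ t) :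
    ‖recipSeries (t + M * Complex.I)‖ ^ 4
      ≤ 2048 / Y ^ 2 + 128 / Y ^ 2 * ‖sqrtSeries (sqrtCurve M t)‖ ^ 4 := by
  have hM0 : 0 < M := one_pos.trans_le hM
  have hY0 : 0 < Y := hM0.trans_le hMY
  have hle := norm_mul_recipSeries_sq_le (sqrtCurve_re_pos hM0) (sqrtCurve_im_pos hM0 (s := t))
  rw [sqrtCurve_sq] at hle
  have hre : √Y ≤ (sqrtCurve M t).re := sqrt_le_sqrtCurve_re hYt
  have hinv : 1 / (sqrtCurve M t).re ^ 2 ≤ 1 := by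
    refine div_le_one_of_le₀ ?_ (by positivity)
    exact one_le_pow₀ ((one_le_sqrt.2 (hM.trans hMY)).trans hre)
  have hnorm : √Y ≤ ‖sqrtCurve M t‖ := hre.trans (Complex.re_le_norm _)
  have hsqrt : √Y * ‖recipSeries (t + M * Complex.I)‖ ≤ 2 * (2 + ‖sqrtSeries (sqrtCurve M t)‖) :=
    (mul_le_mul_of_nonneg_right hnorm (norm_nonneg _)).trans (hle.trans (by linarith))
  have hpow := (pow_le_pow_left₀ (by positivity) hsqrt 4).trans_eq (mul_pow 2 _ 4)
  rw [mul_pow, show (√Y) ^ 4 = ((√Y) ^ 2) ^ 2 by ring, sq_sqrt hY0.le] at hpow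
  have hadd := add_pow_le zero_le_two (norm_nonneg (sqrtSeries (sqrtCurve M t))) 4
  rw [div_mul_eq_mul_div, ← add_div, le_div_iff₀ (by positivity)]
  norm_num at hadd hpow
  linarith

lemma integral_norm_recipSeries_pow_four_le {M Y : ℝ} (hM : 1 ≤ M) (hY : M ≤ Y) :
    ∫ t in Y..2 * Y, ‖recipSeries (t + M * Complex.I)‖ ^ 4
      ≤ 2048 / Y + 128 / Y ^ 2 * ∫ t in Y..2 * Y, ‖sqrtSeries (sqrtCurve M t)‖ ^ 4 := by
  have hM0 : 0 < M := one_pos.trans_le hM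
  have hY0 : 0 < Y := hM0.trans_le hY
  have hB : Continuous fun t : ℝ => ‖recipSeries (t + M * Complex.I)‖ ^ 4 :=
    (halfPlaneSummable_recipSeries.continuous_line hM0).norm.pow 4
  have hF : Continuous fun t : ℝ => 128 / Y ^ 2 * ‖sqrtSeries (sqrtCurve M t)‖ ^ 4 :=
    continuous_const.mul ((differentiableOn_sqrtSeries.continuousOn.comp_continuous
      (continuous_sqrtCurve hM0.ne') fun t => sqrtCurve_im_pos hM0).norm.pow 4)
  have hmono := intervalIntegral.integral_mono_on (by linarith : Y ≤ 2 * Y)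
    (hB.intervalIntegrable _ _) ((intervalIntegrable_const (c := 2048 / Y ^ 2)).add
      (hF.intervalIntegrable (μ := volume) _ _)) fun t ht => norm_recipSeries_pow_four_le hM hY ht.1
  rw [intervalIntegral.integral_add intervalIntegrable_const (hF.intervalIntegrable _ _),
    intervalIntegral.integral_const, intervalIntegral.integral_const_mul, smul_eq_mul] at hmono
  refine hmono.trans_eq (congrArg (· + _) ?_)
  field_simp
  ring

lemma HasMomentBound.exists_integral_sqrtCurve_le {r p : ℝ} (hr : 0 ≤ r) (hp : 0 ≤ p)
    (h : HasMomentBound sqrtSeries r p) :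
    ∃ C > 0, ∀ M Y : ℝ, 0 < M → M ≤ Y →
      ∫ t in Y..2 * Y, ‖sqrtSeries (sqrtCurve M t)‖ ^ 4
        ≤ C * (√Y ^ (1 + r) * M ^ (-r) + √Y ^ (2 + p) * M ^ (-p)) := by
  obtain ⟨C, hC, hcurve⟩ := h.exists_integral_curve_le differentiableOn_sqrtSeries hr hp
  refine ⟨8 * C * (8 ^ r + 8 ^ p), by positivity, fun M Y hM0 hY => ?_⟩
  have hY0 : 0 < Y := hM0.trans_le hY
  have hS : 0 < √Y := sqrt_pos.2 hY0
  have hF := hcurve (sqrtCurve M) Y (2 * Y) (M / (8 * √Y)) (1 / (4 * √Y)) (2 * √Y)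
    (continuous_sqrtCurve hM0.ne') (by linarith) (by positivity) (by positivity) (by positivity)
    (fun t ht => ⟨(le_sqrtCurve_im hM0 hY ht.1 ht.2).trans_eq' (by field_simp; norm_num),
      (sqrtCurve_im_le hM0 hY ht.1).trans_eq (by field_simp; norm_num)⟩)
    (fun t ht => by
      have hρ : M / (8 * √Y) ≤ 1 / 8 * √Y := by
        rw [div_le_iff₀ (by positivity)]
        nlinarith [mul_self_sqrt hY0.le]
      rw [abs_of_pos (sqrtCurve_re_pos hM0)]
      linarith [sqrtCurve_re_le hM0 hY ht.1 ht.2])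
    (fun s hs t ht => by
      rw [one_div_mul_eq_div, div_le_iff₀' (by positivity)]
      exact abs_sub_le_mul_abs_sqrtCurve_re_sub hM0 hY hs.1 ht.1 hs.2 ht.2)
  have hρ (e : ℝ) : (M / (8 * √Y)) ^ (-e) = 8 ^ e * √Y ^ e * M ^ (-e) := by
    rw [rpow_neg (by positivity), div_rpow hM0.le (by positivity), mul_rpow (by norm_num) hS.le,
      rpow_neg hM0.le]
    field_simp
  refine hF.trans ?_
  rw [hρ, hρ, rpow_add hS, rpow_add hS, rpow_one, rpow_two, div_div_eq_mul_div, div_one]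
  have hP : 0 ≤ 4 * C * 8 ^ r * (√Y * √Y ^ r * M ^ (-r)) := by positivity
  have hQ : 0 ≤ 8 * C * 8 ^ p * (√Y * √Y ^ r * M ^ (-r)) := by positivity
  have hR : 0 ≤ 8 * C * 8 ^ r * (√Y ^ 2 * √Y ^ p * M ^ (-p)) := by positivity
  linarith

lemma HasMomentBound.exists_integral_recipSeries_le {κ : ℝ} (hκ : 0 ≤ κ)
    (h : HasMomentBound sqrtSeries 7 (4 + 2 * κ)) :
    ∃ C > 0, ∀ M Y : ℝ, 1 ≤ M → M ≤ Y →
      ∫ t in Y..2 * Y, ‖recipSeries (t + M * Complex.I)‖ ^ 4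
        ≤ 2048 / Y + C * (Y ^ 2 / M ^ 7 + Y ^ (1 + κ) * M ^ (-(4 + 2 * κ))) := by
  obtain ⟨C, hC, hle⟩ := h.exists_integral_sqrtCurve_le (by norm_num) (by linarith)
  refine ⟨128 * C, by positivity, fun M Y hM hY => ?_⟩
  have hM0 : 0 < M := one_pos.trans_le hM
  have hY0 : 0 < Y := hM0.trans_le hY
  have hpow (a : ℝ) : √Y ^ (2 * a) = Y ^ a := by
    rw [rpow_mul (sqrt_nonneg Y), rpow_two, sq_sqrt hY0.le]
  calc _ ≤ _ := integral_norm_recipSeries_pow_four_le hM hY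
    _ ≤ 2048 / Y + 128 / Y ^ 2 * (C * (√Y ^ (1 + 7 : ℝ) * M ^ (-7 : ℝ)
        + √Y ^ (2 + (4 + 2 * κ)) * M ^ (-(4 + 2 * κ)))) := by
      gcongr
      exact hle M Y hM0 hY
    _ = _ := by
      rw [show (1 + 7 : ℝ) = 2 * (4 : ℕ) by norm_num,
        show 2 + (4 + 2 * κ) = 2 * ((2 : ℕ) + (1 + κ)) by norm_num; ring, hpow, hpow,
        rpow_add hY0, rpow_natCast, rpow_natCast, rpow_neg hM0.le 7, rpow_ofNat]
      field_simp

lemma lineMoment_recipSeries_le {κ A C M X : ℝ} (hκ : 0 ≤ κ) (hC : 0 ≤ C) (hM : 0 < M)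
    (hMX : M ≤ X) (hA : ∀ x : ℝ, ‖recipSeries (x + M * Complex.I)‖ ≤ A / √M)
    (h : ∀ Y, M ≤ Y → ∫ t in Y..2 * Y, ‖recipSeries (t + M * Complex.I)‖ ^ 4
      ≤ 2048 / Y + C * (Y ^ 2 / M ^ 7 + Y ^ (1 + κ) * M ^ (-(4 + 2 * κ)))) :
    lineMoment recipSeries M X ≤ (2 * A ^ 4 + 12288) / M
      + 4 * C * (X ^ 2 / M ^ 7 + X ^ (1 + κ) * M ^ (-(4 + 2 * κ))) := by
  have hX : 0 < X := hM.trans_le hMX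
  have hdyadic (Y : ℝ) (hY : M ≤ Y) (hYX : Y ≤ X) :
      ∫ t in Y..2 * Y, ‖recipSeries (t + M * Complex.I)‖ ^ 4
        ≤ C * (X / M ^ 7 + X ^ κ * M ^ (-(4 + 2 * κ))) * Y + 2048 / Y := by
    have hY0 : 0 < Y := hM.trans_le hY
    calc _ ≤ _ := h Y hY
      _ = C * (Y / M ^ 7 + Y ^ κ * M ^ (-(4 + 2 * κ))) * Y + 2048 / Y := by
        rw [rpow_add hY0, rpow_one]
        ring
      _ ≤ _ := by gcongr
  refine (halfPlaneSummable_recipSeries.lineMoment_le_of_dyadic hM hMX (by positivity)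
    (by norm_num) hA hdyadic).trans_eq ?_
  rw [rpow_add hX, rpow_one, div_pow, show √M ^ 4 = (√M ^ 2) ^ 2 by ring, sq_sqrt hM.le]
  field_simp
  ring

lemma lineMoment_recipSeries_le_of_le_one {κ' A M : ℝ} (hM : 0 < M) (hM1 : M ≤ 1) (hκ' : κ' ≤ 1)
    (hA : ∀ x : ℝ, ‖recipSeries (x + M * Complex.I)‖ ≤ A / √M) :
    lineMoment recipSeries M (M ^ (3 - κ')) ≤ 2 * A ^ 4 / M := by
  have hX : M ^ (3 - κ') ≤ M := by
    simpa using rpow_le_rpow_of_exponent_ge hM hM1 (by linarith : 1 ≤ 3 - κ')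
  refine (lineMoment_le_of_norm_le (by positivity) hA).trans ?_
  rw [div_pow, show √M ^ 4 = (√M ^ 2) ^ 2 by ring, sq_sqrt hM.le]
  calc _ ≤ 2 * M * (A ^ 4 / M ^ 2) := by gcongr
    _ = _ := by field_simp

/-- The choice `T = M^{3 - κ'}`, with `κ' = κ / (1 + κ)`, balances the three terms. -/
theorem HasMomentBound.recipSeries_of_sqrtSeries {κ : ℝ} (hκ : 0 ≤ κ)
    (h : HasMomentBound sqrtSeries 7 (4 + 2 * κ)) :
    HasMomentBound recipSeries 1 (4 - κ / (1 + κ)) := by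
  obtain ⟨C, hC, hle⟩ := h.exists_integral_recipSeries_le hκ
  obtain ⟨A, hA0, hA⟩ := norm_recipSeries_le
  obtain ⟨κ', hκ', hκ'0, hκ'1⟩ : ∃ κ', κ' * (1 + κ) = κ ∧ 0 ≤ κ' ∧ κ' ≤ 1 :=
    ⟨κ / (1 + κ), div_mul_cancel₀ _ (by positivity), by positivity,
      div_le_one_of_le₀ (by linarith) (by positivity)⟩
  rw [← eq_div_of_mul_eq (by positivity) hκ']
  refine halfPlaneSummable_recipSeries.hasMomentBound
    (C := 2 * A ^ 4 + 12288 + 8 * C) (by positivity) fun M hM => ?_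
  change lineMoment recipSeries M _ ≤ _
  have hline (x : ℝ) : ‖recipSeries (x + M * Complex.I)‖ ≤ A / √M := by
    simpa using hA (x + M * Complex.I) (by simpa using hM)
  rw [show 4 - κ' - 1 = 3 - κ' by ring, rpow_neg_one, ← div_eq_mul_inv]
  rcases le_total M 1 with h1 | h1
  · refine (lineMoment_recipSeries_le_of_le_one hM h1 hκ'1 hline).trans ?_
    gcongr
    linarith
  set X := M ^ (3 - κ')
  have hmono {a b : ℝ} (hab : a ≤ b) : M ^ a ≤ M ^ b := rpow_le_rpow_of_exponent_le h1 hab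
  have hX₁ : X ^ 2 / M ^ 7 ≤ 1 / M := by
    rw [one_div, ← rpow_neg_one, ← rpow_natCast X, ← rpow_mul hM.le, ← rpow_natCast M,
      ← rpow_sub hM]
    exact hmono (by push_cast; linarith)
  have hX₂ : X ^ (1 + κ) * M ^ (-(4 + 2 * κ)) = 1 / M := by
    rw [one_div, ← rpow_neg_one, ← rpow_mul hM.le, ← rpow_add hM]
    congr 1
    linear_combination -hκ'
  have hMX : M ≤ X := (rpow_one M).symm.trans_le (hmono (by linarith))
  have hmain := lineMoment_recipSeries_le hκ hC.le hM hMX hline fun Y hY => hle M Y h1 hY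
  rw [hX₂] at hmain
  calc _ ≤ _ := hmain
    _ ≤ (2 * A ^ 4 + 12288) / M + 4 * C * (1 / M + 1 / M) := by gcongr
    _ = _ := by ring

lemma hasMomentBound_sqrtSeries_iterate (n : ℕ) :
    HasMomentBound sqrtSeries 7 (4 + 2 * (2 / (4 * n + 1))) := by
  induction n with
  | zero => simpa [show (4 + 2 * 2 : ℝ) = 8 by norm_num] using hasMomentBound_sqrtSeries_eight 7
  | succ n ih =>
    have hstep : (2 / (4 * n + 1) : ℝ) / (1 + 2 / (4 * n + 1)) = 2 / (4 * n + 3) := by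
      field_simp
      ring
    have hrecip := ih.recipSeries_of_sqrtSeries (by positivity)
    rw [hstep] at hrecip
    convert hrecip.sqrtSeries_of_recipSeries (by positivity)
      (div_le_of_le_mul₀ (by positivity) (by norm_num) (by linarith)) using 3
    push_cast
    field_simp
    ring

theorem exists_hasMomentBound_sqrtSeries {ε : ℝ} (hε : 0 < ε) :
    ∃ κ, 0 ≤ κ ∧ κ ≤ ε ∧ HasMomentBound sqrtSeries 7 (4 + 2 * κ) := by
  obtain ⟨n, hn⟩ := exists_nat_gt (2 / ε)
  refine ⟨2 / (4 * n + 1), by positivity, ?_, hasMomentBound_sqrtSeries_iterate n⟩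
  rw [div_lt_iff₀ hε] at hn
  rw [div_le_iff₀ (by positivity)]
  nlinarith [show 0 ≤ (n : ℝ) * ε by positivity]

end Iteration

section Counting

section Correlation

variable {ι ι₁ ι₂ ι₃ ι₄ : Type*} [Fintype ι] [Fintype ι₁] [Fintype ι₂] [Fintype ι₃] [Fintype ι₄]

lemma half_mul_card_le_norm_fejerMean {T : ℝ} (hT : 0 < T) (l : ι → ℝ) :
    T / 2 * #{i | |l i| * T ≤ 1} ≤ ‖fejerMean T (expSeries (fun _ : ι => 1) l)‖ := by
  rw [fejerMean_expSeries (Summable.of_finite), tsum_fintype]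
  simp only [one_mul]
  rw [← Complex.ofReal_sum, Complex.norm_real]
  calc T / 2 * #{i | |l i| * T ≤ 1} = ∑ i with |l i| * T ≤ 1, T / 2 := by
        rw [sum_const, nsmul_eq_mul, mul_comm]
    _ ≤ ∑ i with |l i| * T ≤ 1, fejerMean T fun t => cos (t * l i) :=
        sum_le_sum fun i hi => half_le_fejerMean_cos hT (mem_filter.1 hi).2
    _ ≤ ∑ i, fejerMean T fun t => cos (t * l i) :=
        sum_le_sum_of_subset_of_nonneg (filter_subset _ _) fun i _ _ => fejerMean_cos_nonneg hT _
    _ ≤ _ := le_norm_self _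

lemma norm_fejerMean_le {T : ℝ} (hT : 0 < T) {g : ℝ → ℂ} (hg : Continuous g) :
    ‖fejerMean T g‖ ≤ ∫ t in (-T)..T, ‖g t‖ := by
  refine le_trans ?_ (fejerMean_le_integral hT hg.norm fun t => norm_nonneg _)
  refine intervalIntegral.norm_integral_le_of_norm_le (by linarith)
    (ae_of_all _ fun t ht => ?_) (Continuous.intervalIntegrable (by fun_prop) _ _)
  rw [norm_smul, smul_eq_mul, norm_of_nonneg (fejerWeight_nonneg hT ⟨ht.1.le, ht.2⟩)]

lemma mul_four_le_of_pos (x₁ x₂ x₃ x₄ : ℝ) {w₁ w₂ w₃ w₄ : ℝ} (hw₁ : 0 < w₁) (hw₂ : 0 < w₂)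
    (hw₃ : 0 < w₃) (hw₄ : 0 < w₄) :
    x₁ * x₂ * x₃ * x₄ ≤ w₁ * w₂ * w₃ * w₄ / 4
      * (x₁ ^ 4 / w₁ ^ 4 + x₂ ^ 4 / w₂ ^ 4 + x₃ ^ 4 / w₃ ^ 4 + x₄ ^ 4 / w₄ ^ 4) := by
  have amgm (a b c d : ℝ) : a * b * c * d ≤ (a ^ 4 + b ^ 4 + c ^ 4 + d ^ 4) / 4 := by
    nlinarith [sq_nonneg (a * b - c * d), sq_nonneg (a ^ 2 - b ^ 2), sq_nonneg (c ^ 2 - d ^ 2)]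
  calc x₁ * x₂ * x₃ * x₄
      = w₁ * w₂ * w₃ * w₄ * (x₁ / w₁ * (x₂ / w₂) * (x₃ / w₃) * (x₄ / w₄)) := by field_simp
    _ ≤ w₁ * w₂ * w₃ * w₄
        * (((x₁ / w₁) ^ 4 + (x₂ / w₂) ^ 4 + (x₃ / w₃) ^ 4 + (x₄ / w₄) ^ 4) / 4) := by
        gcongr
        exact amgm _ _ _ _
    _ = _ := by simp only [div_pow]; ring

lemma integral_mul_four_le {f₁ f₂ f₃ f₄ : ℝ → ℝ} (hf₁ : Continuous f₁) (hf₂ : Continuous f₂)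
    (hf₃ : Continuous f₃) (hf₄ : Continuous f₄) {a b K w₁ w₂ w₃ w₄ : ℝ} (hab : a ≤ b)
    (hw₁ : 0 < w₁) (hw₂ : 0 < w₂) (hw₃ : 0 < w₃) (hw₄ : 0 < w₄)
    (h₁ : ∫ t in a..b, f₁ t ^ 4 ≤ K * w₁ ^ 4) (h₂ : ∫ t in a..b, f₂ t ^ 4 ≤ K * w₂ ^ 4)
    (h₃ : ∫ t in a..b, f₃ t ^ 4 ≤ K * w₃ ^ 4) (h₄ : ∫ t in a..b, f₄ t ^ 4 ≤ K * w₄ ^ 4) :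
    ∫ t in a..b, f₁ t * f₂ t * f₃ t * f₄ t ≤ K * (w₁ * w₂ * w₃ * w₄) := by
  have hint {f : ℝ → ℝ} (hf : Continuous f) : IntervalIntegrable f volume a b :=
    hf.intervalIntegrable _ _
  calc ∫ t in a..b, f₁ t * f₂ t * f₃ t * f₄ t
      ≤ ∫ t in a..b, w₁ * w₂ * w₃ * w₄ / 4 * (f₁ t ^ 4 / w₁ ^ 4 + f₂ t ^ 4 / w₂ ^ 4
          + f₃ t ^ 4 / w₃ ^ 4 + f₄ t ^ 4 / w₄ ^ 4) :=
        intervalIntegral.integral_mono_on hab (hint (by fun_prop)) (hint (by fun_prop))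
          fun t _ => mul_four_le_of_pos _ _ _ _ hw₁ hw₂ hw₃ hw₄
    _ = w₁ * w₂ * w₃ * w₄ / 4 * ((∫ t in a..b, f₁ t ^ 4) / w₁ ^ 4
          + (∫ t in a..b, f₂ t ^ 4) / w₂ ^ 4 + (∫ t in a..b, f₃ t ^ 4) / w₃ ^ 4
          + (∫ t in a..b, f₄ t ^ 4) / w₄ ^ 4) := by
        rw [intervalIntegral.integral_const_mul,
          intervalIntegral.integral_add (hint (by fun_prop)) (hint (by fun_prop)),
          intervalIntegral.integral_add (hint (by fun_prop)) (hint (by fun_prop)),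
          intervalIntegral.integral_add (hint (by fun_prop)) (hint (by fun_prop))]
        simp only [intervalIntegral.integral_div]
    _ ≤ w₁ * w₂ * w₃ * w₄ / 4 * (K + K + K + K) := by
        gcongr <;> rwa [div_le_iff₀ (by positivity)]
    _ = _ := by ring

lemma half_mul_card_four_le {l₁ : ι₁ → ℝ} {l₂ : ι₂ → ℝ} {l₃ : ι₃ → ℝ} {l₄ : ι₄ → ℝ}
    {T K w₁ w₂ w₃ w₄ : ℝ} (hT : 0 < T)
    (hw₁ : 0 < w₁) (hw₂ : 0 < w₂) (hw₃ : 0 < w₃) (hw₄ : 0 < w₄)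
    (h₁ : ∫ t in (-T)..T, ‖expSeries (fun _ => 1) l₁ t‖ ^ 4 ≤ K * w₁ ^ 4)
    (h₂ : ∫ t in (-T)..T, ‖expSeries (fun _ => 1) l₂ t‖ ^ 4 ≤ K * w₂ ^ 4)
    (h₃ : ∫ t in (-T)..T, ‖expSeries (fun _ => 1) l₃ t‖ ^ 4 ≤ K * w₃ ^ 4)
    (h₄ : ∫ t in (-T)..T, ‖expSeries (fun _ => 1) l₄ t‖ ^ 4 ≤ K * w₄ ^ 4) :
    T / 2 * #{q : ι₁ × ι₂ × ι₃ × ι₄ | |l₁ q.1 + (l₂ q.2.1 + (l₃ q.2.2.1 + l₄ q.2.2.2))| * T ≤ 1}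
      ≤ K * (w₁ * w₂ * w₃ * w₄) := by
  have hprod (t : ℝ) : expSeries (fun _ : ι₁ × ι₂ × ι₃ × ι₄ => 1)
      (fun q => l₁ q.1 + (l₂ q.2.1 + (l₃ q.2.2.1 + l₄ q.2.2.2))) t
      = expSeries (fun _ => 1) l₁ t * (expSeries (fun _ => 1) l₂ t
        * (expSeries (fun _ => 1) l₃ t * expSeries (fun _ => 1) l₄ t)) := by
    simp only [expSeries_mul_expSeries Summable.of_finite Summable.of_finite, mul_one]
  have hcont₁ := (continuous_expSeries (a := fun _ => 1) Summable.of_finite l₁).norm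
  have hcont₂ := (continuous_expSeries (a := fun _ => 1) Summable.of_finite l₂).norm
  have hcont₃ := (continuous_expSeries (a := fun _ => 1) Summable.of_finite l₃).norm
  have hcont₄ := (continuous_expSeries (a := fun _ => 1) Summable.of_finite l₄).norm
  calc _ ≤ _ := half_mul_card_le_norm_fejerMean hT _
    _ ≤ _ := norm_fejerMean_le hT (continuous_expSeries Summable.of_finite _)
    _ ≤ _ := by
        simp only [hprod, norm_mul, ← mul_assoc]
        rw [mul_assoc K, mul_assoc K, mul_assoc K]
        exact integral_mul_four_le hcont₁ hcont₂ hcont₃ hcont₄ (by linarith) hw₁ hw₂ hw₃ hw₄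
          h₁ h₂ h₃ h₄

end Correlation

lemma expSeries_const {ι : Type*} (c : ℂ) (l : ι → ℝ) (t : ℝ) :
    expSeries (fun _ => c) l t = c * expSeries (fun _ => 1) l t := by
  simp only [expSeries, one_mul, tsum_mul_left]

lemma expSeries_extend {ι κ : Type*} {g : ι → κ} (hg : g.Injective) (a : ι → ℂ) (l : κ → ℝ)
    (t : ℝ) : expSeries (Function.extend g a 0) l t = expSeries a (l ∘ g) t := by
  rw [expSeries, ← hg.tsum_eq]
  · simp only [hg.extend_apply, expSeries, Function.comp_apply]
  · refine Function.support_subset_iff'.2 fun k hk => ?_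
    rw [Function.extend_apply' _ _ _ hk, Pi.zero_apply, zero_mul]

lemma HalfPlaneSummable.integral_norm_pow_four_expSeries_le {b l : ℕ → ℝ}
    (h : HalfPlaneSummable b l) {ι : Type*} {g : ι → ℕ} (hg : g.Injective) {a : ι → ℂ} {y T : ℝ}
    (hy : 0 < y) (hT : 0 < T) (ha : ∀ i, ‖a i‖ ≤ b (g i) * exp (-(y * l (g i)))) :
    ∫ t in (-T)..T, ‖expSeries a (l ∘ g) t‖ ^ 4
      ≤ 2 * lineMoment (halfPlaneSeries b l) y (2 * T) := by
  have hext (n : ℕ) : ‖Function.extend g a 0 n‖ ≤ b n * exp (-(y * l n)) := by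
    by_cases hn : ∃ i, g i = n
    · obtain ⟨i, rfl⟩ := hn
      rw [hg.extend_apply]
      exact ha i
    · rw [Function.extend_apply' _ _ _ hn, Pi.zero_apply, norm_zero]
      exact h.term_nonneg y n
  have hle := _root_.integral_norm_pow_four_expSeries_le hT (h.summable y hy) hext l 0
  simpa only [lineMoment, zero_sub, zero_add, expSeries_extend hg, ← halfPlaneSeries_add_mul_I]
    using hle

/-- On the line of height `1 / √(8πX)` the damping of the frequencies up to `√(8πX)` is at most
`exp 1`, so the majorant principle bounds the finite sum by `sqrtSeries`. -/
lemma integral_norm_pow_four_expSeries_sqrt_le {X T : ℝ} (hX : 0 < X) (hT : 0 < T) {s : Finset ℕ}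
    (hs : ∀ n ∈ s, 0 < n ∧ (n : ℝ) ≤ X) :
    ∫ t in (-T)..T, ‖expSeries (fun _ : s => 1) (fun n => √(8 * π * n)) t‖ ^ 4
      ≤ exp 4 * (2 * lineMoment sqrtSeries (√(8 * π * X))⁻¹ (2 * T)) := by
  have hinj : Function.Injective fun n : s => (n : ℕ) - 1 := fun m n hmn =>
    Subtype.ext (Nat.pred_inj (hs m m.2).1 (hs n n.2).1 hmn)
  have hfreq : (fun n : ℕ => √(8 * π * (n + 1))) ∘ (fun n : s => (n : ℕ) - 1)
      = fun n : s => √(8 * π * n) := by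
    funext n
    simp only [Function.comp_apply, Nat.cast_pred (hs n n.2).1, sub_add_cancel]
  have hcoeff (n : s) : ‖((exp (-1) : ℝ) : ℂ)‖
      ≤ 1 * exp (-((√(8 * π * X))⁻¹ * √(8 * π * (((n : ℕ) - 1 : ℕ) + 1)))) := by
    rw [Complex.norm_real, norm_of_nonneg (exp_nonneg _), one_mul, exp_le_exp, neg_le_neg_iff,
      Nat.cast_pred (hs n n.2).1, sub_add_cancel, ← div_eq_inv_mul, div_le_one (by positivity)]
    have := (hs n n.2).2
    gcongr
  have hle : _ ≤ 2 * lineMoment sqrtSeries _ _ :=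
    halfPlaneSummable_sqrtSeries.integral_norm_pow_four_expSeries_le hinj (by positivity) hT hcoeff
  simp only [hfreq, expSeries_const (exp (-1) : ℝ), norm_mul, mul_pow, Complex.norm_real,
    norm_of_nonneg (exp_nonneg _), intervalIntegral.integral_const_mul, ← exp_nat_mul] at hle
  rwa [← inv_mul_le_iff₀ (exp_pos 4), ← exp_neg, show -(4 : ℝ) = (4 : ℕ) * -1 by norm_num]

lemma HasMomentBound.exists_integral_expSeries_sqrt_le {κ : ℝ}
    (h : HasMomentBound sqrtSeries 7 (4 + 2 * κ)) :
    ∃ C > 0, ∀ X > 0, ∀ T > 0, ∀ s : Finset ℕ, (∀ n ∈ s, 0 < n ∧ (n : ℝ) ≤ X) →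
      ∫ t in (-T)..T, ‖expSeries (fun _ : s => 1) (fun n => √(8 * π * n)) t‖ ^ 4
        ≤ C * (X ^ (7 / 2 : ℝ) + T * X ^ (2 + κ)) := by
  obtain ⟨C, hC, hle⟩ := h
  refine ⟨2 * exp 4 * C * ((8 * π) ^ (7 / 2 : ℝ) + 2 * (8 * π) ^ (2 + κ)), by positivity,
    fun X hX T hT s hs => ?_⟩
  have hpow (p : ℝ) : (√(8 * π * X))⁻¹ ^ (-(2 * p)) = (8 * π) ^ p * X ^ p := by
    rw [inv_rpow (sqrt_nonneg _), ← rpow_neg (sqrt_nonneg _), neg_neg, rpow_mul (sqrt_nonneg _),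
      rpow_two, sq_sqrt (by positivity), mul_rpow (by positivity) hX.le]
  have hline := hle (√(8 * π * X))⁻¹ (by positivity) (2 * T) (by positivity)
  rw [show (-7 : ℝ) = -(2 * (7 / 2)) by norm_num, show 4 + 2 * κ = 2 * (2 + κ) by ring, hpow,
    hpow] at hline
  calc _ ≤ _ := integral_norm_pow_four_expSeries_sqrt_le hX hT hs
    _ ≤ exp 4 * (2 * (C * ((8 * π) ^ (7 / 2 : ℝ) * X ^ (7 / 2 : ℝ)
          + 2 * T * ((8 * π) ^ (2 + κ) * X ^ (2 + κ))))) := by gcongr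
    _ = 2 * exp 4 * C * ((8 * π) ^ (7 / 2 : ℝ) * X ^ (7 / 2 : ℝ)
          + 2 * (8 * π) ^ (2 + κ) * (T * X ^ (2 + κ))) := by ring
    _ ≤ _ := by
      rw [mul_assoc (2 * exp 4 * C), add_mul]
      gcongr
      · exact le_add_of_nonneg_right (by positivity)
      · exact le_add_of_nonneg_left (by positivity)

/-- The integers counted by one variable of `Apm`, that is those in `(N, 2N]`. -/
def dyadicBlock (N : ℝ) : Finset ℕ := Ioc ⌊N⌋₊ ⌊2 * N⌋₊

lemma mem_dyadicBlock {N : ℝ} (hN : 0 ≤ N) {n : ℕ} :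
    n ∈ dyadicBlock N ↔ N < n ∧ (n : ℝ) ≤ 2 * N := by
  rw [dyadicBlock, mem_Ioc, Nat.floor_lt hN, Nat.le_floor_iff (by positivity)]

/-- The weight attached to one variable in the bound for `Apm`. -/
def blockWeight (ε Δ N : ℝ) : ℝ :=
  (Δ ^ (1 / 4 : ℝ) * N ^ (7 / 8 : ℝ) + N ^ (1 / 2 : ℝ)) * N ^ ε

lemma blockWeight_pos {Δ N : ℝ} (ε : ℝ) (hΔ : 0 < Δ) (hN : 0 < N) : 0 < blockWeight ε Δ N := by
  unfold blockWeight
  positivity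

lemma add_le_blockWeight_pow_four {ε Δ N : ℝ} (hε : 0 ≤ ε) (hΔ : 0 < Δ) (hN : 1 ≤ N) :
    Δ * N ^ (7 / 2 : ℝ) + N ^ (2 + 4 * ε) ≤ blockWeight ε Δ N ^ 4 := by
  have hN0 : 0 < N := by linarith
  have hpow {x : ℝ} (hx : 0 < x) (p : ℝ) : (x ^ p) ^ 4 = x ^ (4 * p) := by
    rw [← rpow_mul_natCast hx.le, mul_comm]
    norm_num
  calc Δ * N ^ (7 / 2 : ℝ) + N ^ (2 + 4 * ε)
      ≤ Δ * N ^ (7 / 2 : ℝ) * N ^ (4 * ε) + N ^ (2 : ℝ) * N ^ (4 * ε) := by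
        rw [rpow_add hN0]
        exact add_le_add (le_mul_of_one_le_right (by positivity)
          (one_le_rpow hN (by positivity))) le_rfl
    _ = ((Δ ^ (1 / 4 : ℝ) * N ^ (7 / 8 : ℝ)) ^ 4 + (N ^ (1 / 2 : ℝ)) ^ 4) * (N ^ ε) ^ 4 := by
        rw [mul_pow, hpow hΔ, hpow hN0, hpow hN0, hpow hN0]
        norm_num [add_mul]
    _ ≤ _ := by
        rw [blockWeight, mul_pow (_ + _)]
        gcongr
        exact pow_add_pow_le (by positivity) (by positivity) four_ne_zero

lemma HasMomentBound.exists_integral_dyadicBlock_le {κ ε : ℝ}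
    (h : HasMomentBound sqrtSeries 7 (4 + 2 * κ)) (hε : 0 ≤ ε) (hκ : κ ≤ 4 * ε) :
    ∃ C > 0, ∀ Δ > 0, ∀ T, √(8 * π) * Δ * T = 1 → ∀ N, 1 ≤ N →
      ∫ t in (-T)..T, ‖expSeries (fun _ : dyadicBlock N => 1) (fun n => √(8 * π * n)) t‖ ^ 4
        ≤ C * T * blockWeight ε Δ N ^ 4 := by
  obtain ⟨C, hC, hle⟩ := h.exists_integral_expSeries_sqrt_le
  refine ⟨C * (2 ^ (7 / 2 : ℝ) * √(8 * π) + 2 ^ (2 + κ)), by positivity,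
    fun Δ hΔ T hTΔ N hN => ?_⟩
  have hN0 : 0 < N := by linarith
  have hT : 0 < T := pos_of_mul_pos_right (hTΔ ▸ one_pos) (by positivity)
  have hpow : N ^ (2 + κ) ≤ N ^ (2 + 4 * ε) := rpow_le_rpow_of_exponent_le hN (by linarith)
  calc _ ≤ C * ((2 * N) ^ (7 / 2 : ℝ) + T * (2 * N) ^ (2 + κ)) :=
        hle (2 * N) (by positivity) T hT _ fun n hn => by
          have hn := (mem_dyadicBlock hN0.le).1 hn
          exact ⟨Nat.cast_pos.1 (hN0.trans hn.1), hn.2⟩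
    _ = C * T * (2 ^ (7 / 2 : ℝ) * √(8 * π) * (Δ * N ^ (7 / 2 : ℝ))
          + 2 ^ (2 + κ) * N ^ (2 + κ)) := by
        rw [mul_rpow two_pos.le hN0.le, mul_rpow two_pos.le hN0.le]
        linear_combination (-C * 2 ^ (7 / 2 : ℝ) * N ^ (7 / 2 : ℝ)) * hTΔ
    _ ≤ C * T * ((2 ^ (7 / 2 : ℝ) * √(8 * π) + 2 ^ (2 + κ))
          * (Δ * N ^ (7 / 2 : ℝ) + N ^ (2 + 4 * ε))) := by
        rw [add_mul (2 ^ (7 / 2 : ℝ) * √(8 * π))]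
        gcongr
        · exact le_add_of_nonneg_right (by positivity)
        · exact hpow.trans (le_add_of_nonneg_left (by positivity))
    _ ≤ C * T * ((2 ^ (7 / 2 : ℝ) * √(8 * π) + 2 ^ (2 + κ)) * blockWeight ε Δ N ^ 4) := by
        gcongr
        exact add_le_blockWeight_pow_four hε hΔ hN
    _ = _ := by ring

lemma norm_expSeries_sign_mul {ι : Type*} {e : ℝ} (he : e = 1 ∨ e = -1) (l : ι → ℝ) (t : ℝ) :
    ‖expSeries (fun _ => 1) (fun i => e * l i) t‖ = ‖expSeries (fun _ => 1) l t‖ := by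
  obtain rfl | rfl := he
  · simp only [one_mul]
  · rw [← Complex.norm_conj, conj_expSeries]
    simp only [map_one, neg_one_mul, neg_neg]

/-- The quadruples counted by `Apm`, together with the exact solutions of
`√n₁ + √n₂ + e √n₃ = √n₄`. -/
def closeQuadruples (e N₁ N₂ N₃ N₄ Δ : ℝ) : Finset (ℕ × ℕ × ℕ × ℕ) :=
  {q ∈ dyadicBlock N₁ ×ˢ dyadicBlock N₂ ×ˢ dyadicBlock N₃ ×ˢ dyadicBlock N₄ |
    |√q.1 + √q.2.1 + e * √q.2.2.1 - √q.2.2.2| < Δ}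

lemma ncard_Apm_le_card_closeQuadruples {N₁ N₂ N₃ N₄ : ℝ} (hN₁ : 0 ≤ N₁) (hN₂ : 0 ≤ N₂)
    (hN₃ : 0 ≤ N₃) (hN₄ : 0 ≤ N₄) (e Δ : ℝ) :
    (Apm e N₁ N₂ N₃ N₄ Δ).ncard ≤ #(closeQuadruples e N₁ N₂ N₃ N₄ Δ) := by
  rw [← Set.ncard_coe_finset]
  refine Set.ncard_le_ncard ?_ (finite_toSet _)
  rintro q ⟨h₁, h₁', h₂, h₂', h₃, h₃', h₄, h₄', -, hΔ⟩
  simp only [closeQuadruples, coe_filter, mem_product, mem_dyadicBlock, hN₁, hN₂, hN₃, hN₄]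
  exact ⟨⟨⟨h₁, h₁'⟩, ⟨h₂, h₂'⟩, ⟨h₃, h₃'⟩, h₄, h₄'⟩, hΔ⟩

lemma card_closeQuadruples_le (e N₁ N₂ N₃ N₄ : ℝ) {Δ T : ℝ} (hΔ : 0 < Δ)
    (hT : √(8 * π) * Δ * T = 1) :
    #(closeQuadruples e N₁ N₂ N₃ N₄ Δ)
      ≤ #{q : dyadicBlock N₁ × dyadicBlock N₂ × dyadicBlock N₃ × dyadicBlock N₄ |
          |√(8 * π * q.1) + (√(8 * π * q.2.1) + (e * √(8 * π * q.2.2.1)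
            + -1 * √(8 * π * q.2.2.2)))| * T ≤ 1} := by
  have hT0 : 0 < T := pos_of_mul_pos_right (hT ▸ one_pos) (by positivity)
  refine card_le_card_of_surjOn (fun q => (q.1, q.2.1, q.2.2.1, q.2.2.2)) ?_
  rintro ⟨n₁, n₂, n₃, n₄⟩ hn
  simp only [closeQuadruples, coe_filter, mem_product] at hn
  obtain ⟨⟨h₁, h₂, h₃, h₄⟩, hlt⟩ := hn
  refine ⟨(⟨n₁, h₁⟩, ⟨n₂, h₂⟩, ⟨n₃, h₃⟩, ⟨n₄, h₄⟩), ?_, rfl⟩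
  have hscale : √(8 * π * n₁) + (√(8 * π * n₂) + (e * √(8 * π * n₃) + -1 * √(8 * π * n₄)))
      = √(8 * π) * (√n₁ + √n₂ + e * √n₃ - √n₄) := by
    simp only [sqrt_mul (show 0 ≤ 8 * π by positivity)]
    ring
  simp only [coe_filter, mem_univ, true_and]
  change _ ≤ (1 : ℝ)
  rw [hscale, abs_mul, abs_of_nonneg (sqrt_nonneg _), ← hT]
  gcongr

theorem Apm_count_bound_general {ε : ℝ} (hε : 0 < ε) :
    ∃ C > 0, ∀ e N₁ N₂ N₃ N₄ Δ : ℝ, (e = 1 ∨ e = -1) →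
      1 ≤ N₁ → 1 ≤ N₂ → 1 ≤ N₃ → 1 ≤ N₄ → 0 < Δ →
      #(closeQuadruples e N₁ N₂ N₃ N₄ Δ)
        ≤ C * blockWeight ε Δ N₁ * blockWeight ε Δ N₂ * blockWeight ε Δ N₃
          * blockWeight ε Δ N₄ := by
  obtain ⟨κ, -, hκ, hmoment⟩ := exists_hasMomentBound_sqrtSeries (ε := 4 * ε) (by positivity)
  obtain ⟨C, hC, hblock⟩ := hmoment.exists_integral_dyadicBlock_le hε.le hκ
  refine ⟨2 * C, by positivity, fun e N₁ N₂ N₃ N₄ Δ he hN₁ hN₂ hN₃ hN₄ hΔ => ?_⟩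
  obtain ⟨T, hT, hTΔ⟩ : ∃ T > 0, √(8 * π) * Δ * T = 1 :=
    ⟨(√(8 * π) * Δ)⁻¹, by positivity, mul_inv_cancel₀ (by positivity)⟩
  have hsign {s : ℝ} (hs : s = 1 ∨ s = -1) {N : ℝ} (hN : 1 ≤ N) :
      ∫ t in (-T)..T, ‖expSeries (fun _ : dyadicBlock N => 1) (fun n => s * √(8 * π * n)) t‖ ^ 4
        ≤ C * T * blockWeight ε Δ N ^ 4 := by
    simpa only [norm_expSeries_sign_mul hs] using hblock Δ hΔ T hTΔ N hN
  have hweight {N : ℝ} (hN : 1 ≤ N) : 0 < blockWeight ε Δ N :=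
    blockWeight_pos ε hΔ (by linarith)
  have hcount := half_mul_card_four_le hT (hweight hN₁) (hweight hN₂) (hweight hN₃) (hweight hN₄)
    (hblock Δ hΔ T hTΔ N₁ hN₁) (hblock Δ hΔ T hTΔ N₂ hN₂) (hsign he hN₃) (hsign (.inr rfl) hN₄)
  refine (Nat.cast_le.2 (card_closeQuadruples_le e N₁ N₂ N₃ N₄ hΔ hTΔ)).trans ?_
  refine le_of_mul_le_mul_left (hcount.trans_eq ?_) (half_pos hT)
  ring

end Counting

theorem Apm_count_bound (ε : ℝ) (hε : 0 < ε) :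
    ∃ C : ℝ, 0 < C ∧ ∀ (e N₁ N₂ N₃ N₄ Δ : ℝ), (e = 1 ∨ e = -1) →
      2 ≤ N₁ → 2 ≤ N₂ → 2 ≤ N₃ → 2 ≤ N₄ → 0 < Δ →
      ((Apm e N₁ N₂ N₃ N₄ Δ).ncard : ℝ)
        ≤ C * ((Δ ^ ((1:ℝ)/4) * N₁ ^ ((7:ℝ)/8) + N₁ ^ ((1:ℝ)/2)) * N₁ ^ ε)
            * ((Δ ^ ((1:ℝ)/4) * N₂ ^ ((7:ℝ)/8) + N₂ ^ ((1:ℝ)/2)) * N₂ ^ ε)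
            * ((Δ ^ ((1:ℝ)/4) * N₃ ^ ((7:ℝ)/8) + N₃ ^ ((1:ℝ)/2)) * N₃ ^ ε)
            * ((Δ ^ ((1:ℝ)/4) * N₄ ^ ((7:ℝ)/8) + N₄ ^ ((1:ℝ)/2)) * N₄ ^ ε) := by
  obtain ⟨C, hC, hle⟩ := Apm_count_bound_general hε
  exact ⟨C, hC, fun e N₁ N₂ N₃ N₄ Δ he hN₁ hN₂ hN₃ hN₄ hΔ =>
    (Nat.cast_le.2 (ncard_Apm_le_card_closeQuadruples (by linarith) (by linarith) (by linarith)
      (by linarith) e Δ)).trans (hle e N₁ N₂ N₃ N₄ Δ he (by linarith) (by linarith) (by linarith)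
      (by linarith) hΔ)⟩
end
end

section
/- Let M₁, M₂ be positive integers and ℓ₁, ℓ₂ integers with 1 ≤ ℓ₁ ≤ M₁, 1 ≤ ℓ₂ ≤ M₂. There is a constant C (depending at most on M₁, M₂) such that for all real x ≥ 1, |Δ(M₁M₂x; ℓ₁,M₁,ℓ₂,M₂) + Σ_{n₁ ≤ √(M₁M₂x), n₁ ≡ ℓ₁ (mod M₁)} ψ̃(M₁x/n₁ − ℓ₂/M₂) + Σ_{n₂ ≤ √(M₁M₂x), n₂ ≡ ℓ₂ (mod M₂)} ψ̃(M₂x/n₂ − ℓ₁/M₁)| ≤ C. -/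
open Real MeasureTheory Finset
open scoped Classical

noncomputable section

/-- The divisor function with congruence conditions: the number of factorizations
`n = n₁ n₂` with `n₁ ≡ ℓ₁ (mod M₁)` and `n₂ ≡ ℓ₂ (mod M₂)`. -/
def dCong (M₁ M₂ ℓ₁ ℓ₂ n : ℕ) : ℕ :=
  ((Nat.divisorsAntidiagonal n).filter
    (fun p => p.1 % M₁ = ℓ₁ % M₁ ∧ p.2 % M₂ = ℓ₂ % M₂)).card

/-- The digamma function `ψ₀ = Γ′/Γ`. -/
def digamma (x : ℝ) : ℝ := deriv Real.Gamma x / Real.Gamma x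

/-- The error term `Δ(M₁M₂x; ℓ₁,M₁,ℓ₂,M₂)`. -/
def Δerr (M₁ M₂ ℓ₁ ℓ₂ : ℕ) (x : ℝ) : ℝ :=
  (∑ n ∈ Finset.Icc 1 ⌊(M₁ * M₂ : ℕ) * x⌋₊, (dCong M₁ M₂ ℓ₁ ℓ₂ n : ℝ))
    - x * (Real.log x - 1 - digamma ((ℓ₁ : ℝ) / M₁) - digamma ((ℓ₂ : ℝ) / M₂))
    - (1/2 - (ℓ₁ : ℝ) / M₁) * (1/2 - (ℓ₂ : ℝ) / M₂)

/-!
Dirichlet's hyperbola method at height `√X`, `X = M₁M₂x`, writes the counting function as two sums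
over `n ≤ √X` in a residue class minus a product of two counts. Each inner count is exactly
`y / M + (1/2 - ℓ / M) - ψ̃(y / M - ℓ / M)`, so the two sums of `ψ̃` in the theorem appear at once,
next to harmonic sums over the residue classes. Those telescope into digamma values, and
`ψ₀(T + h) = log T + (h - 1/2) / T + O(1 / T²)` uniformly for `0 ≤ h ≤ 1`. The terms of order `√x`
that this produces cancel against the product of the two counts.
-/

section LogBounds

theorem sub_sq_div_two_le_log_one_add {u : ℝ} (hu : 0 ≤ u) : u - u ^ 2 / 2 ≤ log (1 + u) := by
  refine le_trans ?_ (le_log_one_add_of_nonneg hu)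
  rw [le_div_iff₀ (by positivity)]
  nlinarith [pow_nonneg hu 3]

theorem log_one_add_le {u : ℝ} (hu : -1 < u) : log (1 + u) ≤ u := by
  linarith [log_le_sub_one_of_pos (show 0 < 1 + u by linarith)]

variable {y : ℝ}

theorem log_add_eq_log_add_log_one_add_div (hy : 0 < y) {h : ℝ} (hh : 0 ≤ h) :
    log (y + h) = log y + log (1 + h / y) := by
  rw [← log_mul hy.ne' (by positivity), mul_one_add, mul_div_cancel₀ h hy.ne']

theorem log_add_one_sub_log_le_trapezoid (hy : 0 < y) :
    log (y + 1) - log y ≤ (1 / y + 1 / (y + 1)) / 2 := by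
  have hsinh := self_le_sinh_iff.2 (log_nonneg (show 1 ≤ 1 + 1 / y by simp [hy.le]))
  rw [sinh_log (by positivity)] at hsinh
  calc log (y + 1) - log y = log (1 + 1 / y) := by
        rw [log_add_eq_log_add_log_one_add_div hy zero_le_one, add_sub_cancel_left]
    _ ≤ (1 + 1 / y - (1 + 1 / y)⁻¹) / 2 := hsinh
    _ = (1 / y + 1 / (y + 1)) / 2 := by field_simp; ring

theorem midpoint_le_log_add_one_sub_log (hy : 0 < y) :
    1 / (y + 1 / 2) ≤ log (y + 1) - log y := by
  calc 1 / (y + 1 / 2) = 2 * (1 / y) / (1 / y + 2) := by field_simp; ring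
    _ ≤ log (1 + 1 / y) := le_log_one_add_of_nonneg (by positivity)
    _ = log (y + 1) - log y := by
        rw [log_add_eq_log_add_log_one_add_div hy zero_le_one, add_sub_cancel_left]

end LogBounds

section Digamma

theorem nonpos_of_forall_le_add_one {f : ℝ → ℝ} (hstep : ∀ y, 0 < y → f y ≤ f (y + 1))
    (hlim : Filter.Tendsto f Filter.atTop (nhds 0)) {y : ℝ} (hy : 0 < y) : f y ≤ 0 := by
  have hmono : Monotone fun n : ℕ ↦ f (y + n) := monotone_nat_of_le_succ fun n ↦ by
    simpa only [Nat.cast_add_one, add_assoc] using hstep (y + n) (by positivity)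
  have hlim' : Filter.Tendsto (fun n : ℕ ↦ f (y + n)) Filter.atTop (nhds 0) :=
    hlim.comp (Filter.tendsto_atTop_add_const_left _ y tendsto_natCast_atTop_atTop)
  simpa using hmono.ge_of_tendsto hlim' 0

variable {y : ℝ}

theorem hasDerivAt_log_Gamma (hy : 0 < y) : HasDerivAt (log ∘ Gamma) (digamma y) y := by
  have hdiff : DifferentiableAt ℝ Gamma y :=
    differentiableAt_Gamma fun m ↦ by linarith [m.cast_nonneg (α := ℝ)]
  exact hdiff.hasDerivAt.log (Gamma_pos_of_pos hy).ne'

theorem log_Gamma_add_one (hy : 0 < y) : log (Gamma (y + 1)) = log y + log (Gamma y) := by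
  rw [Gamma_add_one hy.ne', log_mul hy.ne' (Gamma_pos_of_pos hy).ne']

theorem digamma_add_one (hy : 0 < y) : digamma (y + 1) = digamma y + 1 / y := by
  have hshift : HasDerivAt (fun t ↦ log (Gamma (t + 1))) (digamma (y + 1)) y :=
    (hasDerivAt_log_Gamma (by positivity)).comp_add_const y 1
  have hsum : HasDerivAt (fun t ↦ log t + log (Gamma t)) (y⁻¹ + digamma y) y :=
    (hasDerivAt_log hy.ne').add (hasDerivAt_log_Gamma hy)
  have heq : (fun t ↦ log (Gamma (t + 1))) =ᶠ[nhds y] fun t ↦ log t + log (Gamma t) := by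
    filter_upwards [lt_mem_nhds hy] with t ht using log_Gamma_add_one ht
  rw [hshift.unique (hsum.congr_of_eventuallyEq heq), one_div, add_comm]

theorem slope_log_Gamma_add_one (hy : 0 < y) : slope (log ∘ Gamma) y (y + 1) = log y := by
  simp [slope_def_field, log_Gamma_add_one hy]

theorem digamma_le_log (hy : 0 < y) : digamma y ≤ log y := by
  rw [← slope_log_Gamma_add_one hy]
  exact convexOn_log_Gamma.le_slope_of_hasDerivAt hy (Set.mem_Ioi.2 (by positivity))
    (lt_add_one y) (hasDerivAt_log_Gamma hy)

theorem log_le_digamma_add_one (hy : 0 < y) : log y ≤ digamma (y + 1) := by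
  rw [← slope_log_Gamma_add_one hy]
  exact convexOn_log_Gamma.slope_le_of_hasDerivAt hy (Set.mem_Ioi.2 (by positivity))
    (lt_add_one y) (hasDerivAt_log_Gamma (by positivity))

theorem tendsto_digamma_sub_log_atTop :
    Filter.Tendsto (fun y ↦ digamma y - log y) Filter.atTop (nhds 0) := by
  have hlower : Filter.Tendsto (fun y : ℝ ↦ -y⁻¹) Filter.atTop (nhds 0) := by
    simpa only [neg_zero] using (tendsto_inv_atTop_zero (𝕜 := ℝ)).neg
  refine tendsto_of_tendsto_of_tendsto_of_le_of_le' hlower tendsto_const_nhds ?_ ?_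
  · filter_upwards [Filter.eventually_gt_atTop 0] with y hy
    rw [inv_eq_one_div]
    linarith [log_le_digamma_add_one hy, digamma_add_one hy]
  · filter_upwards [Filter.eventually_gt_atTop 0] with y hy
    exact sub_nonpos.2 (digamma_le_log hy)

theorem digamma_le_log_sub_one_div (hy : 0 < y) : digamma y ≤ log y - 1 / (2 * y) := by
  have hlim : Filter.Tendsto (fun t ↦ digamma t - log t + t⁻¹ / 2) Filter.atTop (nhds 0) := by
    simpa using tendsto_digamma_sub_log_atTop.add (tendsto_inv_atTop_zero.div_const 2)
  have hnonpos := nonpos_of_forall_le_add_one (fun t ht ↦ ?_) hlim hy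
  · rw [one_div, mul_inv_rev, ← div_eq_mul_inv]
    linarith
  · have htrap := log_add_one_sub_log_le_trapezoid ht
    simp only [digamma_add_one ht, ← one_div]
    linarith

theorem log_sub_one_div_sub_one_div_sq_le_digamma (hy : 0 < y) :
    log y - 1 / (2 * y) - 1 / (2 * y ^ 2) ≤ digamma y := by
  have hlim : Filter.Tendsto (fun t ↦ -(digamma t - log t + t⁻¹ / 2 + t⁻¹ ^ 2 / 2))
      Filter.atTop (nhds 0) := by
    simpa using ((tendsto_digamma_sub_log_atTop.add (tendsto_inv_atTop_zero.div_const 2)).add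
      ((tendsto_inv_atTop_zero.pow 2).div_const 2)).neg
  have hnonpos := nonpos_of_forall_le_add_one (fun t ht ↦ ?_) hlim hy
  · have hhalf : 1 / (2 * y) = y⁻¹ / 2 := by field_simp
    have hsq : 1 / (2 * y ^ 2) = y⁻¹ ^ 2 / 2 := by field_simp
    linarith
  · have hmid := midpoint_le_log_add_one_sub_log ht
    have hquad : (1 / t + 1 / (t + 1)) / 2 - 1 / (t + 1 / 2)
        ≤ (1 / t) ^ 2 / 2 - (1 / (t + 1)) ^ 2 / 2 := by
      rw [← sub_nonneg]
      have hdiff : (1 / t) ^ 2 / 2 - (1 / (t + 1)) ^ 2 / 2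
          - ((1 / t + 1 / (t + 1)) / 2 - 1 / (t + 1 / 2))
          = (3 * t ^ 2 + 3 * t + 1) / (2 * t ^ 2 * (t + 1) ^ 2 * (2 * t + 1)) := by
        field_simp
        ring
      rw [hdiff]
      positivity
    simp only [digamma_add_one ht, ← one_div]
    linarith

theorem abs_digamma_add_sub_le {T h : ℝ} (hT : 0 < T) (h0 : 0 ≤ h) (h1 : h ≤ 1) :
    |digamma (T + h) - (log T + (h - 1 / 2) / T)| ≤ 1 / T ^ 2 := by
  have hpos : 0 < T + h := by positivity
  have hquot : 0 ≤ h / T := by positivity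
  have hlog := log_add_eq_log_add_log_one_add_div hT h0
  have hlog_le := log_one_add_le (neg_one_lt_zero.trans_le hquot)
  have hle_log := sub_sq_div_two_le_log_one_add hquot
  have hsq : (h / T) ^ 2 / 2 ≤ 1 / T ^ 2 / 2 := by
    rw [div_pow]
    gcongr
    exact pow_le_one₀ h0 h1
  have hinv_le : 1 / (2 * (T + h)) ≤ 1 / (2 * T) := by gcongr; linarith
  have hle_inv : 1 / (2 * T) - 1 / T ^ 2 / 2 ≤ 1 / (2 * (T + h)) := by
    rw [← sub_nonneg]
    have hdiff : 1 / (2 * (T + h)) - (1 / (2 * T) - 1 / T ^ 2 / 2)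
        = (T * (1 - h) + h) / (2 * T ^ 2 * (T + h)) := by
      field_simp
      ring
    rw [hdiff]
    have : 0 ≤ 1 - h := sub_nonneg.2 h1
    positivity
  have hinv_sq : 1 / (2 * (T + h) ^ 2) ≤ 1 / T ^ 2 / 2 := by
    rw [div_div, mul_comm _ (2 : ℝ)]
    gcongr
    linarith
  have hmain : (h - 1 / 2) / T = h / T - 1 / (2 * T) := by field_simp
  rw [hmain, abs_le]
  constructor <;> linarith [digamma_le_log_sub_one_div hpos,
    log_sub_one_div_sub_one_div_sq_le_digamma hpos, show 0 ≤ 1 / T ^ 2 by positivity]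

theorem sum_range_one_div_add {a : ℝ} (ha : 0 < a) (m : ℕ) :
    ∑ j ∈ range m, 1 / (j + a) = digamma (m + a) - digamma a := by
  induction m with
  | zero => simp
  | succ m ih =>
    rw [sum_range_succ, ih, Nat.cast_add_one, add_right_comm, digamma_add_one (by positivity)]
    ring

end Digamma

section Hyperbola

theorem mul_self_floor_sqrt_le {X : ℝ} (hX : 0 ≤ X) : ⌊√X⌋₊ * ⌊√X⌋₊ ≤ ⌊X⌋₊ := by
  rw [Nat.le_floor_iff hX, Nat.cast_mul, ← sq]
  exact (Real.le_sqrt (Nat.cast_nonneg _) hX).1 (Nat.floor_le (sqrt_nonneg X))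

theorem floor_lt_mul_self_floor_sqrt_add_one {X : ℝ} (hX : 0 ≤ X) :
    ⌊X⌋₊ < (⌊√X⌋₊ + 1) * (⌊√X⌋₊ + 1) := by
  rw [Nat.floor_lt hX, ← sq, Nat.cast_pow, ← sqrt_lt' (by positivity), Nat.cast_add_one]
  exact Nat.lt_floor_add_one _

theorem hyperbola_method {R : Type*} [Semiring R] (f g : ArithmeticFunction R) {N A B : ℕ}
    (hAB : A * B ≤ N) (hN : N < (A + 1) * (B + 1)) :
    ∑ n ∈ Ioc 0 N, (f * g) n + (∑ a ∈ Ioc 0 A, f a) * ∑ b ∈ Ioc 0 B, g b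
      = ∑ a ∈ Ioc 0 A, f a * ∑ b ∈ Ioc 0 (N / a), g b
        + ∑ b ∈ Ioc 0 B, (∑ a ∈ Ioc 0 (N / b), f a) * g b := by
  set P := {p ∈ Ioc 0 N ×ˢ Ioc 0 N | p.1 * p.2 ≤ N}
  have mem_P (p : ℕ × ℕ) : p ∈ P ↔ 0 < p.1 ∧ 0 < p.2 ∧ p.1 * p.2 ≤ N := by
    simp only [P, mem_filter, mem_product, mem_Ioc]
    refine ⟨fun h ↦ ⟨h.1.1.1, h.1.2.1, h.2⟩, fun ⟨h1, h2, h⟩ ↦ ⟨⟨⟨h1, ?_⟩, h2, ?_⟩, h⟩⟩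
    · exact (Nat.le_mul_of_pos_right _ h2).trans h
    · exact (Nat.le_mul_of_pos_left _ h1).trans h
  have hunion : {p ∈ P | p.1 ≤ A} ∪ {p ∈ P | p.2 ≤ B} = P := by
    rw [← filter_or, filter_eq_self]
    intro p hp
    by_contra! h
    exact ((mem_P p).1 hp).2.2.not_gt (hN.trans_le (Nat.mul_le_mul h.1 h.2))
  have hinter : {p ∈ P | p.1 ≤ A} ∩ {p ∈ P | p.2 ≤ B} = Ioc 0 A ×ˢ Ioc 0 B := by
    ext p
    simp only [mem_inter, mem_filter, mem_P, mem_product, mem_Ioc]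
    have hmul (h1 : p.1 ≤ A) (h2 : p.2 ≤ B) : p.1 * p.2 ≤ N := (Nat.mul_le_mul h1 h2).trans hAB
    tauto
  have hleft : ∑ p ∈ P with p.1 ≤ A, f p.1 * g p.2
      = ∑ a ∈ Ioc 0 A, ∑ b ∈ Ioc 0 (N / a), f a * g b :=
    sum_finset_product _ _ _ fun p ↦ by
      simp only [mem_filter, mem_P, mem_Ioc]
      have hdiv (h : 0 < p.1) : p.2 ≤ N / p.1 ↔ p.1 * p.2 ≤ N := by
        rw [Nat.le_div_iff_mul_le h, mul_comm]
      tauto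
  have hright : ∑ p ∈ P with p.2 ≤ B, f p.1 * g p.2
      = ∑ b ∈ Ioc 0 B, ∑ a ∈ Ioc 0 (N / b), f a * g b :=
    sum_finset_product_right _ _ _ fun p ↦ by
      simp only [mem_filter, mem_P, mem_Ioc]
      have hdiv (h : 0 < p.2) : p.1 ≤ N / p.2 ↔ p.1 * p.2 ≤ N := Nat.le_div_iff_mul_le h
      tauto
  simp only [mul_sum, sum_mul, ← hleft, ← hright]
  rw [ArithmeticFunction.sum_Ioc_mul_eq_sum_prod_filter, ← sum_union_inter, hunion, hinter,
    sum_product_right]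

end Hyperbola

section ResidueClass

/-- The sawtooth function `ψ̃(t) = t - ⌊t⌋ - 1/2`. -/
def sawtooth (t : ℝ) : ℝ := Int.fract t - 1 / 2

theorem abs_sawtooth_le (t : ℝ) : |sawtooth t| ≤ 1 / 2 := by
  rw [sawtooth, abs_le]
  constructor <;> linarith [Int.fract_nonneg t, Int.fract_lt_one t]

/-- The positive integers `n ≤ y` with `n ≡ ℓ (mod M)`, the range of summation throughout. -/
def residuesUpTo (M ℓ : ℕ) (y : ℝ) : Finset ℕ := {n ∈ Icc 1 ⌊y⌋₊ | n % M = ℓ % M}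

/-- The indicator function of the residue class `ℓ (mod M)` as an arithmetic function, so that
`dCong` becomes a Dirichlet convolution. Its value at `0` is forced to be `0`. -/
def residueIndicator (M ℓ : ℕ) : ArithmeticFunction ℝ where
  toFun n := if n ≠ 0 ∧ n % M = ℓ % M then 1 else 0
  map_zero' := by simp

theorem sum_Ioc_residueIndicator_mul (M ℓ : ℕ) (y : ℝ) (F : ℕ → ℝ) :
    ∑ n ∈ Ioc 0 ⌊y⌋₊, residueIndicator M ℓ n * F n = ∑ n ∈ residuesUpTo M ℓ y, F n := by
  rw [residuesUpTo, sum_filter]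
  refine sum_congr rfl fun n hn ↦ ?_
  simp [residueIndicator, (mem_Ioc.1 hn).1.ne']

theorem sum_Ioc_residueIndicator (M ℓ : ℕ) (y : ℝ) :
    ∑ n ∈ Ioc 0 ⌊y⌋₊, residueIndicator M ℓ n = #(residuesUpTo M ℓ y) := by
  simpa using sum_Ioc_residueIndicator_mul M ℓ y 1

theorem dCong_eq_residueIndicator_mul (M₁ M₂ ℓ₁ ℓ₂ n : ℕ) :
    (dCong M₁ M₂ ℓ₁ ℓ₂ n : ℝ) = (residueIndicator M₁ ℓ₁ * residueIndicator M₂ ℓ₂) n := by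
  rw [dCong, ArithmeticFunction.mul_apply, card_filter, Nat.cast_sum]
  refine sum_congr rfl fun p hp ↦ ?_
  have hp0 := Nat.ne_zero_of_mem_divisorsAntidiagonal hp
  simp [residueIndicator, hp0, ← ite_and, and_comm]

theorem sum_dCong_add_card_mul_card (M₁ M₂ ℓ₁ ℓ₂ : ℕ) {X : ℝ} (hX : 0 ≤ X) :
    ∑ n ∈ Icc 1 ⌊X⌋₊, (dCong M₁ M₂ ℓ₁ ℓ₂ n : ℝ)
        + #(residuesUpTo M₁ ℓ₁ √X) * #(residuesUpTo M₂ ℓ₂ √X)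
      = ∑ n ∈ residuesUpTo M₁ ℓ₁ √X, (#(residuesUpTo M₂ ℓ₂ (X / n)) : ℝ)
        + ∑ n ∈ residuesUpTo M₂ ℓ₂ √X, (#(residuesUpTo M₁ ℓ₁ (X / n)) : ℝ) := by
  have hyp := hyperbola_method (residueIndicator M₁ ℓ₁) (residueIndicator M₂ ℓ₂)
    (mul_self_floor_sqrt_le hX) (floor_lt_mul_self_floor_sqrt_add_one hX)
  simp only [← Nat.floor_div_natCast, sum_Ioc_residueIndicator, sum_Ioc_residueIndicator_mul,
    mul_comm (#_ : ℝ) (residueIndicator M₂ ℓ₂ _), ← dCong_eq_residueIndicator_mul] at hyp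
  exact hyp

theorem exists_eq_add_mul_iff {M ℓ : ℕ} (hℓM : ℓ ≤ M) {n : ℕ} (hn : 1 ≤ n) :
    (∃ j, ℓ + M * j = n) ↔ n % M = ℓ % M := by
  constructor
  · rintro ⟨j, rfl⟩
    exact Nat.add_mul_mod_self_left ℓ M j
  · intro h
    have hmod : ℓ ≡ n [MOD M] := h.symm
    have hle : ℓ ≤ n := hmod.le_of_lt_add (by omega)
    obtain ⟨j, hj⟩ := (Nat.modEq_iff_dvd' hle).1 hmod
    exact ⟨j, by omega⟩

variable {M ℓ : ℕ}

theorem residuesUpTo_eq_image (hℓ : 1 ≤ ℓ) (hℓM : ℓ ≤ M) (y : ℝ) :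
    residuesUpTo M ℓ y = (range ⌊y / M - ℓ / M + 1⌋₊).image (ℓ + M * ·) := by
  have hM : (0 : ℝ) < M := by exact_mod_cast hℓ.trans hℓM
  have lt_floor_iff (j : ℕ) : j < ⌊y / M - ℓ / M + 1⌋₊ ↔ ℓ + M * j ≤ ⌊y⌋₊ := by
    rw [← Nat.add_one_le_iff, Nat.le_floor_iff' (by omega), Nat.le_floor_iff' (by omega),
      ← sub_div, Nat.cast_add_one, add_le_add_iff_right, le_div_iff₀ hM, le_sub_iff_add_le']
    push_cast
    rw [mul_comm]
  ext n
  simp only [residuesUpTo, mem_filter, mem_Icc, mem_image, mem_range, lt_floor_iff]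
  constructor
  · rintro ⟨⟨hn, hny⟩, hmod⟩
    obtain ⟨j, rfl⟩ := (exists_eq_add_mul_iff hℓM hn).2 hmod
    exact ⟨j, hny, rfl⟩
  · rintro ⟨j, hj, rfl⟩
    exact ⟨⟨by omega, hj⟩, (exists_eq_add_mul_iff hℓM (by omega)).1 ⟨j, rfl⟩⟩

theorem sum_residuesUpTo {R : Type*} [AddCommMonoid R] (hℓ : 1 ≤ ℓ) (hℓM : ℓ ≤ M) (y : ℝ)
    (F : ℕ → R) :
    ∑ n ∈ residuesUpTo M ℓ y, F n = ∑ j ∈ range ⌊y / M - ℓ / M + 1⌋₊, F (ℓ + M * j) := by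
  rw [residuesUpTo_eq_image hℓ hℓM, sum_image]
  intro i _ j _ h
  exact Nat.eq_of_mul_eq_mul_left (hℓ.trans hℓM) (Nat.add_left_cancel h)

theorem natFloor_add_one_eq_sub_sawtooth {t : ℝ} (ht : -1 ≤ t) :
    (⌊t + 1⌋₊ : ℝ) = t + 1 / 2 - sawtooth t := by
  rw [natCast_floor_eq_intCast_floor (by linarith), Int.floor_add_one, Int.cast_add,
    ← Int.self_sub_fract, sawtooth]
  push_cast
  ring

theorem neg_one_le_div_sub_div (hℓM : ℓ ≤ M) {y : ℝ} (hy : 0 ≤ y) : -1 ≤ y / M - (ℓ : ℝ) / M := by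
  have hℓM' : (ℓ : ℝ) / M ≤ 1 := div_le_one_of_le₀ (by exact_mod_cast hℓM) M.cast_nonneg
  linarith [show 0 ≤ y / M by positivity]

theorem card_residuesUpTo (hℓ : 1 ≤ ℓ) (hℓM : ℓ ≤ M) {y : ℝ} (hy : 0 ≤ y) :
    (#(residuesUpTo M ℓ y) : ℝ)
      = y / M + (1 / 2 - (ℓ : ℝ) / M) - sawtooth (y / M - (ℓ : ℝ) / M) := by
  rw [card_eq_sum_ones, sum_residuesUpTo hℓ hℓM, ← card_eq_sum_ones, card_range,
    natFloor_add_one_eq_sub_sawtooth (neg_one_le_div_sub_div hℓM hy)]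
  ring

theorem sum_card_residuesUpTo_div (hℓ : 1 ≤ ℓ) (hℓM : ℓ ≤ M) {X : ℝ} (hX : 0 ≤ X)
    (s : Finset ℕ) :
    ∑ n ∈ s, (#(residuesUpTo M ℓ (X / n)) : ℝ)
      = ∑ n ∈ s, X / M / n + #s * (1 / 2 - (ℓ : ℝ) / M)
        - ∑ n ∈ s, sawtooth (X / M / n - (ℓ : ℝ) / M) := by
  rw [← nsmul_eq_mul, ← sum_const, ← sum_add_distrib, ← sum_sub_distrib]
  refine sum_congr rfl fun n _ ↦ ?_
  rw [card_residuesUpTo hℓ hℓM (by positivity), div_right_comm]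

/-- The error in the asymptotic formula for the harmonic sum over a residue class. The terms are
normalized as `M / n`, which is `1 / (j + ℓ / M)` for `n = ℓ + M * j`. -/
def harmonicRemainder (M ℓ : ℕ) (y : ℝ) : ℝ :=
  ∑ n ∈ residuesUpTo M ℓ y, (M : ℝ) / n
    - (log (y / M) - digamma ((ℓ : ℝ) / M) - sawtooth (y / M - (ℓ : ℝ) / M) / (y / M))

theorem sum_residuesUpTo_div (hℓ : 1 ≤ ℓ) (hℓM : ℓ ≤ M) (y : ℝ) :
    ∑ n ∈ residuesUpTo M ℓ y, (M : ℝ) / n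
      = digamma (⌊y / M - (ℓ : ℝ) / M + 1⌋₊ + (ℓ : ℝ) / M) - digamma ((ℓ : ℝ) / M) := by
  have hM : (0 : ℝ) < M := by exact_mod_cast hℓ.trans hℓM
  rw [sum_residuesUpTo hℓ hℓM, ← sum_range_one_div_add (by positivity)]
  refine sum_congr rfl fun j _ ↦ ?_
  push_cast
  field_simp
  ring

theorem abs_harmonicRemainder_le (hℓ : 1 ≤ ℓ) (hℓM : ℓ ≤ M) {y : ℝ} (hy : 0 < y) :
    |harmonicRemainder M ℓ y| ≤ 1 / (y / M) ^ 2 := by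
  have hM : (0 : ℝ) < M := by exact_mod_cast hℓ.trans hℓM
  set t := y / M - (ℓ : ℝ) / M with ht
  have hfloor : (⌊t + 1⌋₊ : ℝ) + (ℓ : ℝ) / M = y / M + (1 - Int.fract t) := by
    rw [natFloor_add_one_eq_sub_sawtooth (neg_one_le_div_sub_div hℓM hy.le), sawtooth]
    linarith
  have hbound := abs_digamma_add_sub_le (T := y / M) (by positivity)
    (sub_nonneg.2 (Int.fract_lt_one t).le) (sub_le_self 1 (Int.fract_nonneg t))
  convert hbound using 2
  rw [harmonicRemainder, sum_residuesUpTo_div hℓ hℓM, ← ht, hfloor, sawtooth]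
  ring

end ResidueClass

section MainIdentity

variable {M₁ M₂ ℓ₁ ℓ₂ : ℕ}

theorem Δerr_add_sum_sawtooth_eq (hℓ₁ : 1 ≤ ℓ₁) (hℓ₁' : ℓ₁ ≤ M₁) (hℓ₂ : 1 ≤ ℓ₂)
    (hℓ₂' : ℓ₂ ≤ M₂) {x X : ℝ} (hx : 0 < x) (hX : X = (M₁ * M₂ : ℕ) * x) :
    Δerr M₁ M₂ ℓ₁ ℓ₂ x
        + ∑ n ∈ residuesUpTo M₁ ℓ₁ √X, sawtooth (M₁ * x / n - (ℓ₂ : ℝ) / M₂)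
        + ∑ n ∈ residuesUpTo M₂ ℓ₂ √X, sawtooth (M₂ * x / n - (ℓ₁ : ℝ) / M₁)
      = x * harmonicRemainder M₁ ℓ₁ √X + x * harmonicRemainder M₂ ℓ₂ √X
        - sawtooth (√X / M₁ - (ℓ₁ : ℝ) / M₁) * sawtooth (√X / M₂ - (ℓ₂ : ℝ) / M₂) := by
  have hM₁ : (0 : ℝ) < M₁ := by exact_mod_cast hℓ₁.trans hℓ₁'
  have hM₂ : (0 : ℝ) < M₂ := by exact_mod_cast hℓ₂.trans hℓ₂'
  have hX' : X = M₁ * M₂ * x := by rw [hX, Nat.cast_mul]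
  have hXpos : 0 < X := by rw [hX']; positivity
  have hX₁ : X / M₁ = M₂ * x := by rw [hX']; field_simp
  have hX₂ : X / M₂ = M₁ * x := by rw [hX']; field_simp
  have hprod : √X / M₁ * (√X / M₂) = x := by
    rw [div_mul_div_comm, mul_self_sqrt hXpos.le, hX']
    field_simp
  have hlog : log x = log (√X / M₁) + log (√X / M₂) := by
    rw [← log_mul (by positivity) (by positivity), hprod]
  have hcount := sum_dCong_add_card_mul_card M₁ M₂ ℓ₁ ℓ₂ hXpos.le
  rw [sum_card_residuesUpTo_div hℓ₂ hℓ₂' hXpos.le, sum_card_residuesUpTo_div hℓ₁ hℓ₁' hXpos.le,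
    card_residuesUpTo hℓ₁ hℓ₁' (sqrt_nonneg X), card_residuesUpTo hℓ₂ hℓ₂' (sqrt_nonneg X),
    hX₁, hX₂] at hcount
  have hsum (M : ℝ) (s : Finset ℕ) : ∑ n ∈ s, M * x / n = x * ∑ n ∈ s, M / n := by
    rw [mul_sum]
    exact sum_congr rfl fun n _ ↦ by ring
  have hdiv₁ : x / (√X / M₁) = √X / M₂ := by rw [← hprod]; field_simp
  have hdiv₂ : x / (√X / M₂) = √X / M₁ := by rw [← hprod]; field_simp
  rw [hsum, hsum] at hcount
  rw [Δerr, ← hX, harmonicRemainder, harmonicRemainder, hlog]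
  linear_combination hcount - hprod - sawtooth (√X / M₁ - (ℓ₁ : ℝ) / M₁) * hdiv₁
    - sawtooth (√X / M₂ - (ℓ₂ : ℝ) / M₂) * hdiv₂

theorem abs_mul_harmonicRemainder_le {M ℓ : ℕ} (hℓ : 1 ≤ ℓ) (hℓM : ℓ ≤ M) {x K : ℝ} (hx : 0 < x)
    (hK : 0 < K) : |x * harmonicRemainder M ℓ √(M * K * x)| ≤ M / K := by
  have hM : (0 : ℝ) < M := by exact_mod_cast hℓ.trans hℓM
  rw [abs_mul, abs_of_pos hx]
  calc x * |harmonicRemainder M ℓ √(M * K * x)|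
      ≤ x * (1 / (√(M * K * x) / M) ^ 2) := by
        gcongr
        exact abs_harmonicRemainder_le hℓ hℓM (by positivity)
    _ = M / K := by
        rw [div_pow, sq_sqrt (by positivity)]
        field_simp

theorem Delta_eq_psi_sums_up_to_bounded_general (hℓ₁ : 1 ≤ ℓ₁) (hℓ₁' : ℓ₁ ≤ M₁) (hℓ₂ : 1 ≤ ℓ₂)
    (hℓ₂' : ℓ₂ ≤ M₂) {x : ℝ} (hx : 0 < x) :
    |Δerr M₁ M₂ ℓ₁ ℓ₂ x
        + ∑ n ∈ residuesUpTo M₁ ℓ₁ √((M₁ * M₂ : ℕ) * x), sawtooth (M₁ * x / n - (ℓ₂ : ℝ) / M₂)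
        + ∑ n ∈ residuesUpTo M₂ ℓ₂ √((M₁ * M₂ : ℕ) * x), sawtooth (M₂ * x / n - (ℓ₁ : ℝ) / M₁)|
      ≤ M₁ / M₂ + M₂ / M₁ + 1 / 4 := by
  have hM₁ : (0 : ℝ) < M₁ := by exact_mod_cast hℓ₁.trans hℓ₁'
  have hM₂ : (0 : ℝ) < M₂ := by exact_mod_cast hℓ₂.trans hℓ₂'
  rw [Δerr_add_sum_sawtooth_eq hℓ₁ hℓ₁' hℓ₂ hℓ₂' hx rfl, Nat.cast_mul]
  have hR₁ := abs_mul_harmonicRemainder_le hℓ₁ hℓ₁' hx hM₂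
  have hR₂ := abs_mul_harmonicRemainder_le hℓ₂ hℓ₂' hx hM₁
  rw [mul_comm (M₂ : ℝ)] at hR₂
  have hprod (s t : ℝ) : |sawtooth s * sawtooth t| ≤ 1 / 4 := by
    rw [abs_mul]
    linarith [mul_le_mul (abs_sawtooth_le s) (abs_sawtooth_le t) (abs_nonneg _) (by norm_num)]
  exact (abs_sub _ _).trans (add_le_add ((abs_add_le _ _).trans (add_le_add hR₁ hR₂)) (hprod _ _))

end MainIdentity

theorem Delta_eq_psi_sums_up_to_bounded
    (M₁ M₂ ℓ₁ ℓ₂ : ℕ) (hM₁ : 0 < M₁) (hM₂ : 0 < M₂)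
    (hℓ₁ : 1 ≤ ℓ₁) (hℓ₁' : ℓ₁ ≤ M₁) (hℓ₂ : 1 ≤ ℓ₂) (hℓ₂' : ℓ₂ ≤ M₂) :
    ∃ C : ℝ, ∀ x : ℝ, 1 ≤ x →
      |Δerr M₁ M₂ ℓ₁ ℓ₂ x
          + (∑ n ∈ (Finset.Icc 1 ⌊Real.sqrt ((M₁ * M₂ : ℕ) * x)⌋₊).filter
                (fun n => n % M₁ = ℓ₁ % M₁),
              (Int.fract ((M₁ : ℝ) * x / n - (ℓ₂ : ℝ) / M₂) - 1/2))
          + (∑ n ∈ (Finset.Icc 1 ⌊Real.sqrt ((M₁ * M₂ : ℕ) * x)⌋₊).filter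
                (fun n => n % M₂ = ℓ₂ % M₂),
              (Int.fract ((M₂ : ℝ) * x / n - (ℓ₁ : ℝ) / M₁) - 1/2))|
        ≤ C := by
  exact ⟨_, fun x hx ↦ Delta_eq_psi_sums_up_to_bounded_general hℓ₁ hℓ₁' hℓ₂ hℓ₂'
    (zero_lt_one.trans_le hx)⟩
end
end
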